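/- arXiv:math/0010292 — 6 statements merged into one kernel-verified Lean document; each statement's English description precedes it below -/
import Mathlib

section
/- Let X and Y be realcompact completely regular Hausdorff topological spaces, let E and F be nonzero normed spaces over 𝕂, and let T : C(X,E) → C(Y,F) be a biseparating map. Then there exists a homeomorphism h : Y → X such that for every f ∈ C(X,E) and every y ∈ Y, if f vanishes identically on some neighborhood of h(y), then Tf vanishes identically on some neighborhood of y. -/
open Filter Topology

/-- A topological space is realcompact if it admits a closed topological embedding
into a product `ℝ^ι` of copies of `ℝ`. -/
def Realcompact (X : Type) [TopologicalSpace X] : Prop :=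
  ∃ (ι : Type) (e : X → ι → ℝ), IsClosedEmbedding e

/-- A map between spaces of continuous vector-valued functions is separating if it maps
pairs of functions with disjoint cozero sets to pairs of functions with disjoint cozero sets. -/
def SeparatingC {X Y E F : Type} [TopologicalSpace X] [TopologicalSpace Y]
    [NormedAddCommGroup E] [NormedAddCommGroup F] (T : C(X, E) → C(Y, F)) : Prop :=
  ∀ f g : C(X, E), (∀ x, ‖f x‖ * ‖g x‖ = 0) → ∀ y, ‖T f y‖ * ‖T g y‖ = 0

namespace Bisep

/-- Scalar-times-vector function. -/
noncomputable def smulC {X E : Type} [TopologicalSpace X] [NormedAddCommGroup E] [NormedSpace ℝ E]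
    (φ : C(X, ℝ)) (f : C(X, E)) : C(X, E) := ⟨fun x => φ x • f x, by fun_prop⟩

/-- restriction to X of a function on the Stone-Cech compactification -/
noncomputable def resC {X : Type} [TopologicalSpace X] (φ : C(StoneCech X, ℝ)) : C(X, ℝ) :=
  φ.comp ⟨stoneCechUnit, continuous_stoneCechUnit⟩

section
variable {X Y E F : Type} [TopologicalSpace X] [TopologicalSpace Y]
    [NormedAddCommGroup E] [NormedSpace ℝ E]
    [NormedAddCommGroup F] [NormedSpace ℝ F]

theorem exists_support [Nontrivial F]
    (T : C(X, E) →+ C(Y, F)) (hs : Function.Surjective T) (y : Y) :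
    ∃ x : StoneCech X, ∀ U ∈ 𝓝 x, ∃ f : C(X, E),
      (∀ a, f a ≠ 0 → stoneCechUnit a ∈ U) ∧ T f y ≠ 0 := by
  by_contra! hcon
  choose U hU hUT using hcon
  obtain ⟨t, ht⟩ := CompactSpace.elim_nhds_subcover (fun x => interior (U x))
    (fun x => interior_mem_nhds.2 (hU x))
  obtain ⟨ρ, hρ⟩ := PartitionOfUnity.exists_isSubordinate (s := Set.univ) isClosed_univ
    (fun i : t => interior (U i)) (fun i => isOpen_interior) (by
      intro x _
      have hx : x ∈ ⋃ x ∈ t, interior (U x) := by rw [ht]; trivial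
      simp only [Set.mem_iUnion] at hx ⊢
      obtain ⟨i, hi, hx⟩ := hx
      exact ⟨⟨i, hi⟩, hx⟩)
  obtain ⟨c, hc⟩ := exists_ne (0 : F)
  obtain ⟨f, hf⟩ := hs (ContinuousMap.const Y c)
  have hsum : f = ∑ i : t, smulC (resC (ρ i)) f := by
    ext x
    rw [ContinuousMap.sum_apply]
    have h1 := ρ.sum_eq_one (Set.mem_univ (stoneCechUnit x))
    rw [finsum_eq_sum_of_fintype] at h1
    change f x = ∑ i, (ρ i (stoneCechUnit x)) • f x
    rw [← Finset.sum_smul, h1, one_smul]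
  have h0 : T f y = 0 := by
    rw [hsum, map_sum, ContinuousMap.sum_apply]
    refine Finset.sum_eq_zero fun i _ => hUT i _ ?_
    intro a ha
    have : ρ i (stoneCechUnit a) ≠ 0 := by
      intro h
      apply ha
      change (ρ i (stoneCechUnit a)) • f a = 0
      rw [h, zero_smul]
    exact interior_subset (hρ i (subset_tsupport _ this))
  rw [hf] at h0
  exact hc h0

/-- The localisation property of the support map. -/
def Loc (T : C(X, E) →+ C(Y, F)) (H : StoneCech Y → StoneCech X) : Prop :=
  ∀ z f, (∀ᶠ x in comap stoneCechUnit (𝓝 (H z)), f x = 0) →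
    ∀ᶠ y in comap stoneCechUnit (𝓝 z), T f y = 0

theorem exists_loc [Nontrivial F]
    (T : C(X, E) →+ C(Y, F)) (hs : Function.Surjective T) (hT : SeparatingC ⇑T) :
    ∃ H : StoneCech Y → StoneCech X, Continuous H ∧ Loc T H := by
  choose h hh using exists_support T hs
  have hB : ∀ y f, ∀ U ∈ 𝓝 (h y), (∀ x, stoneCechUnit x ∈ U → f x = 0) → T f y = 0 := by
    intro y f U hU hf
    obtain ⟨g, hg, hgy⟩ := hh y U hU
    have := hT f g (by
      intro x
      by_cases hx : g x = 0
      · simp [hx]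
      · simp [hf x (hg x hx)]) y
    simpa [hgy] using this
  have hc : Continuous h := by
    rw [continuous_iff_continuousAt]
    intro y U hU
    obtain ⟨W, hW, hWc, hWU⟩ := exists_mem_nhds_isClosed_subset hU
    obtain ⟨f, hf, hfy⟩ := hh y W hW
    have : ∀ᶠ y' in 𝓝 y, T f y' ≠ 0 := (T f).continuous.continuousAt.eventually_ne hfy
    rw [mem_map]
    filter_upwards [this] with y' hy'
    by_contra hn
    refine hy' (hB y' f Wᶜ (hWc.isOpen_compl.mem_nhds fun hm => hn (hWU hm)) ?_)
    intro x hx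
    by_contra hfx
    exact hx (hf x hfx)
  refine ⟨stoneCechExtend hc, continuous_stoneCechExtend hc, ?_⟩
  intro z f hf
  obtain ⟨U, hU, hUf⟩ := mem_comap.1 hf
  obtain ⟨V, hVU, hVo, hzV⟩ := mem_nhds_iff.1 hU
  refine mem_comap.2 ⟨stoneCechExtend hc ⁻¹' V,
    (continuous_stoneCechExtend hc).continuousAt (hVo.mem_nhds hzV), ?_⟩
  intro y hy
  rw [Set.mem_preimage, Set.mem_preimage, stoneCechExtend_stoneCechUnit] at hy
  exact hB y f V (hVo.mem_nhds hy) fun x hx => hUf (hVU hx)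

theorem comap_unit [CompletelyRegularSpace X] (x : X) :
    comap stoneCechUnit (𝓝 (stoneCechUnit x)) = 𝓝 x :=
  (isInducing_stoneCechUnit.nhds_eq_comap x).symm

instance comap_neBot (z : StoneCech X) : (comap (stoneCechUnit : X → _) (𝓝 z)).NeBot :=
  comap_neBot_iff_frequently.2 (by
    have := mem_closure_iff_frequently.1 (denseRange_stoneCechUnit z)
    simpa using this)

theorem loc_inv [CompletelyRegularSpace Y] [Nontrivial F]
    (T : C(X, E) ≃+ C(Y, F)) (H : StoneCech Y → StoneCech X) (K : StoneCech X → StoneCech Y)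
    (hH : Continuous H) (hK : Continuous K) (hTH : Loc T.toAddMonoidHom H)
    (hTK : Loc T.symm.toAddMonoidHom K) : ∀ z, K (H z) = z := by
  suffices K ∘ H = id from fun z => congrFun this z
  apply stoneCech_hom_ext (hK.comp hH) continuous_id
  ext y
  simp only [Function.comp, id]
  by_contra hne
  obtain ⟨W, V, hWo, hVo, hW, hV, hWV⟩ := t2_separation hne
  obtain ⟨ψ, hψ0, hψ1, -⟩ := exists_continuous_zero_one_of_isClosed hVo.isClosed_compl
    (isClosed_singleton (x := stoneCechUnit y)) (by simpa using hV)
  obtain ⟨c, hc⟩ := exists_ne (0 : F)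
  let b : C(Y, F) := smulC (resC ψ) (ContinuousMap.const Y c)
  have hb : ∀ y', b y' = ψ (stoneCechUnit y') • c := fun _ => rfl
  have hby : b y = c := by rw [hb, hψ1 rfl]; simp
  have h1 : ∀ᶠ x in comap stoneCechUnit (𝓝 (H (stoneCechUnit y))), T.symm b x = 0 := by
    refine mem_comap.2 ⟨K ⁻¹' W, hK.continuousAt (hWo.mem_nhds hW), ?_⟩
    intro x hx
    have := hTK (stoneCechUnit x) b (mem_comap.2 ⟨W, hWo.mem_nhds hx, fun y' hy' => by
      change b y' = 0
      rw [hb, hψ0 (fun hv => Set.disjoint_left.1 hWV hy' hv)]; simp⟩)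
    obtain ⟨S, hS, hSx⟩ := mem_comap.1 this
    exact hSx (mem_of_mem_nhds hS : stoneCechUnit x ∈ S)
  have h2 := hTH _ _ h1
  rw [comap_unit] at h2
  have h3 := h2.self_of_nhds
  change T (T.symm b) y = 0 at h3
  rw [T.apply_symm_apply, hby] at h3
  exact hc h3

theorem exists_unbounded [CompletelyRegularSpace X] (hX : Realcompact X)
    (z : StoneCech X) (hz : ∀ x : X, stoneCechUnit x ≠ z) :
    ∃ u : C(X, ℝ), Tendsto u (comap stoneCechUnit (𝓝 z)) atTop := by
  obtain ⟨ι, e, he⟩ := hX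
  have hec : ∀ i, Continuous fun x => ((e x i : ℝ) : OnePoint ℝ) := fun i =>
    OnePoint.continuous_coe.comp ((continuous_apply i).comp he.continuous)
  have htend : ∀ i, Tendsto (fun x => ((e x i : ℝ) : OnePoint ℝ)) (comap stoneCechUnit (𝓝 z))
      (𝓝 (stoneCechExtend (hec i) z)) := by
    intro i
    have := ((continuous_stoneCechExtend (hec i)).tendsto z).comp
      (tendsto_comap (f := (stoneCechUnit : X → _)))
    rwa [stoneCechExtend_extends] at this
  by_cases hi : ∃ i, stoneCechExtend (hec i) z = OnePoint.infty
  · obtain ⟨i, hi⟩ := hi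
    have h := htend i
    rw [hi] at h
    have h2 : Tendsto (fun x => e x i) (comap stoneCechUnit (𝓝 z)) (coclosedCompact ℝ) := by
      rw [← OnePoint.comap_coe_nhds_infty, tendsto_comap_iff]
      exact h
    rw [coclosedCompact_eq_cocompact] at h2
    refine ⟨⟨fun x => ‖e x i‖, ((continuous_apply i).comp he.continuous).norm⟩, ?_⟩
    exact (tendsto_norm_cocompact_atTop (E := ℝ)).comp h2
  · exfalso
    push Not at hi
    have : ∀ i, ∃ r : ℝ, (r : OnePoint ℝ) = stoneCechExtend (hec i) z := fun i =>
      OnePoint.ne_infty_iff_exists.1 (hi i)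
    choose r hr using this
    have h1 : Tendsto e (comap stoneCechUnit (𝓝 z)) (𝓝 r) := by
      rw [tendsto_pi_nhds]
      intro i
      have h := htend i
      rw [← hr i] at h
      exact (OnePoint.isOpenEmbedding_coe.tendsto_nhds_iff).2 h
    obtain ⟨x, hx⟩ : r ∈ Set.range e := he.isClosed_range.mem_of_tendsto h1
      (Eventually.of_forall fun x => ⟨x, rfl⟩)
    rw [← hx] at h1
    have h2 : comap stoneCechUnit (𝓝 z) ≤ 𝓝 x := by
      rw [he.isInducing.nhds_eq_comap]
      exact tendsto_iff_comap.1 h1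
    have h3 : Tendsto (stoneCechUnit : X → _) (comap stoneCechUnit (𝓝 z))
      (𝓝 (stoneCechUnit x)) := (continuous_stoneCechUnit.tendsto x).mono_left h2
    exact hz x (tendsto_nhds_unique h3 tendsto_comap)

theorem exists_steps : ∃ p : C(ℝ, ℝ), ∀ (t : ℝ) (n : ℤ), |t - n| ≤ 3/8 → p t = n := by
  let C : Set ℝ := {t | ∃ n : ℤ, |t - n| ≤ 3/8}
  have hr : ∀ (t : ℝ) (n : ℤ), |t - n| < 1/2 → round t = n := by
    intro t n h
    rw [abs_lt] at h
    rw [round_eq, Int.floor_eq_iff]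
    constructor <;> linarith
  have hC : IsClosed C := by
    rw [← isOpen_compl_iff, isOpen_iff_mem_nhds]
    intro t ht
    have h2 : ∀ s : ℝ, s ∈ Cᶜ ↔ s - ⌊t⌋ - 3/8 > 0 ∧ s - ⌊t⌋ - 5/8 < 0 ∨ s ∈ Cᶜ := by
      intro s
      constructor
      · exact Or.inr
      · rintro (⟨h1, h2⟩ | h)
        · rintro ⟨n, hn⟩
          rw [abs_le] at hn
          have a1 : (n : ℝ) < (⌊t⌋ : ℝ) + 1 := by linarith
          have a2 : (⌊t⌋ : ℝ) < n := by linarith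
          have b1 : n < ⌊t⌋ + 1 := by exact_mod_cast a1
          have b2 : ⌊t⌋ < n := by exact_mod_cast a2
          omega
        · exact h
    have l1 : (⌊t⌋ : ℝ) + 3/8 < t := by
      by_contra! hle
      exact ht ⟨⌊t⌋, by rw [abs_le]; constructor <;> linarith [Int.floor_le t]⟩
    have l2 : t < (⌊t⌋ : ℝ) + 5/8 := by
      by_contra! hle
      exact ht ⟨⌊t⌋ + 1, by
        rw [abs_le]; push_cast; constructor <;> linarith [Int.lt_floor_add_one t]⟩
    filter_upwards [Ioo_mem_nhds l1 l2] with s hs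
    exact (h2 s).2 (Or.inl ⟨by linarith [hs.1], by linarith [hs.2]⟩)
  have hcont : Continuous fun t : C => ((round (t : ℝ) : ℤ) : ℝ) := by
    rw [continuous_iff_continuousAt]
    rintro ⟨t, n, hn⟩
    have hev : ∀ᶠ s : C in 𝓝 (⟨t, n, hn⟩ : C), |(s : ℝ) - n| < 1/2 := by
      have : Continuous fun s : C => |(s : ℝ) - n| := by fun_prop
      exact this.continuousAt.eventually_lt continuousAt_const (by
        change |t - n| < 1/2
        linarith)
    apply ContinuousAt.congr (f := fun _ => (n : ℝ)) continuousAt_const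
    filter_upwards [hev] with s hs
    rw [hr s n hs]
  obtain ⟨p, hp⟩ := ContinuousMap.exists_extension' hC.isClosedEmbedding_subtypeVal ⟨_, hcont⟩
  refine ⟨p, fun t n h => ?_⟩
  have := congrFun hp ⟨t, n, h⟩
  simp only [Function.comp, ContinuousMap.coe_mk] at this
  rw [this, hr t n (by linarith)]

theorem mem_of_realcompact [CompletelyRegularSpace X] [CompletelyRegularSpace Y] [Nontrivial F]
    (hX : Realcompact X)
    (T : C(X, E) ≃+ C(Y, F)) (H : StoneCech Y → StoneCech X) (K : StoneCech X → StoneCech Y)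
    (hK : Continuous K) (hTH : Loc T.toAddMonoidHom H)
    (hKH : ∀ z, K (H z) = z) (hHK : ∀ z, H (K z) = z) (y : Y) :
    ∃ x : X, stoneCechUnit x = H (stoneCechUnit y) := by
  by_contra! hcon
  obtain ⟨u, hu⟩ := exists_unbounded hX _ hcon
  obtain ⟨p, hp⟩ := exists_steps
  -- reduce to a function frequently near an integer
  obtain ⟨v, hv, hfr⟩ : ∃ v : C(X, ℝ),
      Tendsto v (comap stoneCechUnit (𝓝 (H (stoneCechUnit y)))) atTop ∧
      ∃ᶠ x in comap stoneCechUnit (𝓝 (H (stoneCechUnit y))), ∃ n : ℤ, |v x - n| < 3/8 := by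
    by_cases h : ∃ᶠ x in comap stoneCechUnit (𝓝 (H (stoneCechUnit y))), ∃ n : ℤ, |u x - n| < 3/8
    · exact ⟨u, hu, h⟩
    · refine ⟨u + ContinuousMap.const X (1/2), tendsto_atTop_add_const_right _ _ hu, ?_⟩
      rw [not_frequently] at h
      refine Eventually.frequently ?_
      filter_upwards [h] with x hx
      push Not at hx
      have h1 := hx ⌊u x⌋
      have h2 := hx (⌊u x⌋ + 1)
      refine ⟨⌊u x⌋ + 1, ?_⟩
      have h3 := Int.floor_le (u x)
      have h4 := Int.lt_floor_add_one (u x)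
      rw [abs_of_nonneg (by linarith)] at h1
      rw [abs_of_nonpos (by push_cast; linarith)] at h2
      push_cast at h2
      simp only [ContinuousMap.add_apply, ContinuousMap.const_apply]
      push_cast
      rw [abs_lt]
      constructor <;> linarith
  obtain ⟨c, hc⟩ := exists_ne (0 : F)
  obtain ⟨f, hf⟩ := T.surjective (ContinuousMap.const Y c)
  let g : C(X, E) := smulC (p.comp v) f
  have hg : ∀ x, g x = p (v x) • f x := fun _ => rfl
  have hev : ∀ᶠ y' in 𝓝 y, ‖T g y'‖ < ‖T g y‖ + 1 :=
    ((T g).continuous.norm.continuousAt).eventually_lt continuousAt_const (by simp)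
  rw [← comap_unit] at hev
  obtain ⟨V', hV', hVg⟩ := mem_comap.1 hev
  obtain ⟨V, hVV, hVo, hyV⟩ := mem_nhds_iff.1 hV'
  have hKV : ∀ᶠ x in comap stoneCechUnit (𝓝 (H (stoneCechUnit y))), K (stoneCechUnit x) ∈ V := by
    have : ∀ᶠ w in 𝓝 (H (stoneCechUnit y)), K w ∈ V :=
      hK.continuousAt (hVo.mem_nhds (by rw [hKH]; exact hyV))
    exact this.comap _
  obtain ⟨x, ⟨n, hn⟩, hxV, hxv⟩ :=
    (hfr.and_eventually (hKV.and (hv.eventually_ge_atTop ((‖T g y‖ + 1) / ‖c‖ + 1)))).exists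
  have h0 : ∀ᶠ x' in 𝓝 x, (g - n • f) x' = 0 := by
    have : ∀ᶠ x' in 𝓝 x, |v x' - n| < 3/8 := by
      have hcv : Continuous fun x' => |v x' - n| := by fun_prop
      exact hcv.continuousAt.eventually_lt continuousAt_const hn
    filter_upwards [this] with x' hx'
    rw [ContinuousMap.sub_apply, hg, hp _ n hx'.le, ContinuousMap.smul_apply]
    rw [Int.cast_smul_eq_zsmul, sub_self]
  rw [← comap_unit, ← hHK (stoneCechUnit x)] at h0
  have h1 := hTH _ _ h0
  have h2 : ∀ᶠ y' in comap (stoneCechUnit : Y → _) (𝓝 (K (stoneCechUnit x))),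
      stoneCechUnit y' ∈ V := (hVo.eventually_mem hxV).comap _
  obtain ⟨y', hy1, hy2⟩ := (h1.and h2).exists
  change T (g - n • f) y' = 0 at hy1
  rw [map_sub, map_zsmul, hf, ContinuousMap.sub_apply, ContinuousMap.smul_apply,
    ContinuousMap.const_apply, sub_eq_zero] at hy1
  have hb : ‖T g y'‖ < ‖T g y‖ + 1 := hVg (hVV hy2)
  rw [hy1, ← Int.cast_smul_eq_zsmul ℝ, norm_smul, Real.norm_eq_abs] at hb
  have hcpos : 0 < ‖c‖ := norm_pos_iff.2 hc
  rw [abs_lt] at hn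
  have : (‖T g y‖ + 1) / ‖c‖ < |(n : ℝ)| := by linarith [le_abs_self (n : ℝ)]
  rw [div_lt_iff₀ hcpos] at this
  linarith

theorem main [CompletelyRegularSpace X] [T2Space X] [CompletelyRegularSpace Y] [T2Space Y]
    [Nontrivial E] [Nontrivial F] (hX : Realcompact X) (hY : Realcompact Y)
    (T : C(X, E) ≃+ C(Y, F)) (hT : SeparatingC ⇑T) (hT' : SeparatingC ⇑T.symm) :
    ∃ h : Y ≃ₜ X, ∀ (f : C(X, E)) (y : Y),
      (∀ᶠ x in 𝓝 (h y), f x = 0) → ∀ᶠ y' in 𝓝 y, T f y' = 0 := by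
  have : T35Space X := {}
  have : T35Space Y := {}
  obtain ⟨H, hH, hTH⟩ := exists_loc T.toAddMonoidHom T.surjective hT
  obtain ⟨K, hK, hTK⟩ := exists_loc T.symm.toAddMonoidHom T.symm.surjective hT'
  have hKH := loc_inv T H K hH hK hTH hTK
  have hHK := loc_inv T.symm K H hK hH hTK hTH
  choose h hh using mem_of_realcompact hX T H K hK hTH hKH hHK
  choose k hk using mem_of_realcompact hY T.symm K H hH hTK hHK hKH
  have hinjX := injective_stoneCechUnit_of_t35Space (X := X)
  have hinjY := injective_stoneCechUnit_of_t35Space (X := Y)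
  refine ⟨⟨⟨h, k, fun y => hinjY ?_, fun x => hinjX ?_⟩, ?_, ?_⟩, ?_⟩
  · rw [hk, hh, hKH]
  · rw [hh, hk, hHK]
  · change Continuous h
    rw [isInducing_stoneCechUnit.continuous_iff]
    exact (hH.comp continuous_stoneCechUnit).congr fun y => (hh y).symm
  · change Continuous k
    rw [isInducing_stoneCechUnit.continuous_iff]
    exact (hK.comp continuous_stoneCechUnit).congr fun y => (hk y).symm
  · intro f y hf
    change ∀ᶠ x in 𝓝 (h y), f x = 0 at hf
    rw [← comap_unit, hh] at hf
    have := hTH _ _ hf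
    rwa [comap_unit] at this

end

end Bisep

theorem stmt0 {𝕂 X Y E F : Type} [RCLike 𝕂]
    [TopologicalSpace X] [CompletelyRegularSpace X] [T2Space X]
    [TopologicalSpace Y] [CompletelyRegularSpace Y] [T2Space Y]
    [NormedAddCommGroup E] [NormedSpace 𝕂 E] [Nontrivial E]
    [NormedAddCommGroup F] [NormedSpace 𝕂 F] [Nontrivial F]
    (hX : Realcompact X) (hY : Realcompact Y)
    (T : C(X, E) ≃+ C(Y, F)) (hT : SeparatingC ⇑T) (hT' : SeparatingC ⇑T.symm) :
    ∃ h : Y ≃ₜ X, ∀ (f : C(X, E)) (y : Y),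
      (∀ᶠ x in 𝓝 (h y), f x = 0) → ∀ᶠ y' in 𝓝 y, T f y' = 0 := by
  let _ : NormedSpace ℝ E := NormedSpace.restrictScalars ℝ 𝕂 E
  let _ : NormedSpace ℝ F := NormedSpace.restrictScalars ℝ 𝕂 F
  exact Bisep.main hX hY T hT hT'
end

section
/- Let X and Y be realcompact completely regular Hausdorff topological spaces, let E and F be normed spaces over 𝕂, let T : C(X,E) → C(Y,F) be a biseparating map, and let h : Y → X be a homeomorphism with the property that for every f ∈ C(X,E) and every y ∈ Y, if f vanishes identically on some neighborhood of h(y) then Tf vanishes identically on some neighborhood of y. Then for every f ∈ C(X,E) and every y ∈ Y, f(h(y)) = 0 implies (Tf)(y) = 0. -/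
open Filter Topology

/-- The defect between a real number and the staircase function. -/
noncomputable def stairDefect (x : ℝ) : ℝ := x - max 0 (4 * x - 3)

/-- A continuous staircase with integer plateaus. -/
noncomputable def stair (s : ℝ) : ℝ := s - stairDefect (Int.fract s)

lemma stair_continuous : Continuous stair := by
  have h1 : Continuous (stairDefect ∘ Int.fract) := by
    apply ContinuousOn.comp_fract''
    · unfold stairDefect; fun_prop
    · unfold stairDefect; norm_num
  exact continuous_id.sub h1

lemma stair_abs_le (s : ℝ) (hs : 0 ≤ s) : |stair s| ≤ s + 1 := by
  have h0 := Int.fract_nonneg s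
  have h1 := (Int.fract_lt_one s).le
  unfold stair stairDefect
  rw [abs_le]
  rcases max_cases 0 (4 * Int.fract s - 3) with ⟨h, _⟩ | ⟨h, _⟩ <;> rw [h] <;>
    constructor <;> linarith

lemma stair_plateau (s : ℝ) (n : ℤ) (h1 : (n : ℝ) < s) (h2 : s < n + 3 / 4) :
    stair s = n := by
  have hf : ⌊s⌋ = n := by
    rw [Int.floor_eq_iff]; constructor <;> linarith
  have hfr : Int.fract s = s - n := by rw [← hf]; rfl
  unfold stair stairDefect
  rw [hfr, max_eq_left (by linarith)]
  ring

lemma exists_shift (s : ℝ) : ∃ a : ℝ, (a = 0 ∨ a = 1 / 2) ∧ ∃ n : ℤ,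
    (n : ℝ) < s + a ∧ s + a < n + 3 / 4 ∧ s - 1 ≤ n := by
  have h0 := Int.floor_le s
  have h1 := Int.lt_floor_add_one s
  rcases h0.eq_or_lt with h | h
  · exact ⟨1 / 2, Or.inr rfl, ⌊s⌋, by linarith, by linarith, by linarith⟩
  · by_cases h2 : s < ⌊s⌋ + 3 / 4
    · exact ⟨0, Or.inl rfl, ⌊s⌋, by linarith, by linarith, by linarith⟩
    · push Not at h2
      refine ⟨1 / 2, Or.inr rfl, ⌊s⌋ + 1, ?_, ?_, ?_⟩ <;> push_cast <;> linarith

lemma stair_mul_continuous {𝕂 X E : Type} [RCLike 𝕂] [TopologicalSpace X]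
    [NormedAddCommGroup E] [NormedSpace 𝕂 E] (f : C(X, E)) (a : ℝ) (ha : 0 ≤ a) :
    Continuous fun x => ((stair ((√‖f x‖)⁻¹ + a) : ℝ) : 𝕂) • f x := by
  rw [continuous_iff_continuousAt]
  intro x
  by_cases hx : f x = 0
  · have hb : ∀ z, ‖((stair ((√‖f z‖)⁻¹ + a) : ℝ) : 𝕂) • f z‖ ≤
        √‖f z‖ + (a + 1) * ‖f z‖ := by
      intro z
      rw [norm_smul, RCLike.norm_ofReal]
      have h1 := stair_abs_le ((√‖f z‖)⁻¹ + a) (by positivity)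
      calc _ ≤ ((√‖f z‖)⁻¹ + a + 1) * ‖f z‖ := by gcongr
        _ = ‖f z‖ / √‖f z‖ + (a + 1) * ‖f z‖ := by ring
        _ = _ := by rw [Real.div_sqrt]
    have hc : Continuous fun z => √‖f z‖ + (a + 1) * ‖f z‖ := by fun_prop
    have ht := hc.tendsto x
    simp only [hx, norm_zero, Real.sqrt_zero, mul_zero, add_zero] at ht
    unfold ContinuousAt
    beta_reduce
    rw [show ((stair ((√‖f x‖)⁻¹ + a) : ℝ) : 𝕂) • f x = 0 by rw [hx, smul_zero]]
    exact squeeze_zero_norm hb ht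
  · have h0 : √‖f x‖ ≠ 0 := by
      have := norm_pos_iff.mpr hx
      positivity
    have h1 : ContinuousAt (fun z => (√‖f z‖)⁻¹ + a) x := by
      apply ContinuousAt.add _ continuousAt_const
      exact ContinuousAt.inv₀ (by fun_prop) h0
    have h2 : ContinuousAt (fun z => stair ((√‖f z‖)⁻¹ + a)) x :=
      ContinuousAt.comp (g := stair) stair_continuous.continuousAt h1
    exact (RCLike.continuous_ofReal.continuousAt.comp h2).smul f.continuous.continuousAt

theorem stmt2 {𝕂 X Y E F : Type} [RCLike 𝕂]
    [TopologicalSpace X] [CompletelyRegularSpace X] [T2Space X]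
    [TopologicalSpace Y] [CompletelyRegularSpace Y] [T2Space Y]
    [NormedAddCommGroup E] [NormedSpace 𝕂 E]
    [NormedAddCommGroup F] [NormedSpace 𝕂 F]
    (hX : Realcompact X) (hY : Realcompact Y)
    (T : C(X, E) ≃+ C(Y, F)) (hT : SeparatingC ⇑T) (hT' : SeparatingC ⇑T.symm)
    (h : Y ≃ₜ X)
    (hloc : ∀ (f : C(X, E)) (y : Y),
      (∀ᶠ x in 𝓝 (h y), f x = 0) → ∀ᶠ y' in 𝓝 y, T f y' = 0) :
    ∀ (f : C(X, E)) (y : Y), f (h y) = 0 → T f y = 0 := by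
  intro f y₀ hf
  by_contra hne
  -- the two auxiliary functions
  let g : ℝ → C(X, E) := fun a =>
    ⟨fun x => ((stair ((√‖f x‖)⁻¹ + |a|) : ℝ) : 𝕂) • f x,
      stair_mul_continuous f |a| (abs_nonneg a)⟩
  set c := ‖T f y₀‖ / 2 with hc
  have hpos : 0 < ‖T f y₀‖ := norm_pos_iff.mpr hne
  have hcpos : 0 < c := by positivity
  set K := max (‖T (g 0) y₀‖ + 1) (‖T (g (1 / 2)) y₀‖ + 1) with hK
  have hKpos : 0 < K := lt_of_lt_of_le (by positivity) (le_max_left _ _)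
  set M := K / c + 1 with hM
  have hMpos : 0 < M := by positivity
  have e1 : ∀ᶠ y in 𝓝 y₀, ‖T (g 0) y‖ < K :=
    (T (g 0)).continuous.norm.continuousAt.eventually_lt continuousAt_const
      (lt_of_lt_of_le (lt_add_one _) (le_max_left _ _))
  have e2 : ∀ᶠ y in 𝓝 y₀, ‖T (g (1 / 2)) y‖ < K :=
    (T (g (1 / 2))).continuous.norm.continuousAt.eventually_lt continuousAt_const
      (lt_of_lt_of_le (lt_add_one _) (le_max_right _ _))
  have e3 : ∀ᶠ y in 𝓝 y₀, c < ‖T f y‖ :=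
    continuousAt_const.eventually_lt (T f).continuous.norm.continuousAt (by linarith)
  have hcont : Continuous fun y => √‖f (h y)‖ := by
    have := h.continuous
    fun_prop
  have e4 : ∀ᶠ y in 𝓝 y₀, √‖f (h y)‖ < M⁻¹ := by
    apply hcont.continuousAt.eventually_lt continuousAt_const
    simp only [hf, norm_zero, Real.sqrt_zero]
    positivity
  have e5 : ∃ᶠ y in 𝓝 y₀, f (h y) ≠ 0 := by
    intro hev
    have hev' : ∀ᶠ x in 𝓝 (h y₀), f x = 0 := by
      rw [← h.map_nhds_eq, Filter.eventually_map]
      filter_upwards [hev] with y hy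
      exact not_not.mp hy
    exact hne (hloc f y₀ hev').self_of_nhds
  obtain ⟨y, hfy, h1, h2, h3, h4⟩ := (e5.and_eventually (e1.and (e2.and (e3.and e4)))).exists
  have hs0 : 0 < √‖f (h y)‖ := Real.sqrt_pos.mpr (norm_pos_iff.mpr hfy)
  have hsM : M < (√‖f (h y)‖)⁻¹ := (lt_inv_comm₀ hs0 hMpos).mp h4
  obtain ⟨a, ha, n, hn1, hn2, hn3⟩ := exists_shift (√‖f (h y)‖)⁻¹
  have ha0 : |a| = a := by rcases ha with rfl | rfl <;> norm_num
  have hga : ‖T (g a) y‖ < K := by rcases ha with rfl | rfl <;> assumption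
  have hsc : ContinuousAt (fun x => (√‖f x‖)⁻¹ + a) (h y) := by
    apply ContinuousAt.add _ continuousAt_const
    exact ContinuousAt.inv₀ (by fun_prop) hs0.ne'
  have hev : ∀ᶠ x in 𝓝 (h y), (g a - n • f) x = 0 := by
    filter_upwards [continuousAt_const.eventually_lt hsc hn1,
      hsc.eventually_lt continuousAt_const hn2] with x hx1 hx2
    have : g a x = ((stair ((√‖f x‖)⁻¹ + |a|) : ℝ) : 𝕂) • f x := rfl
    rw [ContinuousMap.sub_apply, this, ha0, stair_plateau _ n hx1 hx2,
      ContinuousMap.smul_apply, RCLike.ofReal_intCast, Int.cast_smul_eq_zsmul, sub_self]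
  have hz := (hloc _ y hev).self_of_nhds
  rw [map_sub, map_zsmul, ContinuousMap.sub_apply, ContinuousMap.smul_apply, sub_eq_zero] at hz
  have hnorm : ‖T (g a) y‖ = |(n : ℝ)| * ‖T f y‖ := by
    rw [hz, ← Int.cast_smul_eq_zsmul 𝕂 n, norm_smul]
    congr 1
    rw [← RCLike.ofReal_intCast, RCLike.norm_ofReal]
  have hn4 : K / c < n := by linarith
  have : K < n * c := (div_lt_iff₀ hcpos).mp hn4
  have hnpos : (0 : ℝ) < n := lt_trans (by positivity) hn4
  rw [hnorm, abs_of_pos hnpos] at hga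
  nlinarith
end

section
/- Let X and Y be realcompact completely regular Hausdorff topological spaces, let E and F be nonzero normed spaces over 𝕂, and let T : C(X,E) → C(Y,F) be a 𝕂-linear biseparating map. Then there exist a homeomorphism h : Y → X and, for each y ∈ Y, a bijective (not necessarily continuous) 𝕂-linear map J_y : E → F such that (Tf)(y) = J_y(f(h(y))) for every f ∈ C(X,E) and every y ∈ Y. -/
open Filter Topology

def smulC {X E : Type} [TopologicalSpace X] [NormedAddCommGroup E] [NormedSpace ℝ E]
    (φ : C(X, ℝ)) (f : C(X, E)) : C(X, E) :=
  ⟨fun x => φ x • f x, by fun_prop⟩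

@[simp] lemma smulC_apply {X E : Type} [TopologicalSpace X] [NormedAddCommGroup E]
    [NormedSpace ℝ E] (φ : C(X, ℝ)) (f : C(X, E)) (x : X) : smulC φ f x = φ x • f x := rfl

def SepMap {X Y E F : Type} [TopologicalSpace X] [TopologicalSpace Y]
    [NormedAddCommGroup E] [NormedAddCommGroup F] (T : C(X, E) → C(Y, F)) : Prop :=
  ∀ f g : C(X, E), (∀ x, f x = 0 ∨ g x = 0) → ∀ y, T f y = 0 ∨ T g y = 0

lemma SeparatingC.sep {X Y E F : Type} [TopologicalSpace X] [TopologicalSpace Y]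
    [NormedAddCommGroup E] [NormedAddCommGroup F] {T : C(X, E) → C(Y, F)}
    (h : SeparatingC T) : SepMap T := by
  intro f g hfg y
  have := h f g (fun x => by simpa using hfg x) y
  simpa using this

/-- floor-modulated sine square is continuous -/
lemma continuous_floor_sin (c : ℤ → ℝ) :
    Continuous fun s : ℝ => c ⌊s⌋ * Real.sin (Real.pi * s) ^ 2 := by
  rw [continuous_iff_continuousAt]
  intro s₀
  set n := ⌊s₀⌋ with hn
  have hc : Continuous fun s : ℝ => if s ≤ (n : ℝ) then c (n - 1) * Real.sin (Real.pi * s) ^ 2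
      else c n * Real.sin (Real.pi * s) ^ 2 := by
    refine Continuous.if_le (by fun_prop) (by fun_prop) continuous_id continuous_const ?_
    intro s hs

    have : Real.sin (Real.pi * s) = 0 := by
      rw [hs, mul_comm]; exact Real.sin_int_mul_pi n
    simp [this]
  refine hc.continuousAt.congr ?_
  have h1 : (n : ℝ) ≤ s₀ := Int.floor_le s₀
  have h2 : s₀ < n + 1 := Int.lt_floor_add_one s₀
  filter_upwards [Ioo_mem_nhds (show (n : ℝ) - 1 < s₀ by linarith) h2] with s hs
  rcases lt_trichotomy s n with h | h | h
  · have : ⌊s⌋ = n - 1 := by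
      rw [Int.floor_eq_iff]; push_cast; constructor <;> linarith [hs.1]
    simp [h.le, this]
  · have : Real.sin (Real.pi * s) = 0 := by
      rw [h, mul_comm]; exact Real.sin_int_mul_pi n
    simp [this]
  · have : ⌊s⌋ = n := by
      rw [Int.floor_eq_iff]; constructor <;> linarith [hs.2]
    simp [h.not_ge, this]

section
variable {X Y E F : Type} [TopologicalSpace X] [TopologicalSpace Y]
    [NormedAddCommGroup E] [NormedSpace ℝ E] [NormedAddCommGroup F] [NormedSpace ℝ F]

lemma half_lemma [Nontrivial F] (T : C(X, E) ≃+ C(Y, F)) (hT : SepMap T) (hT' : SepMap T.symm)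
    (y : Y) (f : C(X, E)) (u : C(X, ℝ))
    (hi : ∀ (g : C(X, E)) (ε : ℝ), 0 < ε → (∀ x, u x < ε → g x = 0) → T g y = 0)
    (hu : ∀ x, 0 ≤ u x) (hf : ∀ x, u x = 0 → f x = 0)
    (hcont : ∀ ψ : ℝ → ℝ, ContinuousOn ψ (Set.Ioi 0) → (∀ t, 0 < t → |ψ t| ≤ 3 + |Real.log t|) →
      Continuous fun x => ψ (u x) • f x)
    (θ : ℝ) (h0 : 0 ≤ θ) (h1 : θ ≤ 1) (f1 : C(X, E))
    (hf1 : ∀ x, f1 x = (Real.sin (Real.pi * (-Real.log (u x) + θ)) ^ 2) • f x) :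
    T f1 y = 0 := by
  by_contra hne
  have hG : ∀ c : ℤ → ℝ, (∀ k, |c k| ≤ 1 + |(k : ℝ)|) → ∃ g : C(X, E), ∀ x,
      g x = c ⌊-Real.log (u x) + θ⌋ • f1 x := by
    intro c hc
    refine ⟨⟨_, hcont (fun t => c ⌊-Real.log t + θ⌋ *
      Real.sin (Real.pi * (-Real.log t + θ)) ^ 2) ?_ ?_⟩, ?_⟩
    · refine (continuous_floor_sin c).comp_continuousOn ?_
      exact ((Real.continuousOn_log.mono (fun t ht => ne_of_gt ht)).neg).add continuousOn_const
    · intro t _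
      rw [abs_mul]
      have a1 : |Real.sin (Real.pi * (-Real.log t + θ)) ^ 2| ≤ 1 := by
        rw [abs_of_nonneg (sq_nonneg _)]; exact Real.sin_sq_le_one _
      have a2 := hc ⌊-Real.log t + θ⌋
      have a3 : |(⌊-Real.log t + θ⌋ : ℝ)| ≤ |Real.log t| + 2 := by
        have b1 := Int.floor_le (-Real.log t + θ)
        have b2 := Int.lt_floor_add_one (-Real.log t + θ)
        rw [abs_le]
        constructor <;> linarith [le_abs_self (Real.log t), neg_abs_le (Real.log t)]
      calc _ ≤ (1 + |(⌊-Real.log t + θ⌋ : ℝ)|) * 1 :=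
            mul_le_mul a2 a1 (abs_nonneg _) (by positivity)
        _ ≤ _ := by linarith
    · intro x
      simp only [ContinuousMap.coe_mk]
      rw [hf1 x, smul_smul]
  obtain ⟨v, hv⟩ := exists_ne (0 : F)
  set δ := ‖T f1 y‖ with hδ
  have hδ0 : 0 < δ := norm_pos_iff.mpr hne
  obtain ⟨g, hg⟩ := hG (fun k => (k : ℝ)) (fun k => by linarith)
  obtain ⟨N, hN⟩ := exists_nat_gt ((‖T g y‖ + 1) / (δ / 2))
  rw [div_lt_iff₀ (by positivity)] at hN
  obtain ⟨t, ht⟩ := hG (fun k => if (N : ℤ) ≤ k then 1 else 0) (fun k => by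
    have := abs_nonneg (k : ℝ)
    split_ifs <;> simp <;> linarith)
  have htf : T t y = T f1 y := by
    have := hi (f1 - t) (Real.exp (-(N + 1))) (Real.exp_pos _) (by
      intro x hx
      rw [ContinuousMap.sub_apply, ht x]
      rcases (hu x).eq_or_lt with h | h
      · simp [hf1 x, hf x h.symm]
      · have : Real.log (u x) < -(N + 1) := by
          rw [Real.log_lt_iff_lt_exp h]; exact hx
        have : (N : ℤ) ≤ ⌊-Real.log (u x) + θ⌋ := by
          rw [Int.le_floor]; push_cast; linarith
        simp [this])
    rw [map_sub, ContinuousMap.sub_apply, sub_eq_zero] at this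
    exact this.symm
  let ρ : C(Y, ℝ) := ⟨fun y' => min (‖T t y'‖ - δ / 2) (‖T g y‖ + 1 - ‖T g y'‖), by fun_prop⟩
  let w : C(Y, F) := ⟨fun y' => max (ρ y') 0 • v, by fun_prop⟩
  let w' : C(Y, F) := ⟨fun y' => max (-ρ y') 0 • v, by fun_prop⟩
  have hww : ∀ y', w' y' = 0 ∨ w y' = 0 := by
    intro y'
    rcases le_total (ρ y') 0 with h | h
    · right; simp [w, h]
    · left; simp [w', h]
  have hρy : 0 < ρ y := by
    simp only [ρ, ContinuousMap.coe_mk, htf, ← hδ, lt_min_iff]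
    constructor <;> linarith
  have hwy : w y ≠ 0 := by
    simp [w, hv, hρy]
  set k := T.symm w with hk
  have hTk : T k = w := by simp [hk]
  have hx : ∃ x, k x ≠ 0 ∧ t x ≠ 0 := by
    by_contra hcon
    push Not at hcon
    have := hT k t (fun x => by
      by_cases h : k x = 0
      · exact Or.inl h
      · exact Or.inr (hcon x h)) y
    rw [hTk, htf] at this
    tauto
  obtain ⟨x, hkx, htx⟩ := hx
  set n := ⌊-Real.log (u x) + θ⌋ with hn
  have hNn : (N : ℤ) ≤ n := by
    by_contra h
    apply htx
    rw [ht x, ← hn]; simp [h]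
  obtain ⟨fn, hfn⟩ := hG (fun k => if k = n then 1 else 0) (fun k => by
    have := abs_nonneg (k : ℝ)
    split_ifs <;> simp <;> linarith)
  have hfnx : fn x ≠ 0 := by
    intro h
    apply htx
    rw [hfn x, ← hn] at h
    simp only [if_true, one_smul] at h
    rw [ht x, h, smul_zero]
  let k' : C(X, E) := ⟨fun x => ‖fn x‖ • k x, by fun_prop⟩
  have hk'x : k' x ≠ 0 := by simp [k', hfnx, hkx]
  have hy' : ∃ y', T k' y' ≠ 0 := by
    by_contra hcon
    push Not at hcon
    have : T k' = 0 := by ext y'; exact hcon y'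
    rw [EmbeddingLike.map_eq_zero_iff] at this
    apply hk'x; rw [this]; rfl
  obtain ⟨y', hy'⟩ := hy'
  have hρ : 0 ≤ ρ y' := by
    by_contra hneg
    push Not at hneg
    have hs := hT' w' w hww
    have := hT (T.symm w') k' (fun z => by
      rcases hs z with h | h
      · exact Or.inl h
      · right; simp only [k', ContinuousMap.coe_mk]; rw [hk, h, smul_zero]) y'
    rw [AddEquiv.apply_symm_apply] at this
    rcases this with h | h
    · simp [w', hv] at h; linarith
    · exact hy' h
  have hkey : ∀ m : C(X, E), (∀ z, ⌊-Real.log (u z) + θ⌋ = n → m z = 0) → T m y' = 0 := by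
    intro m hm
    have := hT m k' (fun z => by
      by_cases hz : ⌊-Real.log (u z) + θ⌋ = n
      · exact Or.inl (hm z hz)
      · right; simp [k', hfn z, hz]) y'
    tauto
  have e1 : T g y' = n • T fn y' := by
    have := hkey (g - n • fn) (fun z hz => by
      simp only [ContinuousMap.sub_apply, ContinuousMap.zsmul_apply, hg z, hfn z, hz, if_true, one_smul]
      rw [Int.cast_smul_eq_zsmul, sub_self])
    rw [map_sub, map_zsmul, ContinuousMap.sub_apply, sub_eq_zero] at this
    simpa using this
  have e2 : T t y' = T fn y' := by
    have := hkey (t - fn) (fun z hz => by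
      simp [ht z, hfn z, hz, hNn])
    rwa [map_sub, ContinuousMap.sub_apply, sub_eq_zero] at this
  simp only [ρ, ContinuousMap.coe_mk, le_min_iff] at hρ
  rw [e1, e2, ← Int.cast_smul_eq_zsmul ℝ, norm_smul] at hρ
  have hn' : (N : ℝ) ≤ ‖(n : ℝ)‖ := by
    refine le_trans ?_ (le_abs_self _)
    exact_mod_cast hNn
  nlinarith [hρ.1, hρ.2, norm_nonneg (T fn y'), Nat.cast_nonneg (α := ℝ) N]

lemma full_lemma [Nontrivial F] (T : C(X, E) ≃+ C(Y, F)) (hT : SepMap T) (hT' : SepMap T.symm)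
    (y : Y) (f : C(X, E)) (u : C(X, ℝ))
    (hi : ∀ (g : C(X, E)) (ε : ℝ), 0 < ε → (∀ x, u x < ε → g x = 0) → T g y = 0)
    (hu : ∀ x, 0 ≤ u x) (hf : ∀ x, u x = 0 → f x = 0)
    (hcont : ∀ ψ : ℝ → ℝ, ContinuousOn ψ (Set.Ioi 0) → (∀ t, 0 < t → |ψ t| ≤ 3 + |Real.log t|) →
      Continuous fun x => ψ (u x) • f x) : T f y = 0 := by
  have hc : ∀ θ : ℝ, Continuous fun x =>
      (Real.sin (Real.pi * (-Real.log (u x) + θ)) ^ 2) • f x := by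
    intro θ
    refine hcont (fun t => Real.sin (Real.pi * (-Real.log t + θ)) ^ 2) ?_ ?_
    · have : ContinuousOn Real.log (Set.Ioi 0) :=
        Real.continuousOn_log.mono (fun t ht => ne_of_gt ht)
      fun_prop
    · intro t _
      rw [abs_of_nonneg (sq_nonneg _)]
      linarith [Real.sin_sq_le_one (Real.pi * (-Real.log t + θ)), abs_nonneg (Real.log t)]
  have a := half_lemma T hT hT' y f u hi hu hf hcont 0 le_rfl zero_le_one ⟨_, hc 0⟩ (fun x => rfl)
  have b := half_lemma T hT hT' y f u hi hu hf hcont (1/2) (by norm_num) (by norm_num)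
    ⟨_, hc (1/2)⟩ (fun x => rfl)
  have : f = (⟨_, hc 0⟩ : C(X, E)) + ⟨_, hc (1/2)⟩ := by
    ext x
    simp only [ContinuousMap.add_apply, ContinuousMap.coe_mk]
    rw [← add_smul, show Real.pi * (-Real.log (u x) + 1 / 2) =
      Real.pi * (-Real.log (u x) + 0) + Real.pi / 2 by ring, Real.sin_add_pi_div_two,
      Real.sin_sq_add_cos_sq, one_smul]
  rw [this, map_add, ContinuousMap.add_apply, a, b, add_zero]

lemma support_point [Nontrivial F] (T : C(X, E) ≃+ C(Y, F)) (hT : SepMap T) (y : Y) :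
    ∃ p : StoneCech X, ∀ U ∈ 𝓝 p, ∀ f : C(X, E), (∀ x, stoneCechUnit x ∈ U → f x = 0) →
      T f y = 0 := by
  by_contra hcon
  push Not at hcon
  have hcon' : ∀ p : StoneCech X, ∃ U, IsOpen U ∧ p ∈ U ∧ ∃ f : C(X, E),
      (∀ x, stoneCechUnit x ∈ U → f x = 0) ∧ T f y ≠ 0 := by
    intro p
    obtain ⟨U, hU, f, hf, hne⟩ := hcon p
    obtain ⟨V, hVU, hV, hp⟩ := mem_nhds_iff.mp hU
    exact ⟨V, hV, hp, f, fun x hx => hf x (hVU hx), hne⟩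
  choose U hUo hpU fp hfp hne using hcon'
  obtain ⟨s, hs⟩ := isCompact_univ.elim_finite_subcover U hUo
    (fun p _ => Set.mem_iUnion.mpr ⟨p, hpU p⟩)
  obtain ⟨φ, hφ⟩ := PartitionOfUnity.exists_isSubordinate_of_locallyFinite
    (isClosed_univ (X := StoneCech X)) (fun i : s => U i) (fun i => hUo i)
    (locallyFinite_of_finite _) (by
      intro p hp
      have := hs hp
      simp only [Set.mem_iUnion] at this ⊢
      obtain ⟨i, hi, hpi⟩ := this
      exact ⟨⟨i, hi⟩, hpi⟩)
  have hall : ∀ g : C(X, E), T g y = 0 := by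
    intro g
    let ψ : s → C(X, ℝ) := fun i => ⟨fun x => φ i (stoneCechUnit x),
      (φ i).continuous.comp continuous_stoneCechUnit⟩
    have hsum : g = ∑ i : s, smulC (ψ i) g := by
      ext x
      have h1 := φ.sum_eq_one (Set.mem_univ (stoneCechUnit x))
      rw [finsum_eq_sum_of_fintype] at h1
      rw [ContinuousMap.sum_apply]
      simp only [smulC_apply, ψ, ContinuousMap.coe_mk]
      rw [← Finset.sum_smul, h1, one_smul]
    rw [hsum, map_sum, ContinuousMap.sum_apply]
    refine Finset.sum_eq_zero fun i _ => ?_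
    have := hT (smulC (ψ i) g) (fp i) (fun x => by
      by_cases h : stoneCechUnit x ∈ U i
      · exact Or.inr (hfp i x h)
      · left
        have : φ i (stoneCechUnit x) = 0 := by
          by_contra h0
          exact h (hφ i (subset_tsupport _ h0))
        simp [ψ, this]) y
    exact this.resolve_right (hne i)
  obtain ⟨v, hv⟩ := exists_ne (0 : F)
  apply hv
  have := hall (T.symm (ContinuousMap.const Y v))
  simpa using this

lemma realcompact_point (hX : Realcompact X) (p : StoneCech X)
    (hp : ∀ x : X, stoneCechUnit x ≠ p) :
    ∃ u : C(X, ℝ), (∀ x, 0 < u x) ∧ ∀ ε > 0, ∃ U ∈ 𝓝 p, ∀ x, stoneCechUnit x ∈ U → u x < ε := by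
  obtain ⟨ι, e, he⟩ := hX
  have hden : ∀ i x, 0 < 1 + |e x i| := fun i x => by positivity
  have hei : ∀ i, Continuous fun x => e x i := fun i => (continuous_apply i).comp he.continuous
  let v : ι → X → unitInterval := fun i x => ⟨1 / (1 + |e x i|), by
    constructor
    · have := hden i x; positivity
    · rw [div_le_one (hden i x)]; linarith [abs_nonneg (e x i)]⟩
  have hv : ∀ i, Continuous (v i) := by
    intro i
    refine Continuous.subtype_mk ?_ _
    have := hei i
    exact continuous_const.div (by fun_prop) (fun x => (hden i x).ne')
  by_cases hz : ∃ i, stoneCechExtend (hv i) p = 0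
  · obtain ⟨i, hi⟩ := hz
    refine ⟨⟨fun x => (v i x : ℝ), continuous_subtype_val.comp (hv i)⟩, fun x => ?_, ?_⟩
    · have := hden i x
      simp only [v, ContinuousMap.coe_mk]; positivity
    · intro ε hε
      refine ⟨{q | ((stoneCechExtend (hv i) q : unitInterval) : ℝ) < ε}, ?_, ?_⟩
      · apply IsOpen.mem_nhds
        · exact isOpen_lt (continuous_subtype_val.comp (continuous_stoneCechExtend (hv i)))
            continuous_const
        · simp [hi, hε]
      · intro x hx
        simpa [stoneCechExtend_stoneCechUnit] using hx
  · exfalso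
    push Not at hz
    haveI : (comap (stoneCechUnit : X → StoneCech X) (𝓝 p)).NeBot :=
      comap_neBot fun s hs => by
        obtain ⟨_, hq, x, rfl⟩ := mem_closure_iff_nhds.mp (denseRange_stoneCechUnit p) s hs
        exact ⟨x, hq⟩
    set 𝒰 := Ultrafilter.of (comap (stoneCechUnit : X → StoneCech X) (𝓝 p)) with h𝒰
    have hle : (𝒰 : Filter X) ≤ comap stoneCechUnit (𝓝 p) := Ultrafilter.of_le _
    have htend : Tendsto stoneCechUnit (𝒰 : Filter X) (𝓝 p) :=
      (tendsto_comap (f := stoneCechUnit) (x := 𝓝 p)).mono_left hle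
    have hlim : ∀ i, ∃ a : ℝ, Tendsto (fun x => e x i) (𝒰 : Filter X) (𝓝 a) := by
      intro i
      set a : ℝ := ((stoneCechExtend (hv i) p : unitInterval) : ℝ) with ha
      have ha0 : 0 < a := by
        rcases (stoneCechExtend (hv i) p).2.1.eq_or_lt with h | h
        · exact absurd (Subtype.ext h.symm) (hz i)
        · exact h
      have hev : ∀ᶠ x in (𝒰 : Filter X), e x i ∈ Set.Icc (-(2 / a)) (2 / a) := by
        have hc : Tendsto (fun x => (v i x : ℝ)) (𝒰 : Filter X) (𝓝 a) := by
          have := ((continuous_subtype_val.comp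
            (continuous_stoneCechExtend (hv i))).tendsto p).comp htend
          refine this.congr fun x => ?_
          simp [stoneCechExtend_stoneCechUnit]
        filter_upwards [hc.eventually (lt_mem_nhds (show a / 2 < a by linarith))] with x hx
        simp only [v] at hx
        rw [lt_div_iff₀ (hden i x)] at hx
        rw [Set.mem_Icc, ← abs_le, le_div_iff₀ ha0]
        nlinarith [abs_nonneg (e x i)]
      have hm : Set.Icc (-(2 / a)) (2 / a) ∈ (𝒰.map fun x => e x i) := hev
      obtain ⟨b, -, hb⟩ := isCompact_Icc.ultrafilter_le_nhds (𝒰.map fun x => e x i)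
        (by simpa using hm)
      exact ⟨b, hb⟩
    choose a ha using hlim
    have hta : Tendsto e (𝒰 : Filter X) (𝓝 a) := tendsto_pi_nhds.mpr ha
    have hmem : a ∈ Set.range e := he.isClosed_range.mem_of_tendsto hta (by simp)
    obtain ⟨x, rfl⟩ := hmem
    have htx : Tendsto id (𝒰 : Filter X) (𝓝 x) := he.isInducing.tendsto_nhds_iff.mpr hta
    have := (continuous_stoneCechUnit.tendsto x).comp htx
    exact hp x (tendsto_nhds_unique this htend)

lemma key_lemma [CompletelyRegularSpace X] [Nontrivial F] (hX : Realcompact X)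
    (T : C(X, E) ≃+ C(Y, F)) (hT : SepMap T)
    (hT' : SepMap T.symm) (y : Y) : ∃ x : X, ∀ f : C(X, E), f x = 0 → T f y = 0 := by
  obtain ⟨p, hp⟩ := support_point T hT y
  by_cases hpx : ∃ x : X, stoneCechUnit x = p
  · obtain ⟨x, rfl⟩ := hpx
    refine ⟨x, fun f hf => ?_⟩
    refine full_lemma T hT hT' y f ⟨fun x => ‖f x‖, by fun_prop⟩ ?_ (fun x => norm_nonneg (f x))
      (fun x hx => norm_eq_zero.mp hx) ?_
    · intro g ε hε hg
      have h1 : {z | ‖f z‖ < ε} ∈ 𝓝 x :=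
        (isOpen_lt (by fun_prop) continuous_const).mem_nhds (by simp [hf, hε])
      rw [isInducing_stoneCechUnit.nhds_eq_comap] at h1
      obtain ⟨U, hU, hUs⟩ := h1
      exact hp U hU g (fun z hz => hg z (hUs hz))
    · intro ψ hψ hb
      rw [continuous_iff_continuousAt]
      intro z
      simp only [ContinuousMap.coe_mk]
      by_cases hz : f z = 0
      · unfold ContinuousAt
        beta_reduce
        rw [hz, smul_zero]
        have hlim : Tendsto (fun z => 3 * ‖f z‖ + |‖f z‖ * Real.log ‖f z‖|) (𝓝 z) (𝓝 0) := by
          have h1 : Continuous fun z => ‖f z‖ := by fun_prop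
          have h2 : Continuous fun z => 3 * ‖f z‖ + |‖f z‖ * Real.log ‖f z‖| :=
            (continuous_const.mul h1).add (Real.continuous_mul_log.comp h1).abs
          have := h2.tendsto z
          simpa [hz] using this
        refine squeeze_zero_norm (fun w => ?_) hlim
        rcases (norm_nonneg (f w)).eq_or_lt with h | h
        · rw [norm_smul, ← h]; simp
        · rw [norm_smul, Real.norm_eq_abs, abs_mul, abs_of_pos h]
          nlinarith [hb _ h]
      · have h1 : ContinuousAt ψ ‖f z‖ :=
          hψ.continuousAt (Ioi_mem_nhds (norm_pos_iff.mpr hz))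
        have h2 : ContinuousAt (fun w => ‖f w‖) z := by fun_prop
        exact (ContinuousAt.comp (f := fun w => ‖f w‖) h1 h2).smul f.continuous.continuousAt
  · push Not at hpx
    exfalso
    obtain ⟨u, hu, hU⟩ := realcompact_point hX p hpx
    obtain ⟨v, hv⟩ := exists_ne (0 : F)
    apply hv
    have := full_lemma T hT hT' y (T.symm (ContinuousMap.const Y v)) u (by
        intro g ε hε hg
        obtain ⟨U, hU1, hU2⟩ := hU ε hε
        exact hp U hU1 g (fun z hz => hg z (hU2 z hz)))
      (fun x => (hu x).le) (fun x hx => absurd hx (hu x).ne') (by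
        intro ψ hψ _
        have : Continuous fun x => ψ (u x) := hψ.comp_continuous u.continuous hu
        exact this.smul (ContinuousMap.continuous _))
    simpa using this

/-- complete regularity with vector values -/
lemma exists_bump [CompletelyRegularSpace X] [Nontrivial E] (x : X) (V : Set X) (hV : IsOpen V)
    (hx : x ∈ V) : ∃ f : C(X, E), f x ≠ 0 ∧ ∀ z, f z ≠ 0 → z ∈ V := by
  obtain ⟨v, hv⟩ := exists_ne (0 : E)
  obtain ⟨φ, hφ, h0, h1⟩ := CompletelyRegularSpace.completely_regular x Vᶜ hV.isClosed_compl
    (by simpa using hx)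
  refine ⟨⟨fun z => (1 - (φ z : ℝ)) • v, by fun_prop⟩, by simp [h0, hv], ?_⟩
  intro z hz
  by_contra hn
  apply hz
  have := h1 (show z ∈ Vᶜ from hn)
  simp [this]

lemma inverse_lemma [CompletelyRegularSpace Y] [T1Space Y] [Nontrivial F]
    (T : C(X, E) ≃+ C(Y, F)) (h : Y → X) (k : X → Y)
    (hh : ∀ y, ∀ f : C(X, E), f (h y) = 0 → T f y = 0)
    (hk : ∀ x, ∀ g : C(Y, F), g (k x) = 0 → T.symm g x = 0) (y : Y) : k (h y) = y := by
  by_contra hne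
  obtain ⟨g, hg, hgV⟩ := exists_bump (E := F) y {k (h y)}ᶜ isOpen_compl_singleton
    (by simpa using Ne.symm hne)
  have h1 : g (k (h y)) = 0 := by
    by_contra h0
    exact hgV _ h0 rfl
  apply hg
  have := hh y _ (hk (h y) g h1)
  simpa using this

lemma cont_lemma [CompletelyRegularSpace X] [Nontrivial E]
    (T : C(X, E) ≃+ C(Y, F)) (h : Y → X) (k : X → Y)
    (hh : ∀ y, ∀ f : C(X, E), f (h y) = 0 → T f y = 0)
    (hk : ∀ x, ∀ g : C(Y, F), g (k x) = 0 → T.symm g x = 0) (hkh : ∀ y, k (h y) = y) :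
    Continuous h := by
  rw [continuous_iff_continuousAt]
  intro y
  rw [ContinuousAt, tendsto_nhds]
  intro V hV hyV
  obtain ⟨f, hf, hfV⟩ := exists_bump (E := E) (h y) V hV hyV
  have hne : T f y ≠ 0 := by
    intro h0
    apply hf
    have := hk (h y) (T f) (by rw [hkh, h0])
    simpa using this
  have : ∀ᶠ y' in 𝓝 y, T f y' ≠ 0 := (T f).continuous.continuousAt.eventually_ne hne
  filter_upwards [this] with y' hy'
  exact hfV _ (fun h0 => hy' (hh y' f h0))

end

theorem stmt3 {𝕂 X Y E F : Type} [RCLike 𝕂]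
    [TopologicalSpace X] [CompletelyRegularSpace X] [T2Space X]
    [TopologicalSpace Y] [CompletelyRegularSpace Y] [T2Space Y]
    [NormedAddCommGroup E] [NormedSpace 𝕂 E] [Nontrivial E]
    [NormedAddCommGroup F] [NormedSpace 𝕂 F] [Nontrivial F]
    (hX : Realcompact X) (hY : Realcompact Y)
    (T : C(X, E) ≃ₗ[𝕂] C(Y, F)) (hT : SeparatingC ⇑T) (hT' : SeparatingC ⇑T.symm) :
    ∃ (h : Y ≃ₜ X) (J : Y → (E ≃ₗ[𝕂] F)),
      ∀ (f : C(X, E)) (y : Y), T f y = J y (f (h y)) := by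
  letI : NormedSpace ℝ E := NormedSpace.restrictScalars ℝ 𝕂 E
  letI : NormedSpace ℝ F := NormedSpace.restrictScalars ℝ 𝕂 F
  let S : C(X, E) ≃+ C(Y, F) := T.toAddEquiv
  have hS : SepMap S := hT.sep
  have hS' : SepMap S.symm := hT'.sep
  choose h hh using key_lemma hX S hS hS'
  choose k hk using key_lemma hY S.symm hS' hS
  have hkh := inverse_lemma S h k hh hk
  have hhk := inverse_lemma S.symm k h hk hh
  have hch := cont_lemma S h k hh hk hkh
  have hck := cont_lemma S.symm k h hk hh hhk
  have hT1 : ∀ (f : C(X, E)) (y : Y), T f y = T (ContinuousMap.const X (f (h y))) y := by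
    intro f y
    have : T (f - ContinuousMap.const X (f (h y))) y = 0 := hh y _ (by simp)
    rwa [map_sub, ContinuousMap.sub_apply, sub_eq_zero] at this
  have hT2 : ∀ (g : C(Y, F)) (y : Y),
      T.symm g (h y) = T.symm (ContinuousMap.const Y (g y)) (h y) := by
    intro g y
    have : T.symm (g - ContinuousMap.const Y (g y)) (h y) = 0 := hk (h y) _ (by simp [hkh])
    rwa [map_sub, ContinuousMap.sub_apply, sub_eq_zero] at this
  refine ⟨⟨⟨h, k, hkh, hhk⟩, hch, hck⟩, fun y =>
    { toFun := fun e => T (ContinuousMap.const X e) y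
      invFun := fun v => T.symm (ContinuousMap.const Y v) (h y)
      map_add' := ?_
      map_smul' := ?_
      left_inv := ?_
      right_inv := ?_ }, ?_⟩
  · intro a b
    rw [← ContinuousMap.add_apply, ← map_add]; rfl
  · intro c a
    rw [RingHom.id_apply, ← ContinuousMap.smul_apply, ← map_smul]; rfl
  · intro a
    simp only
    rw [← hT2]; simp
  · intro v
    simp only
    rw [← hT1]; simp
  · intro f y
    exact hT1 f y
end

section
/- Let X and Y be realcompact completely regular Hausdorff topological spaces, let E and F be infinite-dimensional normed spaces over 𝕂, and let T : C_b(X,E) → C_b(Y,F) be a 𝕂-linear biseparating map. Then there exist a homeomorphism h : Y → X and, for each y ∈ Y, a bijective (not necessarily continuous) 𝕂-linear map J_y : E → F such that (Tf)(y) = J_y(f(h(y))) for every f ∈ C_b(X,E) and every y ∈ Y. -/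
open Filter Topology BoundedContinuousFunction

/-- A map between spaces of bounded continuous vector-valued functions is separating if it
maps pairs of functions with disjoint cozero sets to pairs of functions with disjoint
cozero sets. -/
def SeparatingB {X Y E F : Type} [TopologicalSpace X] [TopologicalSpace Y]
    [NormedAddCommGroup E] [NormedAddCommGroup F] (T : (X →ᵇ E) → (Y →ᵇ F)) : Prop :=
  ∀ f g : X →ᵇ E, (∀ x, ‖f x‖ * ‖g x‖ = 0) → ∀ y, ‖T f y‖ * ‖T g y‖ = 0



section aux
open Set
variable {X Y E F : Type} [TopologicalSpace X] [TopologicalSpace Y]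
  [NormedAddCommGroup E] [NormedAddCommGroup F]

theorem ext_exists (φ : X → ℝ) (hφ : Continuous φ) (M : ℝ) (hM : ∀ x, 0 ≤ φ x ∧ φ x ≤ M) :
    ∃ Φ : StoneCech X → ℝ, Continuous Φ ∧ ∀ x, Φ (stoneCechUnit x) = φ x := by
  have hc : Continuous (fun x => (⟨φ x, hM x⟩ : Icc (0:ℝ) M)) := by fun_prop
  refine ⟨fun p => ((stoneCechExtend hc p : Icc (0:ℝ) M) : ℝ), ?_, ?_⟩
  · exact continuous_subtype_val.comp (continuous_stoneCechExtend hc)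
  · intro x
    have := congrFun (stoneCechExtend_extends hc) x
    exact congrArg Subtype.val this

theorem N_exists (f : X →ᵇ E) :
    ∃ Φ : StoneCech X → ℝ, Continuous Φ ∧ ∀ x, Φ (stoneCechUnit x) = ‖f x‖ :=
  ext_exists _ (f.continuous.norm) ‖f‖ (fun x => ⟨norm_nonneg _, f.norm_coe_le_norm x⟩)

noncomputable def NN (f : X →ᵇ E) : StoneCech X → ℝ := (N_exists f).choose

theorem NN_cont (f : X →ᵇ E) : Continuous (NN f) := (N_exists f).choose_spec.1

@[simp] theorem NN_unit (f : X →ᵇ E) (x : X) : NN f (stoneCechUnit x) = ‖f x‖ :=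
  (N_exists f).choose_spec.2 x

def SS (f : X →ᵇ E) : Set (StoneCech X) := closure (stoneCechUnit '' {x | f x ≠ 0})

theorem le_of_unit {a b : StoneCech X → ℝ} (ha : Continuous a) (hb : Continuous b)
    (h : ∀ x, a (stoneCechUnit x) ≤ b (stoneCechUnit x)) (p) : a p ≤ b p := by
  have hcl : IsClosed {p | a p ≤ b p} := isClosed_le ha hb
  have := denseRange_stoneCechUnit.induction_on (p := fun p => a p ≤ b p) p hcl h
  exact this

theorem NN_nonneg (f : X →ᵇ E) (p) : 0 ≤ NN f p :=
  le_of_unit continuous_const (NN_cont f) (by simp) p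

theorem NN_le (f : X →ᵇ E) (p) : NN f p ≤ ‖f‖ :=
  le_of_unit (NN_cont f) continuous_const (by simpa using f.norm_coe_le_norm) p

theorem NN_tri (f g : X →ᵇ E) (p) : NN f p ≤ NN g p + NN (f - g) p := by
  refine le_of_unit (NN_cont f) ((NN_cont g).add (NN_cont _)) ?_ p
  intro x
  simp only [NN_unit, BoundedContinuousFunction.sub_apply]
  have := norm_add_le (g x) (f x - g x)
  simpa using this

theorem NN_symm (f g : X →ᵇ E) (p) : NN (f - g) p = NN (g - f) p := by
  have h : ∀ f g : X →ᵇ E, NN (f - g) p ≤ NN (g - f) p := fun f g =>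
    le_of_unit (NN_cont _) (NN_cont _) (fun x => by simp [norm_sub_rev]) p
  exact le_antisymm (h _ _) (h _ _)

theorem NN_tri3 (f g k : X →ᵇ E) (p) : NN (f - k) p ≤ NN (f - g) p + NN (g - k) p := by
  have := NN_tri (f - k) (g - k) p
  rw [show f - k - (g - k) = f - g by abel] at this
  linarith

theorem NN_eq_of_sub (f g : X →ᵇ E) (p) (h : NN (f - g) p = 0) : NN f p = NN g p := by
  have h1 := NN_tri f g p
  have h2 := NN_tri g f p
  rw [NN_symm g f] at h2
  linarith

theorem NN_nsmul (n : ℕ) (f : X →ᵇ E) [NormedSpace ℝ E] (p) : NN (n • f) p = n * NN f p := by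
  have hx : ∀ x, NN (n • f) (stoneCechUnit x) = n * NN f (stoneCechUnit x) := by
    intro x
    simp only [NN_unit, BoundedContinuousFunction.coe_nsmul, Pi.smul_apply]
    rw [← Nat.cast_smul_eq_nsmul ℝ, norm_smul]; simp
  have hc : Continuous fun p => (n:ℝ) * NN f p := (NN_cont f).const_mul _
  exact le_antisymm (le_of_unit (NN_cont _) hc (fun x => (hx x).le) p)
    (le_of_unit hc (NN_cont _) (fun x => (hx x).ge) p)

theorem NN_const (e : E) (p : StoneCech X) : NN (BoundedContinuousFunction.const X e) p = ‖e‖ :=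
  le_antisymm (le_of_unit (NN_cont _) continuous_const (by simp) p)
    (le_of_unit continuous_const (NN_cont _) (by simp) p)

theorem unit_mem_SS (f : X →ᵇ E) (x : X) (h : f x ≠ 0) : stoneCechUnit x ∈ SS f :=
  subset_closure ⟨x, h, rfl⟩

theorem SS_closed (f : X →ᵇ E) : IsClosed (SS f) := isClosed_closure

theorem not_mem_SS_iff (f : X →ᵇ E) (p) :
    p ∉ SS f ↔ ∃ O, IsOpen O ∧ p ∈ O ∧ ∀ x, stoneCechUnit x ∈ O → f x = 0 := by
  constructor
  · intro h
    refine ⟨(SS f)ᶜ, (SS_closed f).isOpen_compl, h, fun x hx => ?_⟩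
    by_contra hne
    exact hx (unit_mem_SS f x hne)
  · rintro ⟨O, hO, hp, h⟩ hm
    obtain ⟨_, h1, x, hx, rfl⟩ := mem_closure_iff.1 hm O hO hp
    exact hx (h x h1)

theorem exists_unit {O : Set (StoneCech X)} (hO : IsOpen O) {p} (hp : p ∈ O) :
    ∃ x, stoneCechUnit x ∈ O := by
  obtain ⟨_, h1, x, rfl⟩ := denseRange_stoneCechUnit.inter_open_nonempty O hO ⟨p, hp⟩
  exact ⟨x, h1⟩

theorem NN_zero_of_not_mem (f : X →ᵇ E) (p) (h : p ∉ SS f) : NN f p = 0 := by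
  obtain ⟨O, hO, hp, h⟩ := (not_mem_SS_iff f p).1 h
  by_contra hne
  obtain ⟨x, hx⟩ := exists_unit (hO.inter (isOpen_ne_fun (NN_cont f) continuous_const))
    (⟨hp, hne⟩ : p ∈ O ∩ {p | NN f p ≠ 0})
  have := h x hx.1
  exact hx.2 (by simp [this])

theorem not_mem_SS_add (f g : X →ᵇ E) (p) (hf : p ∉ SS f) (hg : p ∉ SS g) : p ∉ SS (f + g) := by
  rw [not_mem_SS_iff] at *
  obtain ⟨O, hO, hp, h⟩ := hf
  obtain ⟨O', hO', hp', h'⟩ := hg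
  exact ⟨O ∩ O', hO.inter hO', ⟨hp, hp'⟩, fun x hx => by simp [h x hx.1, h' x hx.2]⟩

/-- cutoff by a continuous function on the Stone-Cech compactification -/
noncomputable def cut [NormedSpace ℝ E] (χ : C(StoneCech X, ℝ)) (f : X →ᵇ E) : X →ᵇ E :=
  BoundedContinuousFunction.ofNormedAddCommGroup (fun x => χ (stoneCechUnit x) • f x)
    ((χ.continuous.comp continuous_stoneCechUnit).smul f.continuous) (‖χ‖ * ‖f‖)
    (fun x => by
      rw [norm_smul]
      exact mul_le_mul (χ.norm_coe_le_norm _) (f.norm_coe_le_norm x) (norm_nonneg _) (norm_nonneg _))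

@[simp] theorem cut_apply [NormedSpace ℝ E] (χ : C(StoneCech X, ℝ)) (f : X →ᵇ E) (x : X) :
    cut χ f x = χ (stoneCechUnit x) • f x := rfl

theorem urys {K : Type} [TopologicalSpace K] [CompactSpace K] [T2Space K] {p : K} {O : Set K}
    (hO : O ∈ 𝓝 p) : ∃ χ : C(K, ℝ), (∀ᶠ p' in 𝓝 p, χ p' = 1) ∧ ∀ p', p' ∉ O → χ p' = 0 := by
  obtain ⟨D, hD, hDc, hDO⟩ := exists_mem_nhds_isClosed_subset (interior_mem_nhds.2 hO)
  obtain ⟨χ, h0, h1, -⟩ := exists_continuous_zero_one_of_isClosed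
    (isOpen_interior (s := O)).isClosed_compl hDc
    (Set.disjoint_left.2 fun a ha hb => ha (hDO hb))
  refine ⟨χ, ?_, ?_⟩
  · filter_upwards [hD] with a ha using h1 ha
  · intro a ha
    exact h0 (fun hb => ha (interior_subset hb))

theorem not_mem_SS_cut [NormedSpace ℝ E] (χ : C(StoneCech X, ℝ)) (f : X →ᵇ E) (p)
    (h : ∀ᶠ p' in 𝓝 p, χ p' = 0) : p ∉ SS (cut χ f) := by
  rw [not_mem_SS_iff]
  obtain ⟨O, h1, h2, h3⟩ := eventually_nhds_iff.1 h
  exact ⟨O, h2, h3, fun x hx => by simp [h1 _ hx]⟩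

theorem mem_SS_cut_const [NormedSpace ℝ E] (χ : C(StoneCech X, ℝ)) (e : E) (he : e ≠ 0) (p)
    (h : ∀ᶠ p' in 𝓝 p, χ p' ≠ 0) :
    p ∈ SS (cut χ (BoundedContinuousFunction.const X e)) := by
  by_contra hp
  obtain ⟨O, hO, hpO, h0⟩ := (not_mem_SS_iff _ _).1 hp
  obtain ⟨O', h1, h2, h3⟩ := eventually_nhds_iff.1 h
  obtain ⟨x, hx⟩ := exists_unit (hO.inter h2) ⟨hpO, h3⟩
  have := h0 x hx.1
  simp [he] at this
  exact h1 _ hx.2 this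

def SepA (T : (X →ᵇ E) → (Y →ᵇ F)) : Prop :=
  ∀ f g : X →ᵇ E, (∀ x, f x = 0 ∨ g x = 0) → ∀ y, T f y = 0 ∨ T g y = 0

/-- existence of the support point -/
theorem supp_exists [NormedSpace ℝ E] (T : (X →ᵇ E) ≃+ (Y →ᵇ F)) (hT : SepA T)
    (w : F) (hw : w ≠ 0) (q : StoneCech Y) :
    ∃ p : StoneCech X, ∀ f, p ∉ SS f → q ∉ SS (T f) := by
  obtain ⟨e, he⟩ := T.surjective (BoundedContinuousFunction.const Y w)
  have key : ∃ p : StoneCech X, ∀ χ : C(StoneCech X, ℝ), (∀ᶠ p' in 𝓝 p, χ p' = 1) →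
      ∃ f, q ∈ SS (T (cut χ f)) := by
    by_contra! hcon
    have : ∃ χ : C(StoneCech X, ℝ), (∀ p ∈ (univ : Set (StoneCech X)), χ p = 1) ∧
        ∀ f, q ∉ SS (T (cut χ f)) := by
      refine isCompact_univ.induction_on
        (p := fun s => ∃ χ : C(StoneCech X, ℝ), (∀ p ∈ s, χ p = 1) ∧
          ∀ f, q ∉ SS (T (cut χ f))) ?_ ?_ ?_ ?_
      · refine ⟨0, by simp, fun f => ?_⟩
        have : cut 0 f = (0 : X →ᵇ E) := by ext x; simp
        rw [this, map_zero, not_mem_SS_iff]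
        exact ⟨univ, isOpen_univ, mem_univ _, fun _ _ => rfl⟩
      · rintro s t hst ⟨χ, h1, h2⟩
        exact ⟨χ, fun p hp => h1 p (hst hp), h2⟩
      · rintro s t ⟨χ, h1, h2⟩ ⟨χ', h1', h2'⟩
        refine ⟨χ + χ' - χ * χ', ?_, fun f => ?_⟩
        · rintro p (hp | hp)
          · simp [h1 p hp]
          · simp [h1' p hp]
        · have : cut (χ + χ' - χ * χ') f = cut χ (cut (1 - χ') f) + cut χ' f := by
            ext x
            simp only [cut_apply, BoundedContinuousFunction.add_apply, smul_smul, ← add_smul]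
            congr 1
            simp; ring
          rw [this, map_add]
          exact not_mem_SS_add _ _ _ (h2 _) (h2' _)
      · intro p _
        obtain ⟨χ, h1, h2⟩ := hcon p
        exact ⟨{p' | χ p' = 1}, mem_nhdsWithin_of_mem_nhds h1, χ, fun _ h => h, h2⟩
    obtain ⟨χ, h1, h2⟩ := this
    have h3 : cut χ e = e := by ext x; simp [h1]
    have h4 := NN_zero_of_not_mem _ _ (h2 e)
    rw [h3, he, NN_const] at h4
    exact hw (norm_eq_zero.1 h4)
  obtain ⟨p, hp⟩ := key
  refine ⟨p, fun f hpf hqf => ?_⟩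
  obtain ⟨χ, hχ1, hχ0⟩ := urys ((SS_closed f).isOpen_compl.mem_nhds hpf)
  obtain ⟨χ', hχ1', hχ0'⟩ := urys (p := p) (O := {p' | χ p' = 1}) hχ1
  obtain ⟨f1, hf1⟩ := hp χ' hχ1'
  have s1 := hT f (cut χ e) (fun x => by
    by_cases hx : f x = 0
    · exact Or.inl hx
    · right
      rw [cut_apply, hχ0 _ (fun h => h (unit_mem_SS f x hx)), zero_smul])
  have s2 := hT (cut χ' f1) (cut (1 - χ) e) (fun x => by
    by_cases hx : χ (stoneCechUnit x) = 1
    · right; simp [hx]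
    · left; rw [cut_apply, hχ0' _ hx, zero_smul])
  have hsum : T (cut χ e) + T (cut (1 - χ) e) = BoundedContinuousFunction.const Y w := by
    rw [← map_add, ← he]
    congr 1
    ext x
    simp [← add_smul]
  have v1 : NN (T (cut (1 - χ) e)) q = ‖w‖ := by
    have hcl : IsClosed {q | NN (T (cut (1 - χ) e)) q = ‖w‖} :=
      isClosed_eq (NN_cont _) continuous_const
    refine closure_minimal ?_ hcl hqf
    rintro _ ⟨y, hy, rfl⟩
    have h1 := (s1 y).resolve_left hy
    have h2 := DFunLike.congr_fun hsum y
    simp only [BoundedContinuousFunction.add_apply, h1, zero_add] at h2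
    simp [h2]
  have v2 : NN (T (cut (1 - χ) e)) q = 0 := by
    have hcl : IsClosed {q | NN (T (cut (1 - χ) e)) q = 0} :=
      isClosed_eq (NN_cont _) continuous_const
    refine closure_minimal ?_ hcl hf1
    rintro _ ⟨y, hy, rfl⟩
    have h1 := (s2 y).resolve_left hy
    simp [h1]
  exact hw (norm_eq_zero.1 (v1.symm.trans v2))

theorem eq_of_SS [NormedSpace ℝ E] (e : E) (he : e ≠ 0) (p p' : StoneCech X)
    (h : ∀ f : X →ᵇ E, p' ∉ SS f → p ∉ SS f) : p = p' := by
  by_contra hne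
  obtain ⟨U, V, hU, hV, hpU, hpV, hd⟩ := t2_separation hne
  obtain ⟨χ, h1, h0⟩ := urys (hU.mem_nhds hpU)
  refine h (cut χ (BoundedContinuousFunction.const X e)) (not_mem_SS_cut _ _ _ ?_)
    (mem_SS_cut_const _ e he _ ?_)
  · filter_upwards [hV.mem_nhds hpV] with a ha
    exact h0 a (fun hb => Set.disjoint_left.1 hd hb ha)
  · filter_upwards [h1] with a ha
    simp [ha]

theorem homeo_exists [NormedSpace ℝ E] [NormedSpace ℝ F] (T : (X →ᵇ E) ≃+ (Y →ᵇ F)) (hT : SepA T)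
    (hT' : SepA T.symm) (e : E) (he : e ≠ 0) (w : F) (hw : w ≠ 0) :
    ∃ h : StoneCech Y ≃ₜ StoneCech X, ∀ f q, h q ∈ SS f ↔ q ∈ SS (T f) := by
  choose h hh using supp_exists T hT w hw
  choose k hk using supp_exists T.symm hT' e he
  have hkh : ∀ q, k (h q) = q := fun q =>
    (eq_of_SS w hw q (k (h q)) (fun g hg => by
      have := hh q _ (hk _ g hg)
      simpa using this)).symm
  have hhk : ∀ p, h (k p) = p := fun p =>
    (eq_of_SS e he p (h (k p)) (fun g hg => by
      have := hk p _ (hh _ g hg)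
      simpa using this)).symm
  have hrel : ∀ f q, h q ∈ SS f ↔ q ∈ SS (T f) := by
    intro f q
    rw [← not_iff_not]
    refine ⟨hh q f, fun hq => ?_⟩
    have := hk (h q) (T f) (by rwa [hkh])
    simpa using this
  have hcont : Continuous h := by
    rw [continuous_iff_isClosed]
    intro C hC
    have : h ⁻¹' C = ⋂ f ∈ {f : X →ᵇ E | C ⊆ SS f}, SS (T f) := by
      ext q
      simp only [mem_preimage, mem_iInter, mem_ofPred_eq]
      refine ⟨fun hq f hf => (hrel f q).1 (hf hq), fun hq => ?_⟩
      by_contra hqC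
      obtain ⟨χ, h1, h0⟩ := urys (hC.isOpen_compl.mem_nhds hqC)
      obtain ⟨χ', h1', h0'⟩ := urys (p := h q) (O := {a | χ a = 1}) h1
      have hin : C ⊆ SS (cut (1 - χ') (BoundedContinuousFunction.const X e)) := by
        intro c hc
        refine mem_SS_cut_const _ e he _ ?_
        have : ∀ᶠ a in 𝓝 c, χ a < 1 := by
          refine χ.continuous.continuousAt.eventually_lt continuousAt_const ?_
          rw [h0 c (fun h => h hc)]; norm_num
        filter_upwards [this] with a ha
        have : χ' a = 0 := h0' a (fun h => by simp only [mem_ofPred_eq] at h; linarith)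
        simp [this]
      have h2 := (hrel _ q).2 (hq _ hin)
      refine not_mem_SS_cut _ _ _ ?_ h2
      filter_upwards [h1'] with a ha
      simp [ha]
    rw [this]
    exact isClosed_biInter fun f _ => SS_closed _
  let eq : StoneCech Y ≃ StoneCech X := ⟨h, k, hkh, hhk⟩
  exact ⟨Continuous.homeoOfEquivCompactToT2 (f := eq) hcont, hrel⟩

end aux

section glue
open Set
variable {X Y E F : Type} [TopologicalSpace X] [TopologicalSpace Y]
  [NormedAddCommGroup E] [NormedAddCommGroup F]

theorem glue [NormedSpace ℝ E] (v : X → ℝ) (hv : Continuous v) (hv0 : ∀ x, 0 ≤ v x)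
    (t : ℕ → ℝ) (ht : ∀ n, 0 < t n) (htt : ∀ n, t (n + 1) ≤ t n / 16)
    (a : ℕ → X →ᵇ E) (b : ℕ → ℝ) (M : ℝ) (hM : 0 ≤ M) (hbM : ∀ n, b n ≤ M)
    (hab : ∀ n x, t n / 8 ≤ v x → v x ≤ 2 * t n → ‖a n x‖ ≤ b n)
    (hz : (∀ x, v x ≠ 0) ∨ Tendsto b atTop (𝓝 0)) :
    ∃ G : X →ᵇ E, ∀ n x, t n / 5 < v x → v x < 5 / 4 * t n → G x = a n x := by
  have hanti : Antitone t := antitone_nat_of_succ_le fun n => by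
    have := htt n; have := ht n; linarith
  have hgeo : ∀ n, t n ≤ t 0 * (1 / 16) ^ n := by
    intro n
    induction n with
    | zero => simp
    | succ k ih => rw [pow_succ]; have := htt k; linarith
  have ht0 : Tendsto t atTop (𝓝 0) := by
    refine squeeze_zero (fun n => (ht n).le) hgeo ?_
    have := (tendsto_pow_atTop_nhds_zero_of_lt_one (r := (1/16 : ℝ)) (by norm_num)
      (by norm_num)).const_mul (t 0)
    simpa using this
  let φ : ℕ → ℝ → ℝ := fun n s =>
    max 0 (min 1 (min (16 * (s / t n - 1 / 8)) (2 * (2 - s / t n))))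
  have hφc : ∀ n, Continuous (φ n) := fun n => by
    have := (ht n).ne'
    fun_prop
  have hφ0 : ∀ n s, 0 ≤ φ n s := fun n s => le_max_left _ _
  have hφ1 : ∀ n s, φ n s ≤ 1 := fun n s => max_le zero_le_one (min_le_left _ _)
  have hφl : ∀ n s, s ≤ t n / 8 → φ n s = 0 := by
    intro n s hs
    refine max_eq_left ((min_le_right _ _).trans ((min_le_left _ _).trans ?_))
    have : s / t n ≤ 1 / 8 := by
      rw [div_le_iff₀ (ht n)]; linarith
    linarith
  have hφr : ∀ n s, 2 * t n ≤ s → φ n s = 0 := by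
    intro n s hs
    refine max_eq_left ((min_le_right _ _).trans ((min_le_right _ _).trans ?_))
    have : 2 ≤ s / t n := by
      rw [le_div_iff₀ (ht n)]; linarith
    linarith
  have hφm : ∀ n s, t n / 5 < s → s < 5 / 4 * t n → φ n s = 1 := by
    intro n s h1 h2
    have h3 : 1 / 5 < s / t n := by rw [lt_div_iff₀ (ht n)]; linarith
    have h4 : s / t n < 5 / 4 := by rw [div_lt_iff₀ (ht n)]; linarith
    have : min 1 (min (16 * (s / t n - 1 / 8)) (2 * (2 - s / t n))) = 1 := by
      refine min_eq_left (le_min ?_ ?_) <;> linarith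
    simp only [φ, this]
    norm_num
  have huniq : ∀ n m s, φ n s ≠ 0 → m ≠ n → φ m s = 0 := by
    intro n m s hn hmn
    have h1 : t n / 8 < s := by
      by_contra hc; exact hn (hφl n s (not_lt.1 hc))
    have h2 : s < 2 * t n := by
      by_contra hc; exact hn (hφr n s (not_lt.1 hc))
    rcases lt_or_gt_of_ne hmn with h | h
    · apply hφl
      have := hanti (Nat.succ_le_of_lt h)
      have := htt m
      simp only [Nat.succ_eq_add_one] at *
      linarith
    · apply hφr
      have := hanti (Nat.succ_le_of_lt h)
      have := htt n
      simp only [Nat.succ_eq_add_one] at *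
      linarith
  let g : X → E := fun x => ∑' n, φ n (v x) • a n x
  have hg1 : ∀ x n, φ n (v x) ≠ 0 → g x = φ n (v x) • a n x := fun x n hn =>
    tsum_eq_single n fun m hm => by rw [huniq n m _ hn hm, zero_smul]
  have hg0 : ∀ x, (∀ n, φ n (v x) = 0) → g x = 0 := fun x h => by simp [g, h]
  have hgn : ∀ x n, φ n (v x) ≠ 0 → ‖g x‖ ≤ b n := by
    intro x n hn
    have h1 : t n / 8 < v x := by
      by_contra hc; exact hn (hφl n _ (not_lt.1 hc))
    have h2 : v x < 2 * t n := by
      by_contra hc; exact hn (hφr n _ (not_lt.1 hc))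
    rw [hg1 x n hn, norm_smul, Real.norm_of_nonneg (hφ0 _ _)]
    exact (mul_le_of_le_one_left (norm_nonneg _) (hφ1 _ _)).trans (hab n x h1.le h2.le)
  have hgb : ∀ x, ‖g x‖ ≤ M := by
    intro x
    by_cases h : ∀ n, φ n (v x) = 0
    · rw [hg0 x h]; simpa
    · push Not at h
      obtain ⟨n, hn⟩ := h
      exact (hgn x n hn).trans (hbM n)
  have hgc : Continuous g := by
    rw [continuous_iff_continuousAt]
    intro x0
    rcases (hv0 x0).eq_or_lt with h0 | hpos
    · have hb0 : Tendsto b atTop (𝓝 0) := hz.resolve_left (fun h => h x0 h0.symm)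
      have hgx0 : g x0 = 0 := hg0 x0 fun n => hφl n _ (by rw [← h0]; have := ht n; positivity)
      rw [ContinuousAt, hgx0, Metric.tendsto_nhds]
      intro ε hε
      obtain ⟨N, hN⟩ := eventually_atTop.1 (hb0.eventually (gt_mem_nhds hε))
      have : ∀ᶠ x in 𝓝 x0, v x < t N / 8 :=
        hv.continuousAt.eventually_lt continuousAt_const (by rw [← h0]; have := ht N; positivity)
      filter_upwards [this] with x hx
      rw [dist_zero_right]
      by_cases h : ∀ n, φ n (v x) = 0
      · rw [hg0 x h]; simpa
      · push Not at h
        obtain ⟨n, hn⟩ := h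
        refine (hgn x n hn).trans_lt (hN n ?_)
        by_contra hc
        apply hn
        apply hφl
        have := hanti (not_le.1 hc).le
        linarith
    · obtain ⟨N, hN⟩ := eventually_atTop.1
        (ht0.eventually (gt_mem_nhds (show (0:ℝ) < v x0 / 4 by positivity)))
      have hev : ∀ᶠ x in 𝓝 x0, v x0 / 2 < v x :=
        continuousAt_const.eventually_lt hv.continuousAt (by linarith)
      have hc : ContinuousAt (fun x => ∑ n ∈ Finset.range N, φ n (v x) • a n x) x0 := by
        refine Continuous.continuousAt ?_
        refine continuous_finsetSum _ fun n _ => ?_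
        exact ((hφc n).comp hv).smul (a n).continuous
      refine hc.congr ?_
      filter_upwards [hev] with x hx
      refine (tsum_eq_sum fun n hn => ?_).symm
      rw [hφr n, zero_smul]
      have := hN n (by simpa using hn)
      linarith
  refine ⟨BoundedContinuousFunction.ofNormedAddCommGroup g hgc M hgb, fun n x h1 h2 => ?_⟩
  have h3 := hφm n _ h1 h2
  change g x = a n x
  rw [hg1 x n (by rw [h3]; exact one_ne_zero), h3, one_smul]

theorem pts {K : Type} (v : K → ℝ) (P : ℕ → K → Prop)
    (h : ∀ n ε, 0 < ε → ∃ x, P n x ∧ 0 < v x ∧ v x < ε) :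
    ∃ x : ℕ → K, (∀ n, P n (x n) ∧ 0 < v (x n)) ∧ ∀ n, v (x (n + 1)) ≤ v (x n) / 16 := by
  have h' : ∀ n (s : {x : K // 0 < v x}), ∃ s' : {x : K // 0 < v x},
      P n s' ∧ v s' ≤ v s / 16 := by
    intro n s
    obtain ⟨x, h1, h2, h3⟩ := h n (v s / 16) (by have := s.2; positivity)
    exact ⟨⟨x, h2⟩, h1, h3.le⟩
  choose f hf1 hf2 using h'
  obtain ⟨x0, h1, h2, -⟩ := h 0 1 one_pos
  let s : ℕ → {x : K // 0 < v x} := fun n => Nat.rec ⟨x0, h2⟩ (fun k s => f (k + 1) s) n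
  refine ⟨fun n => (s n).1, fun n => ⟨?_, (s n).2⟩, fun n => hf2 (n + 1) (s n)⟩
  cases n with
  | zero => exact h1
  | succ k => exact hf1 (k + 1) (s k)

theorem locT [CompletelyRegularSpace X] (T : (X →ᵇ E) ≃+ (Y →ᵇ F))
    (h : StoneCech Y ≃ₜ StoneCech X) (hS : ∀ f q, h q ∈ SS f ↔ q ∈ SS (T f))
    (G a : X →ᵇ E) (x : X) (hx : ∀ᶠ x' in 𝓝 x, G x' = a x') :
    NN (T G - T a) (h.symm (stoneCechUnit x)) = 0 := by
  rw [← map_sub]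
  apply NN_zero_of_not_mem
  rw [← hS, h.apply_symm_apply, not_mem_SS_iff]
  rw [isInducing_stoneCechUnit.nhds_eq_comap, eventually_comap] at hx
  obtain ⟨O, h1, h2, h3⟩ := eventually_nhds_iff.1 hx
  exact ⟨O, h2, h3, fun x' hx' => by simp [h1 _ hx' x' rfl]⟩

theorem hS_symm (T : (X →ᵇ E) ≃+ (Y →ᵇ F))
    (h : StoneCech Y ≃ₜ StoneCech X) (hS : ∀ f q, h q ∈ SS f ↔ q ∈ SS (T f)) (g : Y →ᵇ F) (p) :
    h.symm p ∈ SS g ↔ p ∈ SS (T.symm g) := by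
  rw [← h.apply_symm_apply p, hS]
  simp

/-- functions vanishing at a point are sent to functions vanishing at the corresponding point -/
theorem stepA [CompletelyRegularSpace X] [NormedSpace ℝ E] [NormedSpace ℝ F]
    (T : (X →ᵇ E) ≃+ (Y →ᵇ F))
    (h : StoneCech Y ≃ₜ StoneCech X) (hS : ∀ f q, h q ∈ SS f ↔ q ∈ SS (T f))
    (f : X →ᵇ E) (q) (hf : NN f (h q) = 0) : NN (T f) q = 0 := by
  by_cases hp : h q ∈ SS f
  swap
  · exact NN_zero_of_not_mem _ _ (fun hq => hp ((hS f q).2 hq))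
  by_contra hne
  have hpos : 0 < NN (T f) q := lt_of_le_of_ne (NN_nonneg _ _) (Ne.symm hne)
  set δ := NN (T f) q / 2 with hδ
  have hδ0 : 0 < δ := by positivity
  obtain ⟨x, hx1, hx2⟩ := pts (fun x => ‖f x‖)
    (fun n x => δ < NN (T f) (h.symm (stoneCechUnit x)) ∧ ‖f x‖ < 1 / ((n:ℝ) + 1) ^ 2) (by
    intro n ε hε
    have hO : IsOpen ({p | δ < NN (T f) (h.symm p)} ∩ {p | NN f p < min ε (1 / ((n:ℝ) + 1) ^ 2)}) :=
      (isOpen_lt continuous_const ((NN_cont _).comp h.symm.continuous)).inter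
        (isOpen_lt (NN_cont _) continuous_const)
    obtain ⟨_, ⟨h1, h2⟩, x, hx, rfl⟩ := mem_closure_iff.1 hp _ hO ⟨by
      simp only [mem_ofPred_eq, h.symm_apply_apply]; linarith, by
      simp only [mem_ofPred_eq, hf]; positivity⟩
    simp only [mem_ofPred_eq, NN_unit, lt_min_iff] at h1 h2
    exact ⟨x, ⟨h1, h2.2⟩, norm_pos_iff.2 hx, h2.1⟩)
  have hb : ∀ n : ℕ, (n:ℝ) * (2 * ‖f (x n)‖) ≤ 2 * (1 / ((n:ℝ) + 1)) := by
    intro n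
    have h1 := (hx1 n).1.2.le
    have h2 : (n:ℝ) * ‖f (x n)‖ ≤ ((n:ℝ) + 1) * (1 / ((n:ℝ) + 1) ^ 2) :=
      mul_le_mul (by linarith) h1 (norm_nonneg _) (by positivity)
    have h3 : ((n:ℝ) + 1) * (1 / ((n:ℝ) + 1) ^ 2) = 1 / ((n:ℝ) + 1) := by
      field_simp
    linarith
  obtain ⟨G, hG⟩ := glue (fun x => ‖f x‖) f.continuous.norm (fun _ => norm_nonneg _)
    (fun n => ‖f (x n)‖) (fun n => (hx1 n).2) hx2 (fun n => n • f)
    (fun n => 2 * (1 / ((n:ℝ) + 1))) 2 (by norm_num) (fun n => by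
      have : 1 / ((n:ℝ) + 1) ≤ 1 := by
        rw [div_le_one (by positivity)]; linarith [(Nat.cast_nonneg n : (0:ℝ) ≤ n)]
      linarith) (fun n z _ hz => by
      refine le_trans ?_ (hb n)
      rw [BoundedContinuousFunction.coe_nsmul, Pi.smul_apply, ← Nat.cast_smul_eq_nsmul ℝ,
        norm_smul, Real.norm_natCast]
      gcongr) (Or.inr (by
      have := (tendsto_one_div_add_atTop_nhds_zero_nat (𝕜 := ℝ)).const_mul 2
      simpa using this))
  obtain ⟨n, hn⟩ := exists_nat_gt (‖T G‖ / δ)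
  have hev : ∀ᶠ x' in 𝓝 (x n), G x' = (n • f) x' := by
    have hc : ContinuousAt (fun x => ‖f x‖) (x n) := f.continuous.norm.continuousAt
    have hp := (hx1 n).2
    filter_upwards [hc.eventually_lt (continuousAt_const (y := 5 / 4 * ‖f (x n)‖)) (by linarith),
      (continuousAt_const (y := ‖f (x n)‖ / 5)).eventually_lt hc (by linarith)] with z h1 h2
    exact hG n z h2 h1
  have h1 := NN_eq_of_sub _ _ _ (locT T h hS G (n • f) (x n) hev)
  rw [map_nsmul, NN_nsmul] at h1
  have h2 := NN_le (T G) (h.symm (stoneCechUnit (x n)))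
  have h3 := (hx1 n).1.1
  rw [div_lt_iff₀ hδ0] at hn
  have h4 : (n:ℝ) * δ ≤ n * NN (T f) (h.symm (stoneCechUnit (x n))) := by gcongr
  linarith

end glue

section final
open Set
variable {X Y E F : Type} [TopologicalSpace X] [TopologicalSpace Y]
  [NormedAddCommGroup E] [NormedAddCommGroup F]

theorem comap_neBot (p : StoneCech X) : (comap (stoneCechUnit : X → StoneCech X) (𝓝 p)).NeBot := by
  rw [comap_neBot_iff]
  intro s hs
  obtain ⟨O, h1, h2, h3⟩ := mem_nhds_iff.1 hs
  obtain ⟨x, hx⟩ := exists_unit h2 h3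
  exact ⟨x, h1 hx⟩

theorem realcompact_fun (hX : Realcompact X) (p : StoneCech X)
    (hp : ∀ x, p ≠ stoneCechUnit x) :
    ∃ u : StoneCech X → ℝ, Continuous u ∧ u p = 0 ∧ ∀ x, 0 < u (stoneCechUnit x) := by
  obtain ⟨ι, e, he⟩ := hX
  by_contra! hcon
  have := comap_neBot p
  have hei : ∀ i, Continuous fun x => e x i := fun i => (continuous_apply i).comp he.continuous
  have hlim : ∀ i, ∃ z, Tendsto (fun x => e x i) (comap (stoneCechUnit : X → StoneCech X) (𝓝 p))
      (𝓝 z) := by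
    intro i
    have hpos : ∀ x, 0 < 1 + |e x i| := fun x => by positivity
    obtain ⟨U, hU, hUe⟩ := ext_exists (fun x => 1 / (1 + |e x i|))
      (continuous_const.div (continuous_const.add (hei i).abs) fun x => (hpos x).ne') 1
      (fun x => ⟨by positivity, by
        rw [div_le_one (hpos x)]; linarith [abs_nonneg (e x i)]⟩)
    obtain ⟨V, hV, hVe⟩ := ext_exists (fun x => e x i / (1 + |e x i|) + 1)
      (((hei i).div (continuous_const.add (hei i).abs) fun x => (hpos x).ne').add
        continuous_const) 2
      (fun x => by
        have h1 : e x i / (1 + |e x i|) ≤ 1 := by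
          rw [div_le_one (hpos x)]; linarith [le_abs_self (e x i)]
        have h2 : -1 ≤ e x i / (1 + |e x i|) := by
          rw [le_div_iff₀ (hpos x)]; linarith [neg_abs_le (e x i)]
        constructor <;> linarith)
    have hUp : U p ≠ 0 := by
      intro h0
      obtain ⟨x, hx⟩ := hcon U hU h0
      rw [hUe] at hx
      have : 0 < 1 / (1 + |e x i|) := by positivity
      linarith
    refine ⟨(V p - 1) / U p, ?_⟩
    have h1 : Tendsto (fun q => (V q - 1) / U q) (𝓝 p) (𝓝 ((V p - 1) / U p)) :=
      ((hV.tendsto p).sub_const 1).div (hU.tendsto p) hUp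
    refine (h1.comp tendsto_comap).congr fun x => ?_
    have := (hpos x).ne'
    simp only [Function.comp, hUe, hVe]
    field_simp
    ring
  choose z hz using hlim
  have hz' : Tendsto e (comap (stoneCechUnit : X → StoneCech X) (𝓝 p)) (𝓝 z) :=
    tendsto_pi_nhds.2 hz
  obtain ⟨x0, hx0⟩ : z ∈ range e := he.isClosed_range.mem_of_tendsto hz'
    (Eventually.of_forall fun x => mem_range_self x)
  have h1 : Tendsto id (comap (stoneCechUnit : X → StoneCech X) (𝓝 p)) (𝓝 x0) := by
    rw [he.isInducing.tendsto_nhds_iff, hx0]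
    exact hz'
  have h2 := (continuous_stoneCechUnit.tendsto x0).comp h1
  exact hp x0 (tendsto_nhds_unique (f := stoneCechUnit) tendsto_comap h2)

theorem stepC [CompletelyRegularSpace X] [CompletelyRegularSpace Y]
    [NormedSpace ℝ E] [NormedSpace ℝ F]
    (T : (X →ᵇ E) ≃+ (Y →ᵇ F)) (hom : ∀ (c : ℝ) f, T (c • f) = c • T f)
    (h : StoneCech Y ≃ₜ StoneCech X) (hS : ∀ f q, h q ∈ SS f ↔ q ∈ SS (T f))
    (y : Y) (u : StoneCech X → ℝ) (hu : Continuous u) (hu0 : u (h (stoneCechUnit y)) = 0)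
    (hup : ∀ x, 0 < u (stoneCechUnit x)) :
    ∃ c, 0 < c ∧ ∀ e : E, c * ‖e‖ ≤ ‖T (BoundedContinuousFunction.const X e) y‖ := by
  by_contra! hcon
  have hex : ∀ n : ℕ, ∃ e : E, ‖e‖ = n + 1 ∧
      ‖T (BoundedContinuousFunction.const X e) y‖ ≤ 1 / ((n:ℝ) + 1) := by
    intro n
    obtain ⟨e, he⟩ := hcon (1 / ((n:ℝ) + 1) ^ 2) (by positivity)
    have hne : 0 < ‖e‖ := by
      by_contra hc
      have : ‖e‖ = 0 := le_antisymm (not_lt.1 hc) (norm_nonneg _)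
      rw [this, mul_zero] at he
      exact absurd he (not_lt.2 (norm_nonneg _))
    refine ⟨(((n:ℝ) + 1) / ‖e‖) • e, ?_, ?_⟩
    · rw [norm_smul, Real.norm_of_nonneg (by positivity)]
      field_simp
    · have h1 : BoundedContinuousFunction.const X ((((n:ℝ) + 1) / ‖e‖) • e) =
          (((n:ℝ) + 1) / ‖e‖) • BoundedContinuousFunction.const X e := rfl
      rw [h1, hom, BoundedContinuousFunction.smul_apply, norm_smul,
        Real.norm_of_nonneg (by positivity)]
      calc _ ≤ (((n:ℝ) + 1) / ‖e‖) * (1 / ((n:ℝ) + 1) ^ 2 * ‖e‖) := by gcongr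
        _ = _ := by field_simp
  choose e he1 he2 using hex
  set w : ℕ → F := fun n => T (BoundedContinuousFunction.const X (e n)) y with hw
  have hN : ∀ n : ℕ, NN (T.symm (BoundedContinuousFunction.const Y (w n)))
      (h (stoneCechUnit y)) = n + 1 := by
    intro n
    have := stepA T.symm h.symm (hS_symm T h hS)
      (T (BoundedContinuousFunction.const X (e n)) - BoundedContinuousFunction.const Y (w n))
      (h (stoneCechUnit y)) (by simp [hw])
    rw [map_sub, T.symm_apply_apply] at this
    rw [← NN_eq_of_sub _ _ _ this, NN_const, he1]
  have hvc : Continuous fun y' : Y => u (h (stoneCechUnit y')) :=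
    hu.comp (h.continuous.comp continuous_stoneCechUnit)
  obtain ⟨z, hz1, hz2⟩ := pts (fun y' : Y => u (h (stoneCechUnit y')))
    (fun n y' => (n:ℝ) < NN (T.symm (BoundedContinuousFunction.const Y (w n)))
      (h (stoneCechUnit y'))) (by
    intro n ε hε
    have hO : IsOpen ({p | (n:ℝ) < NN (T.symm (BoundedContinuousFunction.const Y (w n))) p} ∩
        {p | u p < ε}) :=
      (isOpen_lt continuous_const (NN_cont _)).inter (isOpen_lt hu continuous_const)
    obtain ⟨x, hx1, hx2⟩ := exists_unit hO (p := h (stoneCechUnit y))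
      ⟨by simp only [mem_ofPred_eq, hN]; linarith, by simp only [mem_ofPred_eq, hu0]; exact hε⟩
    have hO' := (hO.inter (isOpen_lt continuous_const hu : IsOpen {p | 0 < u p})).preimage
      h.continuous
    obtain ⟨y', ⟨h1, h2⟩, h3⟩ := exists_unit hO' (p := h.symm (stoneCechUnit x)) (by
      rw [mem_preimage, h.apply_symm_apply]
      exact ⟨⟨hx1, hx2⟩, hup x⟩)
    exact ⟨y', h1, h3, h2⟩)
  have hu_nn : ∀ p, 0 ≤ u p := le_of_unit continuous_const hu (fun x => (hup x).le)
  obtain ⟨G, hG⟩ := glue (fun y' : Y => u (h (stoneCechUnit y'))) hvc (fun _ => hu_nn _)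
    (fun n => u (h (stoneCechUnit (z n)))) (fun n => (hz1 n).2) hz2
    (fun n => BoundedContinuousFunction.const Y (w n)) (fun n => 1 / ((n:ℝ) + 1)) 1 zero_le_one
    (fun n => by
      rw [div_le_one (by positivity)]; linarith [(Nat.cast_nonneg n : (0:ℝ) ≤ n)])
    (fun n y' _ _ => he2 n) (Or.inr tendsto_one_div_add_atTop_nhds_zero_nat)
  obtain ⟨n, hn⟩ := exists_nat_gt ‖T.symm G‖
  have hev : ∀ᶠ y' in 𝓝 (z n), G y' = BoundedContinuousFunction.const Y (w n) y' := by
    have hc := hvc.continuousAt (x := z n)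
    have hp := (hz1 n).2
    filter_upwards [hc.eventually_lt
        (continuousAt_const (y := 5 / 4 * u (h (stoneCechUnit (z n))))) (by linarith),
      (continuousAt_const (y := u (h (stoneCechUnit (z n))) / 5)).eventually_lt hc
        (by linarith)] with y' h1 h2
    exact hG n y' h2 h1
  have h1 := NN_eq_of_sub _ _ _ (locT T.symm h.symm (hS_symm T h hS) G _ (z n) hev)
  have h2 := NN_le (T.symm G) (h.symm.symm (stoneCechUnit (z n)))
  have h3 := (hz1 n).1
  rw [h1] at h2
  simp only [Homeomorph.symm_symm] at h2
  linarith

theorem stepD_aux [CompletelyRegularSpace X]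
    [NormedSpace ℝ E]
    (T : (X →ᵇ E) ≃+ (Y →ᵇ F))
    (h : StoneCech Y ≃ₜ StoneCech X) (hS : ∀ f q, h q ∈ SS f ↔ q ∈ SS (T f))
    (y : Y) (u : StoneCech X → ℝ) (hu : Continuous u) (hu0 : u (h (stoneCechUnit y)) = 0)
    (hup : ∀ x, 0 < u (stoneCechUnit x)) (c : ℝ) (hc : 0 < c)
    (hce : ∀ e : E, c * ‖e‖ ≤ ‖T (BoundedContinuousFunction.const X e) y‖)
    (e : ℕ → E) (R : ℝ) (hR : ∀ n, ‖e n‖ ≤ R) (hsep : Pairwise fun m n => 1 ≤ ‖e m - e n‖)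
    (hd : ∀ n p, (1 / 2 : ℝ) ^ n * min 1 (NN (T (BoundedContinuousFunction.const X (e n)) -
      BoundedContinuousFunction.const Y (T (BoundedContinuousFunction.const X (e n)) y))
        (h.symm p)) ≤ u p)
    (t : ℕ → ℝ) (ht : ∀ n, 0 < t n) (htt : ∀ n, t (n + 1) ≤ t n / 16)
    (ht1 : ∀ n, t n ≤ (1 / 16) ^ n) :
    ¬ ∃ᶠ x in comap (stoneCechUnit : X → StoneCech X) (𝓝 (h (stoneCechUnit y))),
      ∃ n, t n / 5 < u (stoneCechUnit x) ∧ u (stoneCechUnit x) < 5 / 4 * t n := by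
  intro hfreq
  have hanti : Antitone t := antitone_nat_of_succ_le fun n => by
    have := htt n; have := ht n; linarith
  have hvc : Continuous fun x : X => u (stoneCechUnit x) := hu.comp continuous_stoneCechUnit
  obtain ⟨G, hG⟩ := glue (fun x : X => u (stoneCechUnit x)) hvc (fun x => (hup x).le) t ht htt
    (fun n => BoundedContinuousFunction.const X (e n)) (fun _ => R) R
    ((norm_nonneg _).trans (hR 0)) (fun _ => le_rfl) (fun n x _ _ => hR n)
    (Or.inl fun x => (hup x).ne')
  set w : ℕ → F := fun n => T (BoundedContinuousFunction.const X (e n)) y with hw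
  set w0 : F := T G y with hw0
  have hA : ∀ᶠ x in comap (stoneCechUnit : X → StoneCech X) (𝓝 (h (stoneCechUnit y))),
      NN (T G - BoundedContinuousFunction.const Y w0) (h.symm (stoneCechUnit x)) < c / 4 := by
    have hcont : Continuous fun p =>
      NN (T G - BoundedContinuousFunction.const Y w0) (h.symm p) :=
      (NN_cont _).comp h.symm.continuous
    have : ∀ᶠ p in 𝓝 (h (stoneCechUnit y)),
        NN (T G - BoundedContinuousFunction.const Y w0) (h.symm p) < c / 4 := by
      refine hcont.continuousAt.eventually_lt continuousAt_const ?_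
      rw [h.symm_apply_apply]
      simp [hw0, hc]
    exact tendsto_comap.eventually this
  have hB : ∀ η : ℝ, 0 < η →
      ∀ᶠ x in comap (stoneCechUnit : X → StoneCech X) (𝓝 (h (stoneCechUnit y))),
      u (stoneCechUnit x) < η := by
    intro η hη
    have : ∀ᶠ p in 𝓝 (h (stoneCechUnit y)), u p < η :=
      hu.continuousAt.eventually_lt continuousAt_const (by rw [hu0]; exact hη)
    exact tendsto_comap.eventually this
  obtain ⟨N0, hN0⟩ : ∃ N0 : ℕ, ∀ n ≥ N0, 5 / 4 * (1 / 8 : ℝ) ^ n < min 1 (c / 4) := by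
    have := (tendsto_pow_atTop_nhds_zero_of_lt_one (r := (1 / 8 : ℝ)) (by norm_num)
      (by norm_num)).const_mul (5 / 4)
    rw [mul_zero] at this
    exact eventually_atTop.1 (this.eventually (gt_mem_nhds (by positivity)))
  have key : ∀ m, ∃ n, m < n ∧ ‖w n - w0‖ < c / 2 := by
    intro m
    obtain ⟨x, ⟨n, hn1, hn2⟩, hxA, hxB⟩ :=
      (hfreq.and_eventually (hA.and (hB (t (max m N0) / 5) (by
        have := ht (max m N0); positivity)))).exists
    have hn : max m N0 < n := by
      by_contra hcon
      have := hanti (not_lt.1 hcon)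
      linarith
    refine ⟨n, (le_max_left _ _).trans_lt hn, ?_⟩
    have hnN : N0 ≤ n := (le_max_right m N0).trans hn.le
    have hev : ∀ᶠ x' in 𝓝 x, G x' = BoundedContinuousFunction.const X (e n) x' := by
      have hcx := hvc.continuousAt (x := x)
      filter_upwards [hcx.eventually_lt (continuousAt_const (y := 5 / 4 * t n)) hn2,
        (continuousAt_const (y := t n / 5)).eventually_lt hcx hn1] with x' h1 h2
      exact hG n x' h2 h1
    have h1 := locT T h hS G _ x hev
    have h2 : NN (T (BoundedContinuousFunction.const X (e n)) -
        BoundedContinuousFunction.const Y (w n)) (h.symm (stoneCechUnit x)) < c / 4 := by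
      have h3 := hd n (stoneCechUnit x)
      have h4 : (1 / 2 : ℝ) ^ n * min 1 (NN (T (BoundedContinuousFunction.const X (e n)) -
        BoundedContinuousFunction.const Y (w n)) (h.symm (stoneCechUnit x)))
          < (1 / 2 : ℝ) ^ n * min 1 (c / 4) := by
        calc _ ≤ u (stoneCechUnit x) := h3
          _ < 5 / 4 * t n := hn2
          _ ≤ 5 / 4 * (1 / 16) ^ n := by have := ht1 n; linarith
          _ = (1 / 2 : ℝ) ^ n * (5 / 4 * (1 / 8) ^ n) := by
            rw [show (1 / 16 : ℝ) = 1 / 2 * (1 / 8) by norm_num, mul_pow]; ring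
          _ < _ := by have := hN0 n hnN; gcongr
      have h5 := lt_of_mul_lt_mul_left h4 (by positivity)
      by_contra hcon
      have := min_le_min_left 1 (not_lt.1 hcon)
      linarith
    have h3 := NN_tri3 (BoundedContinuousFunction.const Y (w n))
      (T (BoundedContinuousFunction.const X (e n)))
      (BoundedContinuousFunction.const Y w0) (h.symm (stoneCechUnit x))
    have h4 := NN_tri3 (T (BoundedContinuousFunction.const X (e n))) (T G)
      (BoundedContinuousFunction.const Y w0) (h.symm (stoneCechUnit x))
    rw [NN_symm (BoundedContinuousFunction.const Y (w n))] at h3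
    rw [NN_symm _ (T G)] at h4
    have h5 : BoundedContinuousFunction.const Y (w n) - BoundedContinuousFunction.const Y w0
      = BoundedContinuousFunction.const Y (w n - w0) := rfl
    rw [← NN_const (w n - w0) (h.symm (stoneCechUnit x)), ← h5,
      NN_symm (BoundedContinuousFunction.const Y (w n))]
    rw [NN_symm (BoundedContinuousFunction.const Y w0)]
    have h6 := NN_tri3 (BoundedContinuousFunction.const Y (w n))
      (T (BoundedContinuousFunction.const X (e n)))
      (BoundedContinuousFunction.const Y w0) (h.symm (stoneCechUnit x))
    rw [NN_symm _ (T (BoundedContinuousFunction.const X (e n)))] at h6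
    linarith
  obtain ⟨n, -, hn⟩ := key 0
  obtain ⟨m, hnm, hm⟩ := key n
  have h1 := hce (e n - e m)
  have h2 : BoundedContinuousFunction.const X (e n - e m) =
    BoundedContinuousFunction.const X (e n) - BoundedContinuousFunction.const X (e m) := rfl
  rw [h2, map_sub, BoundedContinuousFunction.sub_apply] at h1
  have h3 := hsep hnm.ne
  have h4 : ‖w n - w m‖ ≤ ‖w n - w0‖ + ‖w m - w0‖ := by
    rw [norm_sub_rev (w m)]
    exact norm_sub_le_norm_sub_add_norm_sub _ _ _
  have h5 : c * 1 ≤ c * ‖e n - e m‖ := by gcongr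
  simp only [hw] at h4 hn hm
  linarith

theorem stepD [CompletelyRegularSpace X] [CompletelyRegularSpace Y]
    [NormedSpace ℝ E] [NormedSpace ℝ F] (hX : Realcompact X)
    (T : (X →ᵇ E) ≃+ (Y →ᵇ F)) (hom : ∀ (c : ℝ) f, T (c • f) = c • T f)
    (h : StoneCech Y ≃ₜ StoneCech X) (hS : ∀ f q, h q ∈ SS f ↔ q ∈ SS (T f))
    (e : ℕ → E) (R : ℝ) (hR : ∀ n, ‖e n‖ ≤ R) (hsep : Pairwise fun m n => 1 ≤ ‖e m - e n‖)
    (y : Y) : ∃ x, h (stoneCechUnit y) = stoneCechUnit x := by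
  by_contra! hcon
  obtain ⟨u, hu, hu0, hup⟩ := realcompact_fun hX _ hcon
  obtain ⟨c, hc, hce⟩ := stepC T hom h hS y u hu hu0 hup
  have hu_nn : ∀ p, 0 ≤ u p := le_of_unit continuous_const hu (fun x => (hup x).le)
  let d : ℕ → StoneCech X → ℝ := fun n p => (1 / 2 : ℝ) ^ n *
    min 1 (NN (T (BoundedContinuousFunction.const X (e n)) -
      BoundedContinuousFunction.const Y (T (BoundedContinuousFunction.const X (e n)) y))
        (h.symm p))
  have hdc : ∀ n, Continuous (d n) := fun n =>
    continuous_const.mul (continuous_const.min ((NN_cont _).comp h.symm.continuous))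
  have hd0 : ∀ n p, 0 ≤ d n p := fun n p =>
    mul_nonneg (by positivity) (le_min zero_le_one (NN_nonneg _ _))
  have hd1 : ∀ n p, d n p ≤ (1 / 2 : ℝ) ^ n := fun n p =>
    mul_le_of_le_one_right (by positivity) (min_le_left _ _)
  have hdp : ∀ n, d n (h (stoneCechUnit y)) = 0 := fun n => by simp [d]
  have hsg : Summable fun n : ℕ => (1 / 2 : ℝ) ^ n := summable_geometric_two
  have hsum : ∀ p, Summable fun n => d n p := fun p =>
    Summable.of_nonneg_of_le (fun n => hd0 n p) (fun n => hd1 n p) hsg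
  have htc : Continuous fun p => ∑' n, d n p := by
    refine continuous_tsum hdc hsg fun n p => ?_
    rw [Real.norm_of_nonneg (hd0 n p)]
    exact hd1 n p
  have ht0 : ∀ p, 0 ≤ ∑' n, d n p := fun p => tsum_nonneg fun n => hd0 n p
  have hle : ∀ n p, d n p ≤ u p + ∑' n, d n p := fun n p => by
    have := (hsum p).le_tsum n (fun j _ => hd0 j p)
    linarith [hu_nn p]
  have hu'0 : u (h (stoneCechUnit y)) + ∑' n, d n (h (stoneCechUnit y)) = 0 := by
    simp [hdp, hu0]
  have hu'p : ∀ x, 0 < u (stoneCechUnit x) + ∑' n, d n (stoneCechUnit x) := fun x => by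
    linarith [hup x, ht0 (stoneCechUnit x)]
  have aux := stepD_aux T h hS y (fun p => u p + ∑' n, d n p) (hu.add htc) hu'0 hu'p c hc hce
    e R hR hsep hle
  have a1 := aux (fun n => (1 / 4 : ℝ) ^ (2 * n)) (fun n => by positivity)
    (fun n => by rw [show 2 * (n + 1) = 2 * n + 2 by ring, pow_add]; norm_num; linarith)
    (fun n => by rw [pow_mul]; norm_num)
  have a2 := aux (fun n => (1 / 4 : ℝ) ^ (2 * n + 1)) (fun n => by positivity)
    (fun n => by rw [show 2 * (n + 1) + 1 = 2 * n + 1 + 2 by ring, pow_add]; norm_num; linarith)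
    (fun n => by
      rw [pow_succ, pow_mul]; norm_num)
  rw [not_frequently] at a1 a2
  have hB : ∀ᶠ x in comap (stoneCechUnit : X → StoneCech X) (𝓝 (h (stoneCechUnit y))),
      u (stoneCechUnit x) + ∑' n, d n (stoneCechUnit x) < 1 := by
    have : ∀ᶠ p in 𝓝 (h (stoneCechUnit y)), u p + ∑' n, d n p < 1 :=
      (hu.add htc).continuousAt.eventually_lt continuousAt_const (by
        exact hu'0.trans_lt one_pos)
    exact tendsto_comap.eventually this
  have := comap_neBot (h (stoneCechUnit y))
  obtain ⟨x, h1, h2, h3⟩ := (a1.and (a2.and hB)).exists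
  obtain ⟨m, hm1, hm2⟩ := exists_nat_pow_near_of_lt_one (hu'p x) h3.le
    (show (0:ℝ) < 1 / 4 by norm_num) (by norm_num)
  have hpos : (0:ℝ) < (1 / 4) ^ m := by positivity
  rw [pow_succ] at hm1
  rcases Nat.even_or_odd' m with ⟨n, rfl | rfl⟩
  · exact h1 ⟨n, by linarith, by linarith⟩
  · exact h2 ⟨n, by linarith, by linarith⟩

end final

theorem stmt4 {𝕂 X Y E F : Type} [RCLike 𝕂]
    [TopologicalSpace X] [CompletelyRegularSpace X] [T2Space X]
    [TopologicalSpace Y] [CompletelyRegularSpace Y] [T2Space Y]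
    [NormedAddCommGroup E] [NormedSpace 𝕂 E]
    [NormedAddCommGroup F] [NormedSpace 𝕂 F]
    (hE : ¬ FiniteDimensional 𝕂 E) (hF : ¬ FiniteDimensional 𝕂 F)
    (hX : Realcompact X) (hY : Realcompact Y)
    (T : (X →ᵇ E) ≃ₗ[𝕂] (Y →ᵇ F)) (hT : SeparatingB ⇑T) (hT' : SeparatingB ⇑T.symm) :
    ∃ (h : Y ≃ₜ X) (J : Y → (E ≃ₗ[𝕂] F)),
      ∀ (f : X →ᵇ E) (y : Y), T f y = J y (f (h y)) := by
  let _ : NormedSpace ℝ E := NormedSpace.restrictScalars ℝ 𝕂 E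
  let _ : NormedSpace ℝ F := NormedSpace.restrictScalars ℝ 𝕂 F
  obtain ⟨R, e, -, hR, hsep⟩ := exists_seq_norm_le_one_le_norm_sub hE
  obtain ⟨R', e', -, hR', hsep'⟩ := exists_seq_norm_le_one_le_norm_sub hF
  have hEn : ∃ a : E, a ≠ 0 := by
    refine ⟨e 0 - e 1, fun h0 => ?_⟩
    have := hsep (show (0:ℕ) ≠ 1 by norm_num)
    simp only [h0, norm_zero] at this
    linarith
  have hFn : ∃ a : F, a ≠ 0 := by
    refine ⟨e' 0 - e' 1, fun h0 => ?_⟩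
    have := hsep' (show (0:ℕ) ≠ 1 by norm_num)
    simp only [h0, norm_zero] at this
    linarith
  obtain ⟨a, ha⟩ := hEn
  obtain ⟨b, hb⟩ := hFn
  have hs : SepA T.toAddEquiv := fun f g hfg y => by
    have := hT f g (fun x => by rcases hfg x with h | h <;> simp [h]) y
    simpa [mul_eq_zero] using this
  have hs' : SepA T.toAddEquiv.symm := fun f g hfg y => by
    have := hT' f g (fun x => by rcases hfg x with h | h <;> simp [h]) y
    rw [mul_eq_zero, norm_eq_zero, norm_eq_zero] at this
    exact this
  have hom : ∀ (c : ℝ) f, T.toAddEquiv (c • f) = c • T.toAddEquiv f := fun c f =>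
    T.map_smul (algebraMap ℝ 𝕂 c) f
  have hom' : ∀ (c : ℝ) f, T.toAddEquiv.symm (c • f) = c • T.toAddEquiv.symm f := fun c f =>
    T.symm.map_smul (algebraMap ℝ 𝕂 c) f
  obtain ⟨H, hS⟩ := homeo_exists T.toAddEquiv hs hs' a ha b hb
  have hS' := hS_symm T.toAddEquiv H hS
  choose h hh using stepD hX T.toAddEquiv hom H hS e R hR hsep
  choose k hk using stepD hY T.toAddEquiv.symm hom' H.symm hS' e' R' hR' hsep'
  have : T35Space X := { }
  have : T35Space Y := { }
  have embX : IsEmbedding (stoneCechUnit : X → StoneCech X) := isEmbedding_stoneCechUnit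
  have embY : IsEmbedding (stoneCechUnit : Y → StoneCech Y) := isEmbedding_stoneCechUnit
  have hc : Continuous h := by
    rw [embX.continuous_iff]
    exact (H.continuous.comp continuous_stoneCechUnit).congr hh
  have kc : Continuous k := by
    rw [embY.continuous_iff]
    exact (H.symm.continuous.comp continuous_stoneCechUnit).congr hk
  let hom : Y ≃ₜ X :=
    { toFun := h
      invFun := k
      left_inv := fun y => embY.injective (by rw [← hk, ← hh, H.symm_apply_apply])
      right_inv := fun x => embX.injective (by rw [← hh, ← hk, H.apply_symm_apply])
      continuous_toFun := hc
      continuous_invFun := kc }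
  let J0 : Y → (E →ₗ[𝕂] F) := fun y =>
    { toFun := fun v => T (BoundedContinuousFunction.const X v) y
      map_add' := fun v w => by
        have : BoundedContinuousFunction.const X (v + w) =
          BoundedContinuousFunction.const X v + BoundedContinuousFunction.const X w := rfl
        rw [this, map_add]; rfl
      map_smul' := fun c v => by
        have : BoundedContinuousFunction.const X (c • v) =
          c • BoundedContinuousFunction.const X v := rfl
        rw [this, map_smul]; rfl }
  have hJ : ∀ f y, T f y = J0 y (f (h y)) := by
    intro f y
    have h1 := stepA T.toAddEquiv H hS (f - BoundedContinuousFunction.const X (f (h y)))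
      (stoneCechUnit y) (by rw [hh]; simp)
    rw [map_sub, NN_unit, norm_eq_zero, BoundedContinuousFunction.sub_apply, sub_eq_zero] at h1
    exact h1
  have hbij : ∀ y, Function.Bijective (J0 y) := by
    intro y
    constructor
    · rw [injective_iff_map_eq_zero]
      intro v hv
      have h1 := stepA T.toAddEquiv.symm H.symm hS' (T (BoundedContinuousFunction.const X v))
        (H (stoneCechUnit y)) (by
          rw [H.symm_apply_apply, NN_unit, norm_eq_zero]; exact hv)
      have h2 : T.toAddEquiv.symm (T (BoundedContinuousFunction.const X v)) =
        BoundedContinuousFunction.const X v := T.symm_apply_apply _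
      rw [h2, NN_const, norm_eq_zero] at h1
      exact h1
    · intro w
      refine ⟨T.symm (BoundedContinuousFunction.const Y w) (h y), ?_⟩
      rw [← hJ, T.apply_symm_apply]
      rfl
  exact ⟨hom, fun y => LinearEquiv.ofBijective (J0 y) (hbij y), fun f y => hJ f y⟩
end

section
/- Let X and Y be realcompact completely regular Hausdorff topological spaces, let E and F be nonzero normed spaces over 𝕂 with E finite-dimensional, let T : C(X,E) → C(Y,F) be a 𝕂-linear biseparating map, and for each y ∈ Y define J_y : E → F by J_y(e) = (T ê)(y). Then each J_y is a continuous 𝕂-linear bijection from E onto F, and the map y ↦ J_y is continuous from Y into the space of continuous linear bijections from E onto F endowed with the strong operator topology; equivalently, for each e ∈ E the map y ↦ J_y(e) is continuous on Y. -/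
open Filter Topology

namespace BisepAux

section

variable {𝕂 X Y E F : Type} [RCLike 𝕂]
    [TopologicalSpace X] [TopologicalSpace Y]
    [NormedAddCommGroup E] [NormedSpace 𝕂 E]
    [NormedAddCommGroup F] [NormedSpace 𝕂 F]

/-- Multiplication by a real-valued continuous function. -/
noncomputable def sm (𝕂 : Type) [RCLike 𝕂] [NormedSpace 𝕂 E] (χ : C(X, ℝ)) (f : C(X, E)) :
    C(X, E) :=
  ⟨fun x => ((χ x : ℝ) : 𝕂) • f x,
    (RCLike.continuous_ofReal.comp χ.continuous).smul f.continuous⟩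

@[simp] lemma sm_apply (χ : C(X, ℝ)) (f : C(X, E)) (x : X) :
    sm 𝕂 χ f x = ((χ x : ℝ) : 𝕂) • f x := rfl

/-- Ramp function: `0` for `t ≤ a`, `1` for `t ≥ b`. -/
noncomputable def ramp (a b : ℝ) : C(ℝ, ℝ) :=
  ⟨fun t => max 0 (min 1 ((t - a) / (b - a))), by fun_prop⟩

lemma ramp_zero {a b t : ℝ} (h : a < b) (ht : t ≤ a) : ramp a b t = 0 := by
  have : (t - a) / (b - a) ≤ 0 := div_nonpos_of_nonpos_of_nonneg (by linarith) (by linarith)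
  simp only [ramp, ContinuousMap.coe_mk]
  exact max_eq_left (le_trans (min_le_right _ _) this)

lemma ramp_one {a b t : ℝ} (h : a < b) (ht : b ≤ t) : ramp a b t = 1 := by
  have : 1 ≤ (t - a) / (b - a) := by
    rw [le_div_iff₀ (by linarith)]; linarith
  simp only [ramp, ContinuousMap.coe_mk]
  rw [min_eq_left this]; norm_num

/-- A single staircase. -/
lemma exists_stair : ∃ ρ : C(ℝ, ℝ), (∀ u, u ≤ ρ u ∧ ρ u ≤ u + 1) ∧
    ∀ u, 1 / 3 < Int.fract u → ∀ᶠ v in 𝓝 u, ρ v = ρ u := by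
  have hc : Continuous ((fun t : ℝ => min 1 (3 * t) - t) ∘ Int.fract) := by
    apply ContinuousOn.comp_fract''
    · fun_prop
    · norm_num
  refine ⟨⟨fun u => u + ((fun t : ℝ => min 1 (3 * t) - t) ∘ Int.fract) u,
    continuous_id.add hc⟩, ?_, ?_⟩
  · intro u
    have h0 := Int.fract_nonneg u
    have h1 := (Int.fract_lt_one u).le
    simp only [ContinuousMap.coe_mk, Function.comp]
    have h2 : Int.fract u ≤ min 1 (3 * Int.fract u) := le_min h1 (by linarith)
    have h3 := min_le_left 1 (3 * Int.fract u)
    constructor <;> linarith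
  · intro u hu
    have key : ∀ v : ℝ, (⌊u⌋ : ℝ) + 1 / 3 < v → v < ⌊u⌋ + 1 →
        v + (min 1 (3 * Int.fract v) - Int.fract v) = ⌊u⌋ + 1 := by
      intro v h1 h2
      have hf : ⌊v⌋ = ⌊u⌋ := by
        rw [Int.floor_eq_iff]; constructor <;> linarith
      have h3 : Int.fract v = v - ⌊u⌋ := by rw [← hf]; rfl
      rw [h3, min_eq_left (by linarith)]; ring
    have hu' : (⌊u⌋ : ℝ) + Int.fract u = u := Int.floor_add_fract u
    have hu1 : (⌊u⌋ : ℝ) + 1 / 3 < u := by linarith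
    have hu2 : u < (⌊u⌋ : ℝ) + 1 := Int.lt_floor_add_one u
    filter_upwards [Ioo_mem_nhds hu1 hu2] with v hv
    simp only [ContinuousMap.coe_mk, Function.comp]
    rw [key v hv.1 hv.2, key u hu1 hu2]

lemma exists_stairs : ∃ ρ : Bool → C(ℝ, ℝ), (∀ i u, u ≤ ρ i u ∧ ρ i u ≤ u + 2) ∧
    ∀ u, ∃ i, ∀ᶠ v in 𝓝 u, ρ i v = ρ i u := by
  obtain ⟨ρ, h1, h2⟩ := exists_stair
  refine ⟨fun i => if i then ρ else ρ.comp ⟨fun u => u + 1 / 2, by fun_prop⟩, ?_, ?_⟩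
  · intro i u
    cases i
    · have := h1 (u + 1 / 2)
      simp only [Bool.false_eq_true, if_false, ContinuousMap.comp_apply, ContinuousMap.coe_mk]
      constructor <;> linarith
    · have := h1 u
      simp only [if_true]
      constructor <;> linarith
  · intro u
    by_cases hu : 1 / 3 < Int.fract u
    · exact ⟨true, by simpa using h2 u hu⟩
    · refine ⟨false, ?_⟩
      have h0 := Int.fract_nonneg u
      have hf : Int.fract (u + 1 / 2) = Int.fract u + 1 / 2 := by
        rw [Int.fract_eq_iff]
        refine ⟨by linarith, by linarith, ⌊u⌋, ?_⟩
        have := Int.floor_add_fract u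
        linarith
      have := h2 (u + 1 / 2) (by rw [hf]; linarith)
      have ht : Tendsto (fun u : ℝ => u + 1 / 2) (𝓝 u) (𝓝 (u + 1 / 2)) :=
        (by fun_prop : Continuous fun u : ℝ => u + 1 / 2).tendsto u
      exact ht.eventually this

/-- The defining property of the support ultrafilter of `y`. -/
def IsSupp (T : C(X, E) ≃ₗ[𝕂] C(Y, F)) (y : Y) (U : Ultrafilter X) : Prop :=
  ∀ A ∈ U, ∀ (χ : C(X, ℝ)) (f : C(X, E)), (∀ x ∈ A, χ x = 1) →
    (∀ x, χ x = 0 ∨ f x = 0) → T f y = 0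

lemma exists_supp [Nontrivial F] (T : C(X, E) ≃ₗ[𝕂] C(Y, F)) (hT : SeparatingC ⇑T) (y : Y) :
    ∃ U : Ultrafilter X, IsSupp T y U := by
  obtain ⟨v, hv⟩ := exists_ne (0 : F)
  let Fl : Filter X :=
    { sets := {A | ∃ χ : C(X, ℝ), (∀ x, x ∉ A → χ x = 1) ∧ ∀ f, T (sm 𝕂 χ f) y = 0}
      univ_sets := ⟨0, by simp, fun f => by
        have : sm 𝕂 (0 : C(X, ℝ)) f = 0 := by ext x; simp
        rw [this]; simp⟩
      sets_of_superset := by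
        rintro A B ⟨χ, h1, h2⟩ hAB
        exact ⟨χ, fun x hx => h1 x (fun h => hx (hAB h)), h2⟩
      inter_sets := by
        rintro A B ⟨χ, h1, h2⟩ ⟨χ', h1', h2'⟩
        refine ⟨χ + χ' - χ * χ', ?_, ?_⟩
        · intro x hx
          by_cases hA : x ∈ A
          · have hB : x ∉ B := fun h => hx ⟨hA, h⟩
            simp [h1' x hB]
          · simp [h1 x hA]
        · intro f
          have : sm 𝕂 (χ + χ' - χ * χ') f =
              sm 𝕂 χ f + sm 𝕂 χ' f - sm 𝕂 χ (sm 𝕂 χ' f) := by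
            ext x
            simp [sub_smul, add_smul, mul_smul]
          rw [this, map_sub, map_add]
          simp [h2, h2'] }
  have hne : Fl.NeBot := by
    refine ⟨fun hb => ?_⟩
    have hemp : (∅ : Set X) ∈ Fl := by rw [hb]; exact mem_bot
    obtain ⟨χ, h1, h2⟩ := hemp
    have h3 := h2 (T.symm (ContinuousMap.const Y v))
    have : sm 𝕂 χ (T.symm (ContinuousMap.const Y v)) = T.symm (ContinuousMap.const Y v) := by
      ext x; simp [h1 x (Set.notMem_empty x)]
    rw [this] at h3
    simp at h3
    exact hv h3
  refine ⟨Ultrafilter.of Fl, ?_⟩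
  intro A hA χ f h1 h2
  by_contra hf
  have : Aᶜ ∈ Fl := by
    refine ⟨χ, fun x hx => h1 x (by simpa using hx), fun g => ?_⟩
    have := hT (sm 𝕂 χ g) f (fun x => by rcases h2 x with h | h <;> simp [h]) y
    simpa [hf] using this
  have h3 : Aᶜ ∈ Ultrafilter.of Fl := Ultrafilter.of_le Fl this
  exact (Ultrafilter.compl_mem_iff_notMem.1 h3) hA

lemma IsSupp.key {T : C(X, E) ≃ₗ[𝕂] C(Y, F)} {y : Y} {U : Ultrafilter X} (hU : IsSupp T y U)
    (φ : C(X, ℝ)) {a b : ℝ} (hab : a < b) (hb : ∀ᶠ x in (U : Filter X), b ≤ φ x)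
    (f g : C(X, E)) (hf : ∀ x, a < φ x → f x = g x) : T f y = T g y := by
  have : T (f - g) y = 0 := by
    refine hU {x | b ≤ φ x} hb ((ramp a b).comp φ) (f - g) (fun x hx => ramp_one hab hx) ?_
    intro x
    by_cases hx : a < φ x
    · right; simp [hf x hx]
    · left; exact ramp_zero hab (not_lt.1 hx)
  rw [map_sub] at this
  simpa [sub_eq_zero] using this

lemma IsSupp.key_nhds {T : C(X, E) ≃ₗ[𝕂] C(Y, F)} {y : Y} {U : Ultrafilter X}
    (hU : IsSupp T y U) (φ : C(X, ℝ)) {c : ℝ} (hc : Tendsto φ (U : Filter X) (𝓝 c))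
    (f g : C(X, E)) (hf : ∀ᶠ t in 𝓝 c, ∀ x, φ x = t → f x = g x) : T f y = T g y := by
  obtain ⟨ε, hε, h⟩ := Metric.eventually_nhds_iff.1 hf
  refine hU.key ⟨fun x => - |φ x - c|, by fun_prop⟩ (a := -ε) (b := -(ε / 2)) (by linarith)
    ?_ f g ?_
  · filter_upwards [hc (Metric.ball_mem_nhds c (half_pos hε))] with x hx
    have hx' : |φ x - c| < ε / 2 := hx
    simp only [ContinuousMap.coe_mk]; linarith
  · intro x hx
    simp only [ContinuousMap.coe_mk] at hx
    exact h (y := φ x) (by rw [Real.dist_eq]; linarith) x rfl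

/-- smul by a function that is constant near the value. -/
lemma IsSupp.key_smul {T : C(X, E) ≃ₗ[𝕂] C(Y, F)} {y : Y} {U : Ultrafilter X}
    (hU : IsSupp T y U) (φ : C(X, ℝ)) {c : ℝ} (hc : Tendsto φ (U : Filter X) (𝓝 c))
    (f g : C(X, E)) (r : ℝ)
    (hf : ∀ᶠ t in 𝓝 c, ∀ x, φ x = t → g x = (r : 𝕂) • f x) : T g y = (r : 𝕂) • T f y := by
  have := hU.key_nhds φ hc g ((r : 𝕂) • f) (by simpa using hf)
  rw [this]; simp

lemma exists_bump [CompletelyRegularSpace Y] {y : Y} {W : Set Y}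
    (hW : W ∈ 𝓝 y) : ∃ χ : C(Y, ℝ), χ y = 1 ∧ ∀ z, z ∉ W → χ z = 0 := by
  obtain ⟨V, hVW, hV, hy⟩ := mem_nhds_iff.1 hW
  obtain ⟨f, hf, h0, h1⟩ := CompletelyRegularSpace.completely_regular y Vᶜ
    hV.isClosed_compl (by simpa using hy)
  refine ⟨⟨fun z => 1 - (f z : ℝ), by fun_prop⟩, by simp [h0], fun z hz => ?_⟩
  have : f z = 1 := h1 (fun h => hz (hVW h))
  simp [this]

/-- A dense-range type lemma: if `y ∈ W` then there is `f` with the property that any `f'` with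
`T f' = 0` on `W` is disjoint from `f`. -/
lemma exists_test [CompletelyRegularSpace Y] [Nontrivial F]
    (T : C(X, E) ≃ₗ[𝕂] C(Y, F)) (hT' : SeparatingC ⇑T.symm) {y : Y} {W : Set Y}
    (hW : W ∈ 𝓝 y) : ∃ f : C(X, E), T f y ≠ 0 ∧
      ∀ f' : C(X, E), (∀ z ∈ W, T f' z = 0) → ∀ x, f' x = 0 ∨ f x = 0 := by
  obtain ⟨v, hv⟩ := exists_ne (0 : F)
  obtain ⟨χ, h1, h0⟩ := exists_bump hW
  refine ⟨T.symm (sm 𝕂 χ (ContinuousMap.const Y v)), by simp [h1, hv], ?_⟩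
  intro f' hf' x
  have := hT' (T f') (sm 𝕂 χ (ContinuousMap.const Y v)) (fun z => by
    by_cases hz : z ∈ W
    · simp [hf' z hz]
    · simp [h0 z hz]) x
  simpa using this

lemma tendsto_or {U : Ultrafilter X} (φ : X → ℝ) :
    (∃ c, Tendsto φ (U : Filter X) (𝓝 c)) ∨ Tendsto (fun x => |φ x|) (U : Filter X) atTop := by
  by_cases h : ∃ n : ℝ, ∀ᶠ x in (U : Filter X), |φ x| ≤ n
  · left
    obtain ⟨n, hn⟩ := h
    obtain ⟨c, -, hc⟩ := (isCompact_Icc (a := -n) (b := n)).ultrafilter_le_nhds (U.map φ) (by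
      rw [le_principal_iff]
      have : ∀ᶠ x in (U : Filter X), φ x ∈ Set.Icc (-n) n := by
        filter_upwards [hn] with x hx using abs_le.1 hx
      exact this)
    exact ⟨c, hc⟩
  · right
    rw [tendsto_atTop]
    intro n
    have := Ultrafilter.eventually_not.2 (fun hn => h ⟨n, hn⟩)
    filter_upwards [this] with x hx
    exact (not_le.1 hx).le

lemma not_tendsto_atTop [CompletelyRegularSpace Y] [Nontrivial F]
    (T : C(X, E) ≃ₗ[𝕂] C(Y, F)) (hT' : SeparatingC ⇑T.symm)
    (U : Y → Ultrafilter X) (hU : ∀ y, IsSupp T y (U y)) (y : Y) (φ : C(X, ℝ))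
    (hpos : ∀ x, 0 ≤ φ x) (h : Tendsto φ (U y : Filter X) atTop) : False := by
  obtain ⟨v, hv⟩ := exists_ne (0 : F)
  have hv' : 0 < ‖v‖ := norm_pos_iff.2 hv
  obtain ⟨ρ, hρ, hρc⟩ := exists_stairs
  set f0 : C(X, E) := T.symm (ContinuousMap.const Y v) with hf0
  have hTf0 : ∀ z, T f0 z = v := fun z => by simp [hf0]
  let f : Bool → C(X, E) := fun i => sm 𝕂 ((ρ i).comp φ) f0
  obtain ⟨M, hM⟩ : ∃ M : ℝ, ∀ᶠ z in 𝓝 y, ∀ i, ‖T (f i) z‖ < M := by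
    refine ⟨max ‖T (f true) y‖ ‖T (f false) y‖ + 1, ?_⟩
    rw [eventually_all]
    intro i
    have hc : ContinuousAt (fun z => ‖T (f i) z‖) y := by fun_prop
    apply hc.eventually_lt_const
    cases i
    · exact (le_max_right _ _).trans_lt (lt_add_one _)
    · exact (le_max_left _ _).trans_lt (lt_add_one _)
  set n : ℝ := M / ‖v‖ + 1 with hn
  have hW' : ∀ᶠ z in 𝓝 y, ∀ᶠ x in (U z : Filter X), n ≤ φ x := by
    let g : C(X, E) := sm 𝕂 ((ramp (n + 1) (n + 2)).comp φ) f0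
    have hg : T g y = v := by
      rw [← hTf0 y]
      refine (hU y).key φ (a := n + 2) (b := n + 3) (by linarith)
        (h.eventually_ge_atTop _) _ _ ?_
      intro x hx
      simp [g, ramp_one (show n + 1 < n + 2 by linarith) hx.le]
    have hc : ContinuousAt (fun z => T g z) y := by fun_prop
    have : ∀ᶠ z in 𝓝 y, T g z ≠ 0 := hc.eventually_ne (by rw [hg]; exact hv)
    filter_upwards [this] with z hz
    by_contra hcon
    apply hz
    have hcon' := Ultrafilter.eventually_not.2 hcon
    have : T g z = T 0 z := by
      refine (hU z).key (-φ) (a := -(n + 1)) (b := -n) (by linarith) ?_ _ _ ?_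
      · filter_upwards [hcon'] with x hx
        simp only [ContinuousMap.coe_neg, Pi.neg_apply]; linarith
      · intro x hx
        simp only [ContinuousMap.coe_neg, Pi.neg_apply] at hx
        simp [g, ramp_zero (show n + 1 < n + 2 by linarith) (show φ x ≤ n + 1 by linarith)]
    rw [this]; simp
  have hinf : ∀ᶠ z in 𝓝 y, Tendsto φ (U z : Filter X) atTop := by
    filter_upwards [hM, hW'] with z hz1 hz2
    rcases tendsto_or (U := U z) φ with ⟨c, hc⟩ | hc
    · exfalso
      have hnc : n ≤ c := ge_of_tendsto hc hz2
      obtain ⟨i, hi⟩ := hρc c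
      have h1 : T (f i) z = ((ρ i c : ℝ) : 𝕂) • T f0 z := by
        refine (hU z).key_smul φ hc f0 (f i) (ρ i c) ?_
        filter_upwards [hi] with t ht x hx
        simp [f, hx, ht]
      have h2 := hz1 i
      have hnn := (hρ i c).1
      rw [h1, hTf0, norm_smul, RCLike.norm_ofReal] at h2
      have h3 : n ≤ |ρ i c| := (hnc.trans hnn).trans (le_abs_self _)
      have h4 : n * ‖v‖ ≤ |ρ i c| * ‖v‖ := by gcongr
      have h5 : n * ‖v‖ = M + ‖v‖ := by rw [hn]; field_simp
      linarith
    · simpa [abs_of_nonneg (hpos _)] using hc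
  obtain ⟨g, hg, htest⟩ := exists_test T hT' hinf
  apply hg
  have : g = 0 := by
    ext x
    by_contra hx
    obtain ⟨c, hcx⟩ : ∃ c, c = φ x := ⟨_, rfl⟩
    obtain ⟨a, ha⟩ : ∃ a, a = -(c + 2) := ⟨_, rfl⟩
    obtain ⟨b, hb⟩ : ∃ b, b = -(c + 1) := ⟨_, rfl⟩
    let g' : C(X, E) := sm 𝕂 ((ramp a b).comp (-φ)) g
    have h1 := htest g' (fun z hz => by
      have : T g' z = T 0 z := by
        refine (hU z).key φ (a := c + 2) (b := c + 3) (by linarith)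
          (Tendsto.eventually_ge_atTop hz _) _ _ ?_
        intro x' hx'
        have : ramp a b (-φ x') = 0 :=
          ramp_zero (by linarith) (by linarith)
        simp [g', this]
      rw [this]; simp) x
    have h2 : ramp a b (-φ x) = 1 := ramp_one (by linarith) (by linarith)
    rcases h1 with h1 | h1
    · apply hx; simpa [g', h2] using h1
    · exact hx h1
  rw [this]; simp

lemma exists_lim [CompletelyRegularSpace Y] [Nontrivial F] (hX : Realcompact X)
    (T : C(X, E) ≃ₗ[𝕂] C(Y, F)) (hT' : SeparatingC ⇑T.symm)
    (U : Y → Ultrafilter X) (hU : ∀ y, IsSupp T y (U y)) (y : Y) :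
    ∃ x, (U y : Filter X) ≤ 𝓝 x := by
  obtain ⟨ι, e, he⟩ := hX
  have hcont : ∀ i, Continuous fun x => e x i := fun i =>
    (continuous_apply i).comp he.continuous
  have : ∀ i, ∃ c, Tendsto (fun x => e x i) (U y : Filter X) (𝓝 c) := by
    intro i
    rcases tendsto_or (U := U y) (fun x => e x i) with h | h
    · exact h
    · exfalso
      exact not_tendsto_atTop T hT' U hU y ⟨fun x => |e x i|, (hcont i).abs⟩
        (fun x => abs_nonneg _) h
  choose c hc using this
  have ht : Tendsto e (U y : Filter X) (𝓝 c) := tendsto_pi_nhds.2 hc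
  have hmem : c ∈ Set.range e :=
    he.isClosed_range.mem_of_tendsto ht (Eventually.of_forall fun x => ⟨x, rfl⟩)
  obtain ⟨x, rfl⟩ := hmem
  refine ⟨x, ?_⟩
  rw [he.isInducing.nhds_eq_comap]
  exact ht.le_comap

/-- `f ↦ ρ(1/√‖f‖) f`. -/
noncomputable def damp (𝕂 : Type) [RCLike 𝕂] [NormedSpace 𝕂 E] (ρ : C(ℝ, ℝ))
    (hρ : ∀ u, u ≤ ρ u ∧ ρ u ≤ u + 2) (f : C(X, E)) : C(X, E) :=
  ⟨fun x => ((ρ (1 / √‖f x‖) : ℝ) : 𝕂) • f x, by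
    rw [continuous_iff_continuousAt]
    intro x
    by_cases hx : f x = 0
    · have hb : ∀ z, ‖((ρ (1 / √‖f z‖) : ℝ) : 𝕂) • f z‖ ≤ √‖f z‖ + 2 * ‖f z‖ := by
        intro z
        have h0 : 0 ≤ 1 / √‖f z‖ := by positivity
        have h1 := hρ (1 / √‖f z‖)
        rw [norm_smul, RCLike.norm_ofReal, abs_of_nonneg (h0.trans h1.1)]
        calc ρ (1 / √‖f z‖) * ‖f z‖ ≤ (1 / √‖f z‖ + 2) * ‖f z‖ := by gcongr; exact h1.2
          _ = ‖f z‖ / √‖f z‖ + 2 * ‖f z‖ := by ring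
          _ = √‖f z‖ + 2 * ‖f z‖ := by rw [Real.div_sqrt]
      have hc : Tendsto (fun z => √‖f z‖ + 2 * ‖f z‖) (𝓝 x) (𝓝 0) := by
        have : Continuous (fun z => √‖f z‖ + 2 * ‖f z‖) := by fun_prop
        have := this.tendsto x
        simpa [hx] using this
      unfold ContinuousAt
      simp only [hx, smul_zero]
      exact squeeze_zero_norm hb hc
    · have hx' : √‖f x‖ ≠ 0 := by
        have : 0 < ‖f x‖ := norm_pos_iff.2 hx
        positivity
      have h1 : ContinuousAt (fun z => 1 / √‖f z‖) x :=
        ContinuousAt.div (by fun_prop) (by fun_prop) hx'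
      have h2 : ContinuousAt (fun z => ρ (1 / √‖f z‖)) x :=
        ContinuousAt.comp (g := ρ) ρ.continuous.continuousAt h1
      have h3 : ContinuousAt (fun z => ((ρ (1 / √‖f z‖) : ℝ) : 𝕂)) x :=
        ContinuousAt.comp (g := fun r : ℝ => (r : 𝕂))
          RCLike.continuous_ofReal.continuousAt h2
      exact h3.smul f.continuous.continuousAt⟩

/-- The support map. -/
lemma exists_h [CompletelyRegularSpace X] [CompletelyRegularSpace Y] [Nontrivial F]
    (hX : Realcompact X)
    (T : C(X, E) ≃ₗ[𝕂] C(Y, F)) (hT : SeparatingC ⇑T) (hT' : SeparatingC ⇑T.symm) :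
    ∃ h : Y → X, ∀ y f, f (h y) = 0 → T f y = 0 := by
  choose U hU using exists_supp T hT
  choose h hh using exists_lim hX T hT' U hU
  refine ⟨h, ?_⟩
  obtain ⟨v, hv⟩ := exists_ne (0 : F)
  set f0 : C(X, E) := T.symm (ContinuousMap.const Y v) with hf0
  have hTf0 : ∀ z, T f0 z = v := fun z => by simp [hf0]
  have htend : ∀ (z : Y) (φ : C(X, ℝ)), Tendsto φ (U z : Filter X) (𝓝 (φ (h z))) :=
    fun z φ => (φ.continuous.tendsto _).mono_left (hh z)
  have hcont : Continuous h := by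
    rw [continuous_iff_continuousAt]
    intro y V hV
    obtain ⟨χ, h1, h0⟩ := exists_bump hV
    let g : C(X, E) := sm 𝕂 ((ramp 3⁻¹ (2 / 3)).comp χ) f0
    have hg : T g y = v := by
      rw [← hTf0 y]
      refine (hU y).key_nhds χ (htend y χ) _ _ ?_
      rw [h1]
      filter_upwards [lt_mem_nhds (show (2 / 3 : ℝ) < 1 by norm_num)] with t ht x hx
      have : ramp 3⁻¹ (2 / 3) (χ x) = 1 := ramp_one (by norm_num) (by rw [hx]; exact ht.le)
      simp [g, this]
    have hc : ContinuousAt (fun z => T g z) y := by fun_prop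
    have : ∀ᶠ z in 𝓝 y, T g z ≠ 0 := hc.eventually_ne (by rw [hg]; exact hv)
    change ∀ᶠ z in 𝓝 y, h z ∈ V
    filter_upwards [this] with z hz
    by_contra hcon
    apply hz
    have : T g z = T 0 z := by
      refine (hU z).key_nhds χ (htend z χ) _ _ ?_
      rw [h0 _ hcon]
      filter_upwards [gt_mem_nhds (show (0 : ℝ) < 3⁻¹ by norm_num)] with t ht x hx
      have : ramp 3⁻¹ (2 / 3) (χ x) = 0 := ramp_zero (by norm_num) (by rw [hx]; exact ht.le)
      simp [g, this]
    rw [this]; simp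
  intro y f hfy
  by_contra hTf
  obtain ⟨ρ, hρ, hρc⟩ := exists_stairs
  let nf : C(X, ℝ) := ⟨fun x => ‖f x‖, by fun_prop⟩
  -- density
  have hdense : ∀ W ∈ 𝓝 y, ∃ z ∈ W, f (h z) ≠ 0 := by
    intro W hW
    by_contra! hcon
    obtain ⟨g, hg, htest⟩ := exists_test T hT' hW
    have hdis : ∀ x, ‖f x‖ * ‖g x‖ = 0 := by
      intro x
      by_contra hx
      have hfx : f x ≠ 0 := fun h => hx (by simp [h])
      have hgx : g x ≠ 0 := fun h => hx (by simp [h])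
      have hp : 0 < ‖f x‖ := norm_pos_iff.2 hfx
      let g' : C(X, E) := sm 𝕂 ((ramp (‖f x‖ / 2) ‖f x‖).comp nf) g
      have h1 := htest g' (fun z hz => by
        have : T g' z = T 0 z := by
          refine (hU z).key_nhds nf (htend z nf) _ _ ?_
          have : nf (h z) = 0 := by simp [nf, hcon z hz]
          rw [this]
          filter_upwards [gt_mem_nhds (half_pos hp)] with t ht x' hx'
          have : ramp (‖f x‖ / 2) ‖f x‖ (nf x') = 0 :=
            ramp_zero (by linarith) (by rw [hx']; exact ht.le)
          simp [g', this]
        rw [this]; simp) x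
      have h2 : ramp (‖f x‖ / 2) ‖f x‖ (nf x) = 1 := ramp_one (by linarith) le_rfl
      rcases h1 with h1 | h1
      · apply hgx; simpa [g', h2] using h1
      · exact hgx h1
    have := hT f g hdis y
    simp [hTf, hg] at this
  let f' : Bool → C(X, E) := fun i => damp 𝕂 (ρ i) (hρ i) f
  obtain ⟨M, hM0, hM⟩ : ∃ M : ℝ, 0 < M ∧ ∀ᶠ z in 𝓝 y, ∀ i, ‖T (f' i) z‖ < M := by
    refine ⟨max ‖T (f' true) y‖ ‖T (f' false) y‖ + 1, by positivity, ?_⟩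
    rw [eventually_all]
    intro i
    have hc : ContinuousAt (fun z => ‖T (f' i) z‖) y := by fun_prop
    apply hc.eventually_lt_const
    cases i
    · exact (le_max_right _ _).trans_lt (lt_add_one _)
    · exact (le_max_left _ _).trans_lt (lt_add_one _)
  set δ := ‖T f y‖ / 2 with hδ
  have hp : 0 < ‖T f y‖ := norm_pos_iff.2 hTf
  have hδ0 : 0 < δ := half_pos hp
  have hlow : ∀ᶠ z in 𝓝 y, δ < ‖T f z‖ := by
    have hc : ContinuousAt (fun z => ‖T f z‖) y := by fun_prop
    exact hc.eventually_const_lt (by rw [hδ]; linarith)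
  have hsmall : ∀ᶠ z in 𝓝 y, √‖f (h z)‖ < δ / M := by
    have hc : ContinuousAt (fun z => √‖f (h z)‖) y := by fun_prop
    exact hc.eventually_lt_const (by simp only [hfy, norm_zero, Real.sqrt_zero]; positivity)
  obtain ⟨z, ⟨⟨hz1, hz2⟩, hz3⟩, hz⟩ := hdense _ ((hM.and hlow).and hsmall)
  have hnz : 0 < ‖f (h z)‖ := norm_pos_iff.2 hz
  have hsz : 0 < √‖f (h z)‖ := Real.sqrt_pos.2 hnz
  obtain ⟨i, hi⟩ := hρc (1 / √‖f (h z)‖)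
  have heq : T (f' i) z = ((ρ i (1 / √‖f (h z)‖) : ℝ) : 𝕂) • T f z := by
    refine (hU z).key_smul nf (htend z nf) f (f' i) _ ?_
    have hc : ContinuousAt (fun t : ℝ => 1 / √t) ‖f (h z)‖ :=
      ContinuousAt.div (by fun_prop) (by fun_prop) hsz.ne'
    have := hc.eventually hi
    filter_upwards [this] with t ht x hx
    have hx' : ‖f x‖ = t := hx
    simp only [f', damp, ContinuousMap.coe_mk]
    rw [hx', ht]
  have h1 := hz1 i
  rw [heq, norm_smul, RCLike.norm_ofReal] at h1
  have h2 : 1 / √‖f (h z)‖ ≤ |ρ i (1 / √‖f (h z)‖)| := (hρ i _).1.trans (le_abs_self _)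
  have h3 : M / δ < 1 / √‖f (h z)‖ := by
    rw [lt_div_iff₀ hsz]
    calc M / δ * √‖f (h z)‖ < M / δ * (δ / M) := by gcongr
      _ = 1 := by field_simp
  have h4 : M / δ * δ ≤ |ρ i (1 / √‖f (h z)‖)| * ‖T f z‖ :=
    mul_le_mul (h3.le.trans h2) hz2.le hδ0.le (abs_nonneg _)
  have h5 : M / δ * δ = M := by field_simp
  linarith

end

end BisepAux

/-- For each `y`, the map `J_y : e ↦ (T ê)(y)` (where `ê` is the constant function with
value `e`) is a continuous linear bijection from `E` onto `F`, and `y ↦ J_y` is continuous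
into the strong operator topology, i.e. `y ↦ J_y e` is continuous for each `e`. -/
theorem stmt7 {𝕂 X Y E F : Type} [RCLike 𝕂]
    [TopologicalSpace X] [CompletelyRegularSpace X] [T2Space X]
    [TopologicalSpace Y] [CompletelyRegularSpace Y] [T2Space Y]
    [NormedAddCommGroup E] [NormedSpace 𝕂 E] [Nontrivial E] [FiniteDimensional 𝕂 E]
    [NormedAddCommGroup F] [NormedSpace 𝕂 F] [Nontrivial F]
    (hX : Realcompact X) (hY : Realcompact Y)
    (T : C(X, E) ≃ₗ[𝕂] C(Y, F)) (hT : SeparatingC ⇑T) (hT' : SeparatingC ⇑T.symm)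
    (J : Y → E → F) (hJ : ∀ (y : Y) (e : E), J y e = T (ContinuousMap.const X e) y) :
    (∀ y : Y, IsLinearMap 𝕂 (J y)) ∧ (∀ y : Y, Continuous (J y)) ∧
      (∀ y : Y, Function.Bijective (J y)) ∧
      (∀ e : E, Continuous fun y : Y => J y e) := by
  have hlin : ∀ y : Y, IsLinearMap 𝕂 (J y) := by
    intro y
    constructor
    · intro a b
      have : ContinuousMap.const X (a + b) =
          ContinuousMap.const X a + ContinuousMap.const X b := rfl
      simp only [hJ, this, map_add, ContinuousMap.add_apply]
    · intro c a
      have : ContinuousMap.const X (c • a) = c • ContinuousMap.const X a := rfl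
      simp only [hJ, this, map_smul, ContinuousMap.smul_apply]
  obtain ⟨h, hh⟩ := BisepAux.exists_h hX T hT hT'
  obtain ⟨k, hk⟩ := BisepAux.exists_h hY T.symm hT' (by simpa using hT)
  have hrep : ∀ y f, T f y = J y (f (h y)) := by
    intro y f
    have := hh y (f - ContinuousMap.const X (f (h y))) (by simp)
    rw [map_sub, ContinuousMap.sub_apply, sub_eq_zero] at this
    rw [this, hJ]
  have hkh : ∀ y, k (h y) = y := by
    intro y
    by_contra hne
    obtain ⟨v, hv⟩ := exists_ne (0 : F)
    have hW : {k (h y)}ᶜ ∈ 𝓝 y := isOpen_compl_singleton.mem_nhds (fun h' => hne h'.symm)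
    obtain ⟨χ, h1, h0⟩ := BisepAux.exists_bump hW
    have h2 : BisepAux.sm 𝕂 χ (ContinuousMap.const Y v) (k (h y)) = 0 := by
      simp [h0 (k (h y)) (by simp)]
    have h3 := hh y _ (hk (h y) _ h2)
    simp [h1, hv] at h3
  refine ⟨hlin, ?_, ?_, ?_⟩
  · intro y
    exact LinearMap.continuous_of_finiteDimensional ((hlin y).mk' (J y))
  · intro y
    constructor
    · intro a b hab
      rw [← sub_eq_zero]
      have h0 : T (ContinuousMap.const X (a - b)) y = 0 := by
        rw [← hJ, (hlin y).map_sub, hab, sub_self]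
      have := hk (h y) (T (ContinuousMap.const X (a - b))) (by rw [hkh]; exact h0)
      simpa using this
    · intro v
      refine ⟨T.symm (ContinuousMap.const Y v) (h y), ?_⟩
      rw [← hrep]; simp
  · intro e
    simp only [hJ]
    exact (T (ContinuousMap.const X e)).continuous
end

section
/- Let X and Y be realcompact completely regular Hausdorff topological spaces, let E and F be nonzero normed spaces over 𝕂 with E finite-dimensional, and let T : C(X,E) → C(Y,F) be a 𝕂-linear biseparating map. If C(X,E) and C(Y,F) are endowed with the compact-open topology, then both T and T⁻¹ are continuous. -/
open Filter Topology

/-! ### Step functions -/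

noncomputable def stepP (s : ℝ) : ℝ := s + (min 1 (3 * Int.fract s) - Int.fract s)

lemma stepP_cont : Continuous stepP := by
  have h : Continuous ((fun u : ℝ => min 1 (3 * u) - u) ∘ Int.fract) := by
    apply ContinuousOn.comp_fract''
    · fun_prop
    · norm_num
  exact continuous_id.add h

lemma stepP_ge (s : ℝ) : s - 1 ≤ stepP s := by
  have h0 := Int.fract_nonneg s
  have h1 := Int.fract_lt_one s
  have : 0 ≤ min 1 (3 * Int.fract s) := le_min (by norm_num) (by linarith)
  unfold stepP; linarith

lemma stepP_bd (s : ℝ) : |stepP s - s| ≤ 1 := by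
  have h0 := Int.fract_nonneg s
  have h1 := Int.fract_lt_one s
  have : 0 ≤ min 1 (3 * Int.fract s) := le_min (by norm_num) (by linarith)
  have h2 := min_le_left 1 (3 * Int.fract s)
  unfold stepP; rw [abs_le]; constructor <;> linarith

lemma stepP_loc (s : ℝ) (h : 1 / 3 < Int.fract s) : ∀ᶠ u in 𝓝 s, stepP u = stepP s := by
  have key : ∀ u : ℝ, (⌊s⌋ : ℝ) + 1 / 3 < u → u < ⌊s⌋ + 1 → stepP u = ⌊s⌋ + 1 := by
    intro u h1 h2
    have hf : ⌊u⌋ = ⌊s⌋ := by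
      rw [Int.floor_eq_iff]; constructor <;> linarith
    have hfr : Int.fract u = u - ⌊s⌋ := by rw [← hf]; rfl
    unfold stepP
    rw [hfr, min_eq_left (by linarith)]; ring
  have hs1 : (⌊s⌋ : ℝ) + 1 / 3 < s := by
    have := Int.floor_add_fract s; linarith
  have hs2 := Int.lt_floor_add_one s
  filter_upwards [Ioo_mem_nhds hs1 hs2] with u hu
  rw [key u hu.1 hu.2, key s hs1 hs2]

/-- `t * stepP (- log t + k)`. -/
noncomputable def stepD_s8 (k : ℝ) (t : ℝ) : ℝ := t * stepP (-Real.log t + k)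

lemma stepD_cont (k : ℝ) : Continuous (stepD_s8 k) := by
  have h : stepD_s8 k = fun t => (-(t * Real.log t) + k * t) +
      t * (stepP (-Real.log t + k) - (-Real.log t + k)) := by
    funext t; unfold stepD_s8; ring
  rw [h]
  refine Continuous.add ((Real.continuous_mul_log.neg).add (by fun_prop)) ?_
  rw [continuous_iff_continuousAt]
  intro t
  by_cases ht : t = 0
  · subst ht
    unfold ContinuousAt
    simp only [zero_mul]
    refine squeeze_zero_norm (a := fun t : ℝ => ‖t‖) ?_ ?_
    · intro u
      rw [norm_mul]
      have := stepP_bd (-Real.log u + k)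
      rw [← Real.norm_eq_abs] at this
      exact mul_le_of_le_one_right (norm_nonneg _) this
    · simpa using (continuous_norm (E := ℝ)).tendsto 0
  · have hl : ContinuousAt (fun t => -Real.log t + k) t :=
      ((Real.continuousAt_log ht).neg).add continuousAt_const
    exact continuousAt_id.mul ((stepP_cont.continuousAt.comp hl).sub hl)

lemma stepD_loc (k t : ℝ) (ht : 0 < t) (h : 1 / 3 < Int.fract (-Real.log t + k)) :
    ∀ᶠ s in 𝓝 t, stepD_s8 k s = stepP (-Real.log t + k) * s := by
  have hl : ContinuousAt (fun t => -Real.log t + k) t :=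
    ((Real.continuousAt_log ht.ne').neg).add continuousAt_const
  filter_upwards [hl.eventually (stepP_loc _ h)] with s hs
  unfold stepD_s8
  rw [hs, mul_comm]

lemma fract_half (s : ℝ) : 1 / 3 < Int.fract (s + 0) ∨ 1 / 3 < Int.fract (s + 1 / 2) := by
  by_cases h : 1 / 3 < Int.fract s
  · left; simpa using h
  · right
    push Not at h
    have h0 := Int.fract_nonneg s
    have h1 := Int.floor_add_fract s
    have hf : ⌊s + 1 / 2⌋ = ⌊s⌋ := by
      rw [Int.floor_eq_iff]; constructor <;> linarith
    have : Int.fract (s + 1 / 2) = s + 1 / 2 - ⌊s⌋ := by rw [← hf]; rfl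
    rw [this]; linarith

lemma step_exists : ∃ d₁ d₂ : C(ℝ, ℝ), ∀ N : ℝ, ∃ ε > 0, ∀ t, 0 < t → t ≤ ε →
    ∃ c, N ≤ c ∧ ((∀ᶠ s in 𝓝 t, d₁ s = c * s) ∨ (∀ᶠ s in 𝓝 t, d₂ s = c * s)) := by
  refine ⟨⟨stepD_s8 0, stepD_cont 0⟩, ⟨stepD_s8 (1/2), stepD_cont _⟩, fun N =>
    ⟨Real.exp (-(N + 1)), Real.exp_pos _, fun t ht hte => ?_⟩⟩
  have hlog : N + 1 ≤ -Real.log t := by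
    have := (Real.log_le_iff_le_exp ht).2 hte
    linarith
  rcases fract_half (-Real.log t) with h | h
  · exact ⟨_, by linarith [stepP_ge (-Real.log t + 0)], Or.inl (stepD_loc _ _ ht h)⟩
  · exact ⟨_, by linarith [stepP_ge (-Real.log t + 1 / 2)], Or.inr (stepD_loc _ _ ht h)⟩

/-! ### Prime-like ideals of `C(X, ℝ)` -/

section ideals
variable {X : Type} [TopologicalSpace X]

/-- positive part of `a - s`. -/
noncomputable def pp (a : C(X, ℝ)) (s : ℝ) : C(X, ℝ) :=
  ⟨fun x => max (a x - s) 0, by fun_prop⟩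

lemma pp_apply (a : C(X, ℝ)) (s : ℝ) (x : X) : pp a s x = max (a x - s) 0 := rfl

lemma pp_nonneg (a : C(X, ℝ)) (s : ℝ) (x : X) : 0 ≤ pp a s x := le_max_right _ _

lemma pp_pos (a : C(X, ℝ)) (s : ℝ) (x : X) (h : s < a x) : 0 < pp a s x :=
  lt_max_of_lt_left (by linarith)

lemma pp_zero (a : C(X, ℝ)) (s : ℝ) (x : X) (h : a x ≤ s) : pp a s x = 0 :=
  max_eq_right (by linarith)

lemma one_mem_of_ne (P : Ideal C(X, ℝ)) (a : C(X, ℝ)) (ha : a ∈ P) (h : ∀ x, a x ≠ 0) :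
    (1 : C(X, ℝ)) ∈ P := by
  have : (⟨fun x => (a x)⁻¹, a.continuous.inv₀ h⟩ : C(X, ℝ)) * a = 1 := by
    ext x; simp [h x]
  rw [← this]
  exact P.mul_mem_left _ ha

structure PrimeLike (P : Ideal C(X, ℝ)) : Prop where
  one : (1 : C(X, ℝ)) ∉ P
  prime : ∀ a b : C(X, ℝ), (∀ x, a x = 0 ∨ b x = 0) → a ∈ P ∨ b ∈ P

def Val (P : Ideal C(X, ℝ)) (a : C(X, ℝ)) (t : ℝ) : Prop :=
  ∀ φ : C(ℝ, ℝ), (∀ᶠ s in 𝓝 t, φ s = 0) → φ.comp a ∈ P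

lemma PrimeLike.alt {P : Ideal C(X, ℝ)} (hP : PrimeLike P) (a : C(X, ℝ)) (s : ℝ) :
    pp a s ∈ P ∨ pp (-a) (-s) ∈ P := by
  apply hP.prime
  intro x
  rcases le_total (a x) s with h | h
  · exact Or.inl (pp_zero _ _ _ h)
  · exact Or.inr (pp_zero _ _ _ (by simpa using h))

lemma PrimeLike.cut {P : Ideal C(X, ℝ)} (hP : PrimeLike P) (a : C(X, ℝ)) (s₁ s₂ : ℝ)
    (h₁ : pp (-a) (-s₁) ∈ P) (h₂ : pp a s₂ ∈ P) : ∃ t, s₁ ≤ t ∧ t ≤ s₂ ∧ Val P a t := by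
  let A : Set ℝ := {s | pp a s ∈ P}
  have hlb : ∀ s ∈ A, s₁ ≤ s := by
    intro s hs
    by_contra hlt
    push Not at hlt
    refine hP.one (one_mem_of_ne P _ (P.add_mem h₁ hs) fun x => ne_of_gt ?_)
    change 0 < pp (-a) (-s₁) x + pp a s x
    rcases lt_or_ge s (a x) with h | h
    · exact add_pos_of_nonneg_of_pos (pp_nonneg _ _ _) (pp_pos _ _ _ h)
    · exact add_pos_of_pos_of_nonneg (pp_pos _ _ _ (by simpa using by linarith)) (pp_nonneg _ _ _)
  have hbdd : BddBelow A := ⟨s₁, hlb⟩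
  have hne : A.Nonempty := ⟨s₂, h₂⟩
  refine ⟨sInf A, le_csInf hne hlb, csInf_le hbdd h₂, fun φ hφ => ?_⟩
  obtain ⟨θ, hθ, hball⟩ := Metric.eventually_nhds_iff.1 hφ
  set t := sInf A
  obtain ⟨s, hsA, hs⟩ := exists_lt_of_csInf_lt hne (show sInf A < t + θ by simpa [t] using hθ)
  have hnA : t - θ / 2 ∉ A := fun h => by
    have := csInf_le hbdd h
    change t ≤ t - θ / 2 at this
    linarith
  have hA' : pp (-a) (-(t - θ / 2)) ∈ P := (hP.alt a _).resolve_left hnA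
  let ψ : C(X, ℝ) := ⟨fun x => max (θ - |a x - t|) 0, by fun_prop⟩
  have hψ0 : ∀ x, 0 ≤ ψ x := fun x => le_max_right _ _
  refine (hP.prime (φ.comp a) ψ fun x => ?_).resolve_right fun hψ => ?_
  · by_cases h : |a x - t| < θ
    · left; exact hball (by rwa [Real.dist_eq])
    · right; exact max_eq_right (by linarith)
  · refine hP.one (one_mem_of_ne P _ (P.add_mem (P.add_mem hψ hsA) hA') fun x => ne_of_gt ?_)
    change 0 < ψ x + pp a s x + pp (-a) (-(t - θ / 2)) x
    have e1 := hψ0 x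
    have e2 := pp_nonneg a s x
    have e3 := pp_nonneg (-a) (-(t - θ / 2)) x
    by_cases h : |a x - t| < θ
    · have : 0 < ψ x := lt_max_of_lt_left (by linarith)
      linarith
    · rcases le_or_gt (a x) t with h' | h'
      · rw [abs_of_nonpos (by linarith)] at h
        have := pp_pos (-a) (-(t - θ / 2)) x (by simp; linarith)
        linarith
      · rw [abs_of_pos (by linarith)] at h
        have := pp_pos a s x (by linarith)
        linarith

/-- If infinitesimals are in `P`, then `P` is real. -/
lemma PrimeLike.real {P : Ideal C(X, ℝ)} (hP : PrimeLike P)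
    (hinf : ∀ b : C(X, ℝ), (∀ x, 0 ≤ b x) → (∀ ε > 0, pp b ε ∈ P) → b ∈ P) (a : C(X, ℝ)) :
    ∃ t : ℝ, a - ContinuousMap.const X t ∈ P := by
  have hi : ∀ a : C(X, ℝ), ∃ s, pp a s ∈ P := by
    intro a
    by_contra hcon
    push Not at hcon
    let b : C(X, ℝ) := ⟨fun x => (max (a x) 1)⁻¹, by
      refine Continuous.inv₀ (by fun_prop) fun x => ?_
      exact ne_of_gt (lt_max_of_lt_right one_pos)⟩
    have hb : ∀ x, 0 < b x := fun x => inv_pos.2 (lt_max_of_lt_right one_pos)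
    refine hP.one (one_mem_of_ne P b (hinf b (fun x => (hb x).le) fun ε hε => ?_)
      fun x => (hb x).ne')
    refine (hP.prime (pp b ε) (pp a (1 / ε)) fun x => ?_).resolve_right (hcon _)
    rcases le_total (a x) (1 / ε) with h | h
    · exact Or.inr (pp_zero _ _ _ h)
    · left
      apply pp_zero
      change (max (a x) 1)⁻¹ ≤ ε
      rw [inv_le_comm₀ (lt_max_of_lt_right one_pos) hε, ← one_div]
      exact le_max_of_le_left h
  obtain ⟨s₂, h₂⟩ := hi a
  obtain ⟨s₁, h₁⟩ := hi (-a)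
  obtain ⟨t, -, -, ht⟩ := hP.cut a (-s₁) s₂ (by simpa using h₁) h₂
  refine ⟨t, ?_⟩
  have e1 : pp a t ∈ P := by
    refine hinf _ (pp_nonneg _ _) fun ε hε => ?_
    refine ht ⟨fun s => max (max (s - t) 0 - ε) 0, by fun_prop⟩ ?_
    filter_upwards [Iio_mem_nhds (show t < t + ε by linarith)] with s hs
    refine max_eq_right ?_
    have : max (s - t) 0 ≤ ε := max_le (by simp at hs; linarith) hε.le
    linarith
  have e2 : pp (-a) (-t) ∈ P := by
    refine hinf _ (pp_nonneg _ _) fun ε hε => ?_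
    refine ht ⟨fun s => max (max (-s - -t) 0 - ε) 0, by fun_prop⟩ ?_
    filter_upwards [Ioi_mem_nhds (show t - ε < t by linarith)] with s hs
    refine max_eq_right ?_
    have : max (-s - -t) 0 ≤ ε := max_le (by simp at hs; linarith) hε.le
    linarith
  have : a - ContinuousMap.const X t = pp a t - pp (-a) (-t) := by
    ext x
    simp only [ContinuousMap.sub_apply, pp_apply, ContinuousMap.const_apply,
      ContinuousMap.neg_apply]
    rcases le_total (a x) t with h | h
    · rw [max_eq_right (by linarith), max_eq_left (by linarith)]; ring
    · rw [max_eq_left (by linarith), max_eq_right (by linarith)]; ring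
  rw [this]
  exact P.sub_mem e1 e2

/-- Real ideals of `C(X)` are fixed for realcompact `X`. -/
lemma fixed_of_real (hX : Realcompact X) (P : Ideal C(X, ℝ)) (h1 : (1 : C(X, ℝ)) ∉ P)
    (hr : ∀ a : C(X, ℝ), ∃ t : ℝ, a - ContinuousMap.const X t ∈ P) :
    ∃ x, ∀ a ∈ P, a x = 0 := by
  obtain ⟨ι, e, he⟩ := hX
  let 𝓕 : Filter X := ⨅ a : P, 𝓟 {x | a.1 x = 0}
  have hmem : ∀ a ∈ P, ∀ᶠ x in 𝓕, a x = 0 := fun a ha =>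
    Filter.mem_iInf_of_mem (⟨a, ha⟩ : P) (Filter.mem_principal_self _)
  have hXne : Nonempty X := by
    by_contra h
    rw [not_nonempty_iff] at h
    have h10 : (1 : C(X, ℝ)) = 0 := by ext x; exact h.elim x
    exact h1 (h10 ▸ P.zero_mem)
  have : 𝓕.NeBot := by
    refine Filter.iInf_neBot_of_directed ?_ ?_
    · rintro ⟨a, ha⟩ ⟨b, hb⟩
      refine ⟨⟨a * a + b * b, P.add_mem (P.mul_mem_left _ ha) (P.mul_mem_left _ hb)⟩, ?_, ?_⟩
      · simp only [ge_iff_le, Filter.le_principal_iff, Filter.mem_principal]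
        intro x hx
        simp only [Set.mem_ofPred_eq, ContinuousMap.add_apply, ContinuousMap.mul_apply] at hx ⊢
        nlinarith [mul_self_nonneg (a x), mul_self_nonneg (b x)]
      · simp only [ge_iff_le, Filter.le_principal_iff, Filter.mem_principal]
        intro x hx
        simp only [Set.mem_ofPred_eq, ContinuousMap.add_apply, ContinuousMap.mul_apply] at hx ⊢
        nlinarith [mul_self_nonneg (a x), mul_self_nonneg (b x)]
    · rintro ⟨a, ha⟩
      rw [Filter.principal_neBot_iff]
      by_contra hcon
      refine h1 (one_mem_of_ne P a ha fun x hx => hcon ⟨x, hx⟩)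
  have hei : ∀ i, Continuous fun x => e x i := fun i =>
    (continuous_apply i).comp he.continuous
  choose l hl using fun i => hr ⟨fun x => e x i, hei i⟩
  have htend : Tendsto e 𝓕 (𝓝 l) := by
    rw [tendsto_pi_nhds]
    intro i
    refine tendsto_const_nhds.congr' ?_
    filter_upwards [hmem _ (hl i)] with x hx
    simp only [ContinuousMap.sub_apply, ContinuousMap.coe_mk, ContinuousMap.const_apply] at hx
    linarith
  obtain ⟨x, hx⟩ : l ∈ Set.range e :=
    he.isClosed_range.mem_of_tendsto htend (Eventually.of_forall fun x => ⟨x, rfl⟩)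
  have hlim : Tendsto id 𝓕 (𝓝 x) := by
    rw [he.isInducing.tendsto_nhds_iff, hx]; exact htend
  refine ⟨x, fun a ha => ?_⟩
  have h2 : Tendsto (fun z => a z) 𝓕 (𝓝 (a x)) := (a.continuous.tendsto x).comp hlim
  have h3 : Tendsto (fun z => a z) 𝓕 (𝓝 0) :=
    tendsto_const_nhds.congr' ((hmem a ha).mono fun z hz => hz.symm)
  exact tendsto_nhds_unique h2 h3

end ideals

section main
variable {X Y E F : Type} [TopologicalSpace X] [TopologicalSpace Y]
  [NormedAddCommGroup E] [NormedSpace ℝ E] [NormedAddCommGroup F] [NormedSpace ℝ F]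

def kerI (T : C(X, E) ≃ₗ[ℝ] C(Y, F)) (y : Y) : Ideal C(X, ℝ) where
  carrier := {a | ∀ f : C(X, E), T (a • f) y = 0}
  zero_mem' := fun f => by simp
  add_mem' := fun {a b} ha hb f => by
    rw [add_smul, map_add, ContinuousMap.add_apply, ha f, hb f, add_zero]
  smul_mem' := fun c a ha f => by
    rw [smul_eq_mul, mul_comm, mul_smul]; exact ha _

lemma mem_kerI {T : C(X, E) ≃ₗ[ℝ] C(Y, F)} {y : Y} {a : C(X, ℝ)} :
    a ∈ kerI T y ↔ ∀ f : C(X, E), T (a • f) y = 0 := Iff.rfl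

lemma kerI_prime [Nontrivial F] (T : C(X, E) ≃ₗ[ℝ] C(Y, F)) (hT : SeparatingC ⇑T) (y : Y) :
    PrimeLike (kerI T y) where
  one := fun h => by
    obtain ⟨v, hv⟩ := exists_ne (0 : F)
    have := h (T.symm (ContinuousMap.const Y v))
    rw [one_smul, LinearEquiv.apply_symm_apply] at this
    exact hv this
  prime := fun a b hab => by
    by_contra! hcon
    obtain ⟨h1, h2⟩ := hcon
    rw [mem_kerI] at h1 h2
    push Not at h1 h2
    obtain ⟨f, hf⟩ := h1
    obtain ⟨k, hk⟩ := h2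
    have := hT (a • f) (b • k) (fun x => by
      rcases hab x with h | h <;> simp [h]) y
    rcases mul_eq_zero.1 this with h | h
    · exact hf (norm_eq_zero.1 h)
    · exact hk (norm_eq_zero.1 h)

lemma bump [CompletelyRegularSpace Y] (y : Y) (U : Set Y) (hU : IsOpen U) (hy : y ∈ U) :
    ∃ u : C(Y, ℝ), u y = 1 ∧ ∀ z, z ∉ U → u z = 0 := by
  obtain ⟨f, hf, h0, h1⟩ := CompletelyRegularSpace.completely_regular y Uᶜ hU.isClosed_compl
    (by simpa using hy)
  refine ⟨⟨fun z => 1 - (f z : ℝ), by fun_prop⟩, by simp [h0], fun z hz => ?_⟩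
  have : f z = 1 := h1 hz
  simp [this]

lemma locality [CompletelyRegularSpace Y] [Nontrivial F] (T : C(X, E) ≃ₗ[ℝ] C(Y, F))
    (hT : SeparatingC ⇑T) (hT' : SeparatingC ⇑T.symm) (f : C(X, E)) (V : Set Y) (hV : IsOpen V)
    (hf : ∀ z ∈ V, T f z = 0) (a : C(X, ℝ)) (z : Y) (hz : z ∈ V) : T (a • f) z = 0 := by
  obtain ⟨v, hv⟩ := exists_ne (0 : F)
  obtain ⟨u, hu1, hu0⟩ := bump z V hV hz
  let k : C(Y, F) := u • ContinuousMap.const Y v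
  have h1 := hT' (T f) k (fun w => by
    by_cases hw : w ∈ V
    · simp [hf w hw]
    · simp [k, hu0 w hw])
  rw [LinearEquiv.symm_apply_apply] at h1
  have h2 := hT (a • f) (T.symm k) (fun x => by
    rcases mul_eq_zero.1 (h1 x) with h | h
    · simp [norm_eq_zero.1 h]
    · simp [norm_eq_zero.1 h]) z
  rw [LinearEquiv.apply_symm_apply] at h2
  rcases mul_eq_zero.1 h2 with h | h
  · exact norm_eq_zero.1 h
  · exfalso
    have := norm_eq_zero.1 h
    simp [k, hu1] at this
    exact hv this

lemma infinitesimal [CompletelyRegularSpace Y] [Nontrivial F] (T : C(X, E) ≃ₗ[ℝ] C(Y, F))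
    (hT : SeparatingC ⇑T) (hT' : SeparatingC ⇑T.symm) (y : Y) (b : C(X, ℝ))
    (hb : ∀ x, 0 ≤ b x) (hinf : ∀ ε > 0, pp b ε ∈ kerI T y) : b ∈ kerI T y := by
  rw [mem_kerI]
  intro f
  by_contra hne
  obtain ⟨d₁, d₂, hd⟩ := step_exists
  have hnorm : 0 < ‖T (b • f) y‖ := norm_pos_iff.2 hne
  obtain ⟨N, hN1, hN2⟩ : ∃ N : ℝ, ‖T (d₁.comp b • f) y‖ < N * ‖T (b • f) y‖ ∧
      ‖T (d₂.comp b • f) y‖ < N * ‖T (b • f) y‖ := by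
    obtain ⟨N, hN⟩ := exists_gt (max (‖T (d₁.comp b • f) y‖ / ‖T (b • f) y‖)
      (‖T (d₂.comp b • f) y‖ / ‖T (b • f) y‖))
    refine ⟨N, ?_, ?_⟩
    · rw [← div_lt_iff₀ hnorm]; exact (le_max_left _ _).trans_lt hN
    · rw [← div_lt_iff₀ hnorm]; exact (le_max_right _ _).trans_lt hN
  obtain ⟨ε, hε, hstep⟩ := hd N
  -- cutoff
  let χ : C(X, ℝ) := ⟨fun x => min 1 (max 0 (2 / ε * b x - 1)), by fun_prop⟩
  have hχ0 : ∀ x, b x ≤ ε / 2 → χ x = 0 := fun x hx => by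
    have : 2 / ε * b x ≤ 1 := by
      rw [div_mul_eq_mul_div, div_le_one hε]; linarith
    change min 1 (max 0 (2 / ε * b x - 1)) = 0
    rw [max_eq_left (by linarith)]; norm_num
  have hχ1 : ∀ x, ε ≤ b x → χ x = 1 := fun x hx => by
    have : 2 ≤ 2 / ε * b x := by
      rw [div_mul_eq_mul_div, le_div_iff₀ hε]; linarith
    change min 1 (max 0 (2 / ε * b x - 1)) = 1
    rw [max_eq_right (by linarith), min_eq_left (by linarith)]
  have hPy := kerI_prime T hT y
  have hχ : χ ∈ kerI T y := by
    refine (hPy.prime χ (pp (-b) (-(ε / 2))) fun x => ?_).resolve_right fun h => ?_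
    · rcases le_total (b x) (ε / 2) with h | h
      · exact Or.inl (hχ0 x h)
      · exact Or.inr (pp_zero _ _ _ (by simpa using h))
    · refine hPy.one (one_mem_of_ne _ _ (Ideal.add_mem _ h (hinf (ε / 4) (by linarith)))
        fun x => ne_of_gt ?_)
      change 0 < pp (-b) (-(ε / 2)) x + pp b (ε / 4) x
      rcases lt_or_ge (ε / 4) (b x) with h | h
      · exact add_pos_of_nonneg_of_pos (pp_nonneg _ _ _) (pp_pos _ _ _ h)
      · exact add_pos_of_pos_of_nonneg (pp_pos _ _ _ (by simpa using by linarith))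
          (pp_nonneg _ _ _)
  let U : Set Y := {z | ‖T (d₁.comp b • f) z‖ < N * ‖T (b • f) z‖} ∩
    ({z | ‖T (d₂.comp b • f) z‖ < N * ‖T (b • f) z‖} ∩ {z | ‖T (χ • (b • f)) z‖ < ‖T (b • f) z‖})
  have hU : IsOpen U := by
    refine IsOpen.inter ?_ (IsOpen.inter ?_ ?_)
    · exact isOpen_lt (by fun_prop) (by fun_prop)
    · exact isOpen_lt (by fun_prop) (by fun_prop)
    · exact isOpen_lt (by fun_prop) (by fun_prop)
  have hyU : y ∈ U := ⟨hN1, hN2, by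
    change ‖T (χ • (b • f)) y‖ < ‖T (b • f) y‖
    rw [hχ (b • f), norm_zero]; exact hnorm⟩
  -- on U, b is infinitesimal
  have hUinf : ∀ z ∈ U, ∀ η > 0, pp b η ∈ kerI T z := by
    intro z hz η hη
    by_contra hcon
    have hPz := kerI_prime T hT z
    have hlo := (hPz.alt b η).resolve_left hcon
    have hhi : pp b ε ∈ kerI T z := by
      refine (hPz.prime (1 - χ) (pp b ε) fun x => ?_).resolve_left fun h => ?_
      · rcases le_total (b x) ε with h | h
        · exact Or.inr (pp_zero _ _ _ h)
        · left; simp [hχ1 x h]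
      · have h1 := h (b • f)
        rw [sub_smul, one_smul, map_sub, ContinuousMap.sub_apply, sub_eq_zero] at h1
        have h2 : ‖T (χ • (b • f)) z‖ < ‖T (b • f) z‖ := hz.2.2
        rw [← h1] at h2
        exact lt_irrefl _ h2
    obtain ⟨t, ht1, ht2, hval⟩ := hPz.cut b η ε hlo hhi
    obtain ⟨c, hNc, hc⟩ := hstep t (by linarith) ht2
    have fin : ∀ d : C(ℝ, ℝ), (∀ᶠ s in 𝓝 t, d s = c * s) →
        ‖T (d.comp b • f) z‖ < N * ‖T (b • f) z‖ → False := by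
      intro d hdc hlt
      have h1 := hval (d - c • ContinuousMap.id ℝ) (hdc.mono fun s hs => by simp [hs]) f
      have h2 : (d - c • ContinuousMap.id ℝ).comp b • f = d.comp b • f - c • (b • f) := by
        ext x; simp [sub_smul, mul_smul]
      rw [h2, map_sub, map_smul T c, ContinuousMap.sub_apply, sub_eq_zero] at h1
      rw [h1, ContinuousMap.smul_apply, norm_smul] at hlt
      have : N * ‖T (b • f) z‖ ≤ ‖c‖ * ‖T (b • f) z‖ :=
        mul_le_mul_of_nonneg_right (hNc.trans (le_abs_self c)) (norm_nonneg _)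
      linarith
    rcases hc with hc | hc
    · exact fin d₁ hc hz.1
    · exact fin d₂ hc hz.2.1
  -- localize
  obtain ⟨u, hu1, hu0⟩ := bump y U hU hyU
  let w : C(Y, ℝ) := ⟨fun z => min 1 (max 0 (3 * u z - 1)), by fun_prop⟩
  have hw1 : ∀ z, 2 / 3 < u z → w z = 1 := fun z hz => by
    change min 1 (max 0 (3 * u z - 1)) = 1
    rw [max_eq_right (by linarith), min_eq_left (by linarith)]
  have hw0 : ∀ z, u z < 1 / 3 → w z = 0 := fun z hz => by
    change min 1 (max 0 (3 * u z - 1)) = 0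
    rw [max_eq_left (by linarith)]; norm_num
  let f' : C(X, E) := T.symm (w • T f)
  have hf' : T f' = w • T f := LinearEquiv.apply_symm_apply _ _
  have hz0 : ∀ η > 0, pp b η • f' = 0 := by
    intro η hη
    apply T.injective
    rw [map_zero]
    ext z
    by_cases hz : z ∈ U
    · exact hUinf z hz η hη f'
    · refine locality T hT hT' f' {z | u z < 1 / 3} (isOpen_lt (by fun_prop) (by fun_prop))
        (fun z' hz' => ?_) _ z ?_
      · rw [hf', ContinuousMap.smul_apply', hw0 z' hz', zero_smul]
      · change u z < 1 / 3
        rw [hu0 z hz]; norm_num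
  have hbf : b • f' = 0 := by
    ext x
    change b x • f' x = 0
    rcases (hb x).eq_or_lt with h | h
    · rw [← h, zero_smul]
    · have h1 := DFunLike.congr_fun (hz0 (b x / 2) (by linarith)) x
      change pp b (b x / 2) x • f' x = 0 at h1
      have := (smul_eq_zero.1 h1).resolve_left (pp_pos _ _ _ (by linarith)).ne'
      rw [this, smul_zero]
  have hfin := locality T hT hT' (f - f') {z | 2 / 3 < u z}
    (isOpen_lt (by fun_prop) (by fun_prop)) (fun z hz => by
      rw [map_sub, hf', ContinuousMap.sub_apply, ContinuousMap.smul_apply', hw1 z hz, one_smul,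
        sub_self]) b y (by change 2 / 3 < u y; rw [hu1]; norm_num)
  rw [smul_sub, hbf, sub_zero] at hfin
  exact hne hfin

lemma exists_h [CompletelyRegularSpace Y] [Nontrivial F] (hX : Realcompact X)
    (T : C(X, E) ≃ₗ[ℝ] C(Y, F)) (hT : SeparatingC ⇑T) (hT' : SeparatingC ⇑T.symm) :
    ∃ h : C(Y, X), ∀ (a : C(X, ℝ)) (f : C(X, E)) (y : Y), T (a • f) y = a (h y) • T f y := by
  have key : ∀ y, ∃ x, ∀ a ∈ kerI T y, a x = 0 := fun y =>
    fixed_of_real hX _ (kerI_prime T hT y).one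
      ((kerI_prime T hT y).real fun b hb hi => infinitesimal T hT hT' y b hb hi)
  choose h hh using key
  have form : ∀ (a : C(X, ℝ)) (f : C(X, E)) (y : Y), T (a • f) y = a (h y) • T f y := by
    intro a f y
    obtain ⟨t, ht⟩ := (kerI_prime T hT y).real
      (fun b hb hi => infinitesimal T hT hT' y b hb hi) a
    have h1 := hh y _ ht
    simp only [ContinuousMap.sub_apply, ContinuousMap.const_apply, sub_eq_zero] at h1
    have h2 := ht f
    have h3 : (a - ContinuousMap.const X t) • f = a • f - t • f := by
      ext x; simp [sub_smul]
    rw [h3, map_sub, map_smul T t, ContinuousMap.sub_apply, sub_eq_zero] at h2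
    rw [h2, h1]; rfl
  have hcont : Continuous h := by
    obtain ⟨ι, e, he⟩ := hX
    rw [he.isInducing.continuous_iff]
    refine continuous_pi fun i => ?_
    obtain ⟨v, hv⟩ := exists_ne (0 : F)
    have hei : Continuous fun x => e x i := (continuous_apply i).comp he.continuous
    rw [(isClosedEmbedding_smul_left (𝕜 := ℝ) hv).isInducing.continuous_iff]
    have := (T ((⟨_, hei⟩ : C(X, ℝ)) • T.symm (ContinuousMap.const Y v))).continuous
    refine this.congr fun y => ?_
    rw [form, LinearEquiv.apply_symm_apply]
    rfl
  exact ⟨⟨h, hcont⟩, form⟩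

lemma repr_formula [FiniteDimensional ℝ E] (T : C(X, E) ≃ₗ[ℝ] C(Y, F)) (h : C(Y, X))
    (hh : ∀ (a : C(X, ℝ)) (f : C(X, E)) (y : Y), T (a • f) y = a (h y) • T f y)
    (f : C(X, E)) (y : Y) :
    T f y = ∑ i, ((Module.finBasis ℝ E).coord i (f (h y))) •
      T (ContinuousMap.const X (Module.finBasis ℝ E i)) y := by
  have hc : ∀ i, Continuous ((Module.finBasis ℝ E).coord i) := fun i =>
    LinearMap.continuous_of_finiteDimensional _
  have hf : f = ∑ i, (⟨fun x => (Module.finBasis ℝ E).coord i (f x),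
      (hc i).comp f.continuous⟩ : C(X, ℝ)) • ContinuousMap.const X (Module.finBasis ℝ E i) := by
    ext x
    rw [ContinuousMap.sum_apply]
    exact ((Module.finBasis ℝ E).sum_repr (f x)).symm
  conv_lhs => rw [hf]
  rw [map_sum, ContinuousMap.sum_apply]
  exact Finset.sum_congr rfl fun i _ => hh _ _ _

lemma smul_cont (g : C(Y, F)) : Continuous fun u : C(Y, ℝ) => u • g := by
  rw [continuous_iff_continuousAt]
  intro u
  rw [ContinuousAt, ContinuousMap.tendsto_iff_forall_isCompact_tendstoUniformlyOn]
  intro K hK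
  have hu := ContinuousMap.tendsto_iff_forall_isCompact_tendstoUniformlyOn.1
    (tendsto_id (α := C(Y, ℝ)) (x := 𝓝 u)) K hK
  rw [Metric.tendstoUniformlyOn_iff] at hu ⊢
  intro ε hε
  obtain ⟨M, hM⟩ := hK.exists_bound_of_continuousOn g.continuous.continuousOn
  have hM' : 0 < |M| + 1 := by positivity
  filter_upwards [hu (ε / (|M| + 1)) (by positivity)] with v hv y hy
  have h1 := hv y hy
  rw [dist_eq_norm] at h1 ⊢
  change ‖u y • g y - v y • g y‖ < ε
  rw [← sub_smul, norm_smul]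
  have h2 : ‖g y‖ ≤ |M| + 1 := by linarith [hM y hy, le_abs_self M]
  calc ‖u y - v y‖ * ‖g y‖ ≤ ‖u y - v y‖ * (|M| + 1) :=
        mul_le_mul_of_nonneg_left h2 (norm_nonneg _)
    _ < ε := by rwa [← lt_div_iff₀ hM']

lemma cont_of_h [FiniteDimensional ℝ E] (T : C(X, E) ≃ₗ[ℝ] C(Y, F)) (h : C(Y, X))
    (hh : ∀ (a : C(X, ℝ)) (f : C(X, E)) (y : Y), T (a • f) y = a (h y) • T f y) :
    Continuous ⇑T := by
  have hc : ∀ i, Continuous ((Module.finBasis ℝ E).coord i) := fun i =>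
    LinearMap.continuous_of_finiteDimensional _
  have : ⇑T = fun f => ∑ i, ((⟨_, hc i⟩ : C(E, ℝ)).comp (f.comp h)) •
      (T (ContinuousMap.const X (Module.finBasis ℝ E i))) := by
    funext f
    ext y
    rw [repr_formula T h hh f y, ContinuousMap.sum_apply]
    rfl
  rw [this]
  refine continuous_finsetSum _ fun i _ => ?_
  refine (smul_cont _).comp ?_
  exact (ContinuousMap.continuous_postcomp _).comp (ContinuousMap.continuous_precomp h)

theorem real_case [CompletelyRegularSpace X] [CompletelyRegularSpace Y]
    [Nontrivial E] [FiniteDimensional ℝ E] [Nontrivial F]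
    (hX : Realcompact X) (hY : Realcompact Y)
    (T : C(X, E) ≃ₗ[ℝ] C(Y, F)) (hT : SeparatingC ⇑T) (hT' : SeparatingC ⇑T.symm) :
    Continuous ⇑T ∧ Continuous ⇑T.symm := by
  obtain ⟨h, hh⟩ := exists_h hX T hT hT'
  refine ⟨cont_of_h T h hh, ?_⟩
  rcases isEmpty_or_nonempty Y with hYe | ⟨⟨y⟩⟩
  · have : Subsingleton C(Y, F) := ⟨fun a b => by ext y; exact hYe.elim y⟩
    exact continuous_of_const fun a b => by rw [Subsingleton.elim a b]
  · have : FiniteDimensional ℝ F := by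
      let L : E →ₗ[ℝ] F :=
        { toFun := fun v => T (ContinuousMap.const X v) y
          map_add' := fun v w => by
            rw [← ContinuousMap.add_apply, ← map_add]; rfl
          map_smul' := fun c v => by
            rw [RingHom.id_apply, ← ContinuousMap.smul_apply, ← map_smul]; rfl }
      refine Module.Finite.of_surjective L fun v => ?_
      refine ⟨(T.symm (ContinuousMap.const Y v)) (h y), ?_⟩
      have h1 := repr_formula T h hh (T.symm (ContinuousMap.const Y v)) y
      have h2 := repr_formula T h hh
        (ContinuousMap.const X ((T.symm (ContinuousMap.const Y v)) (h y))) y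
      rw [LinearEquiv.apply_symm_apply] at h1
      exact h2.trans h1.symm
    obtain ⟨k, hk⟩ := exists_h hY T.symm hT' (by simpa using hT)
    exact cont_of_h T.symm k hk

end main

/-- The spaces `C(X,E)` and `C(Y,F)` carry the compact-open topology (the default topology
on `C(·,·)` in Mathlib); a linear biseparating map between them, with finite-dimensional `E`,
is a homeomorphism for these topologies. -/
theorem stmt8 {𝕂 X Y E F : Type} [RCLike 𝕂]
    [TopologicalSpace X] [CompletelyRegularSpace X] [T2Space X]
    [TopologicalSpace Y] [CompletelyRegularSpace Y] [T2Space Y]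
    [NormedAddCommGroup E] [NormedSpace 𝕂 E] [Nontrivial E] [FiniteDimensional 𝕂 E]
    [NormedAddCommGroup F] [NormedSpace 𝕂 F] [Nontrivial F]
    (hX : Realcompact X) (hY : Realcompact Y)
    (T : C(X, E) ≃ₗ[𝕂] C(Y, F)) (hT : SeparatingC ⇑T) (hT' : SeparatingC ⇑T.symm) :
    Continuous ⇑T ∧ Continuous ⇑T.symm := by
  let : NormedSpace ℝ E := NormedSpace.restrictScalars ℝ 𝕂 E
  let : NormedSpace ℝ F := NormedSpace.restrictScalars ℝ 𝕂 F
  have : IsScalarTower ℝ 𝕂 E := ⟨fun r c v => by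
    change (r • c) • v = (algebraMap ℝ 𝕂 r) • (c • v)
    rw [Algebra.smul_def, mul_smul]⟩
  have : FiniteDimensional ℝ E := Module.Finite.trans 𝕂 E
  let T' : C(X, E) ≃ₗ[ℝ] C(Y, F) :=
    { T with
      map_smul' := fun c f => by
        have h1 : c • f = (algebraMap ℝ 𝕂 c) • f := rfl
        have h2 : c • T f = (algebraMap ℝ 𝕂 c) • T f := rfl
        change T (c • f) = c • T f
        rw [h1, h2, map_smul] }
  exact real_case hX hY T' hT hT'
end
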